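/- arXiv:2601.20018 — 3 statements merged into one kernel-verified Lean document; each statement's English description precedes it below -/
import Mathlib

section
/- There exists a universal constant K > 0 such that the following holds. Let N ≥ 20 and let W = [w(i,j,k,ℓ)] ∈ R^{N×N×N×N} be a fixed tensor, and let Q_w := Σ_{i,j∈[N]} w(i,j,π(i),π(j)). Define B_a := N · max_{i,j∈[N]} |a_w(i,j)|, V_a := N Σ_{i,j∈[N]} a_w(i,j)², B_d := max_{σ∈S_N} ‖ [ d_w(i,j,σ(i),σ(j)) ]_{i,j∈[N]} ‖_op, ξ_w(i,k) := d_w(i,i,k,k) − (1/N) Σ_{k'=1}^N d_w(i,i,k',k') − (1/N) Σ_{i'=1}^N d_w(i',i',k,k) + (1/N²) Σ_{i',k'∈[N]} d_w(i',i',k',k'), and V_d := (1/N) Σ_{i,k∈[N]} ξ_w(i,k)² + (1/N²) Σ_{i,j,k,ℓ∈[N]} d_w(i,j,k,ℓ)², and assume V_a + B_a > 0 and V_d + B_d > 0. Then for every t > 0: P( Q_w − E[Q_w] ≥ t ) ≤ exp( − K t² / ( V_a + B_a t ) ) + exp( − K t² / ( V_d + B_d t ) ). -/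
open scoped BigOperators Classical

/-- Spectral (operator) norm of a real matrix. -/
noncomputable def opNorm {m n : ℕ} (M : Matrix (Fin m) (Fin n) ℝ) : ℝ :=
  ‖LinearMap.toContinuousLinearMap (Matrix.toEuclideanLin M)‖

/-- Expectation of `f` under the uniform distribution on `S_N`. -/
noncomputable def permExp (N : ℕ) (f : Equiv.Perm (Fin N) → ℝ) : ℝ :=
  (∑ σ : Equiv.Perm (Fin N), f σ) / (Nat.factorial N : ℝ)

/-- Probability of an event under the uniform distribution on `S_N`. -/
noncomputable def permProb (N : ℕ) (p : Equiv.Perm (Fin N) → Prop) : ℝ :=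
  ((Finset.univ.filter p).card : ℝ) / (Nat.factorial N : ℝ)

/-- The single-indexed part `a_w` of the Hoeffding-type decomposition. -/
noncomputable def aw (N : ℕ) (w : Fin N → Fin N → Fin N → Fin N → ℝ) (i j : Fin N) : ℝ :=
  (∑ j', ∑ l', w i j' j l') / (N : ℝ) ^ 2
    - (∑ j', ∑ k', ∑ l', w i j' k' l') / (N : ℝ) ^ 3
    - (∑ i', ∑ j', ∑ l', w i' j' j l') / (N : ℝ) ^ 3
    + (∑ i', ∑ j', ∑ k', ∑ l', w i' j' k' l') / (N : ℝ) ^ 4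
    + (∑ i', ∑ k', w i' i k' j) / (N : ℝ) ^ 2
    - (∑ i', ∑ k', ∑ l', w i' i k' l') / (N : ℝ) ^ 3
    - (∑ i', ∑ j', ∑ k', w i' j' k' j) / (N : ℝ) ^ 3
    + (∑ i', ∑ j', ∑ k', ∑ l', w i' j' k' l') / (N : ℝ) ^ 4

/-- The degenerate part `d_w` of the Hoeffding-type decomposition. -/
noncomputable def dw (N : ℕ) (w : Fin N → Fin N → Fin N → Fin N → ℝ)
    (i j k l : Fin N) : ℝ :=
  w i j k l
    - (∑ j', ∑ k', ∑ l', w i j' k' l') / (N : ℝ) ^ 3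
    - (∑ i', ∑ k', ∑ l', w i' j k' l') / (N : ℝ) ^ 3
    - (∑ i', ∑ j', ∑ l', w i' j' k l') / (N : ℝ) ^ 3
    - (∑ i', ∑ j', ∑ k', w i' j' k' l) / (N : ℝ) ^ 3
    + (∑ k', ∑ l', w i j k' l') / (N : ℝ) ^ 2
    + (∑ j', ∑ l', w i j' k l') / (N : ℝ) ^ 2
    + (∑ j', ∑ k', w i j' k' l) / (N : ℝ) ^ 2
    + (∑ i', ∑ l', w i' j k l') / (N : ℝ) ^ 2
    + (∑ i', ∑ k', w i' j k' l) / (N : ℝ) ^ 2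
    + (∑ i', ∑ j', w i' j' k l) / (N : ℝ) ^ 2
    - (∑ l', w i j k l') / (N : ℝ)
    - (∑ k', w i j k' l) / (N : ℝ)
    - (∑ j', w i j' k l) / (N : ℝ)
    - (∑ i', w i' j k l) / (N : ℝ)
    + (∑ i', ∑ j', ∑ k', ∑ l', w i' j' k' l') / (N : ℝ) ^ 4


noncomputable def av {ι : Type*} [Fintype ι] (f : ι → ℝ) : ℝ := (∑ i, f i) / (Fintype.card ι : ℝ)

section av
variable {ι κ : Type*} [Fintype ι] [Fintype κ]

lemma av_add (f g : ι → ℝ) : av (fun i => f i + g i) = av f + av g := by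
  simp [av, Finset.sum_add_distrib, add_div]
lemma av_sub (f g : ι → ℝ) : av (fun i => f i - g i) = av f - av g := by
  simp [av, Finset.sum_sub_distrib, sub_div]
lemma av_mul_left (c : ℝ) (f : ι → ℝ) : av (fun i => c * f i) = c * av f := by
  simp [av, ← Finset.mul_sum, mul_div_assoc]
lemma av_mul_right (c : ℝ) (f : ι → ℝ) : av (fun i => f i * c) = av f * c := by
  simp [av, ← Finset.sum_mul]; ring
lemma av_const [Nonempty ι] (c : ℝ) : av (fun _ : ι => c) = c := by
  simp [av]
lemma av_mono {f g : ι → ℝ} (h : ∀ i, f i ≤ g i) : av f ≤ av g := by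
  unfold av
  gcongr
  exact h _
lemma av_nonneg {f : ι → ℝ} (h : ∀ i, 0 ≤ f i) : 0 ≤ av f :=
  div_nonneg (Finset.sum_nonneg fun i _ => h i) (by positivity)
lemma av_pos [Nonempty ι] {f : ι → ℝ} (h : ∀ i, 0 < f i) : 0 < av f :=
  div_pos (Finset.sum_pos (fun i _ => h i) Finset.univ_nonempty) (by exact_mod_cast Fintype.card_pos)
lemma av_congr {f g : ι → ℝ} (h : ∀ i, f i = g i) : av f = av g := by
  rw [show f = g from funext h]
lemma av_equiv (e : ι ≃ κ) (f : κ → ℝ) : av (fun i => f (e i)) = av f := by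
  unfold av
  rw [Equiv.sum_comp e f, Fintype.card_congr e]
lemma av_equiv_self (e : ι ≃ ι) (f : ι → ℝ) : av (fun i => f (e i)) = av f := av_equiv e f
lemma av_comm (f : ι → κ → ℝ) : av (fun i => av (fun j => f i j)) = av (fun j => av (fun i => f i j)) := by
  simp only [av, ← Finset.sum_div]
  rw [Finset.sum_comm, div_right_comm]
lemma av_sum {κ : Type*} (s : Finset κ) (f : κ → ι → ℝ) :
    av (fun i => ∑ j ∈ s, f j i) = ∑ j ∈ s, av (f j) := by
  simp only [av, ← Finset.sum_div]
  rw [Finset.sum_comm]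

/-- Jensen for exp. -/
lemma exp_av_le [Nonempty ι] (f : ι → ℝ) : Real.exp (av f) ≤ av (fun i => Real.exp (f i)) := by
  have h : ∀ i, Real.exp (av f) * (f i - av f + 1) ≤ Real.exp (f i) := by
    intro i
    have := Real.add_one_le_exp (f i - av f)
    calc _ ≤ Real.exp (av f) * Real.exp (f i - av f) := by gcongr
      _ = _ := by rw [← Real.exp_add]; congr 1; ring
  have h2 := av_mono h
  rw [av_mul_left, av_add, av_sub, av_const, av_const] at h2
  linarith

lemma av_log_le [Nonempty ι] (f : ι → ℝ) (hf : ∀ i, 0 < f i) :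
    av (fun i => Real.log (f i)) ≤ Real.log (av f) := by
  rw [Real.le_log_iff_exp_le (av_pos hf)]
  refine (exp_av_le _).trans (le_of_eq ?_)
  exact av_congr fun i => Real.exp_log (hf i)

/-- log-sum inequality -/
lemma log_sum [Nonempty ι] (x y : ι → ℝ) (hx : ∀ i, 0 < x i) (hy : ∀ i, 0 < y i) :
    av x * (Real.log (av x) - Real.log (av y)) ≤ av (fun i => x i * (Real.log (x i) - Real.log (y i))) := by
  have hX := av_pos hx
  have hY := av_pos hy
  have h : ∀ i, x i * (Real.log (av x) - Real.log (av y)) + (x i - y i * (av x / av y)) ≤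
      x i * (Real.log (x i) - Real.log (y i)) := by
    intro i
    have h1 := Real.add_one_le_exp (Real.log (y i * av x / (x i * av y)))
    have hp : 0 < y i * av x / (x i * av y) :=
      div_pos (mul_pos (hy i) hX) (mul_pos (hx i) hY)
    rw [Real.exp_log hp, Real.log_div (mul_pos (hy i) hX).ne' (mul_pos (hx i) hY).ne',
      Real.log_mul (hy i).ne' hX.ne', Real.log_mul (hx i).ne' hY.ne'] at h1
    have h2 := mul_le_mul_of_nonneg_left h1 (hx i).le
    have h3 : x i * (y i * av x / (x i * av y)) = y i * (av x / av y) := by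
      have := (hx i).ne'
      field_simp
    rw [h3] at h2
    nlinarith
  have h2 := av_mono h
  rw [av_add, av_mul_right, av_sub, av_mul_right, mul_div_cancel₀ _ hY.ne'] at h2
  linarith

noncomputable def psi (x y : ℝ) : ℝ := (x - y) * (Real.log x - Real.log y)

lemma psi_av [Nonempty ι] (x y : ι → ℝ) (hx : ∀ i, 0 < x i) (hy : ∀ i, 0 < y i) :
    psi (av x) (av y) ≤ av (fun i => psi (x i) (y i)) := by
  have h1 := log_sum x y hx hy
  have h2 := log_sum y x hy hx
  have h3 : av (fun i => psi (x i) (y i)) = av (fun i => x i * (Real.log (x i) - Real.log (y i)))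
     + av (fun i => y i * (Real.log (y i) - Real.log (x i))) := by
    rw [← av_add]; exact av_congr fun i => by unfold psi; ring
  rw [h3]; unfold psi; linarith

noncomputable def Ent (G : ι → ℝ) : ℝ := av (fun i => G i * Real.log (G i)) - av G * Real.log (av G)

/-- variational inequality: E[v G] ≤ Ent G + E G log E e^v -/
lemma ent_var [Nonempty ι] (G v : ι → ℝ) (hG : ∀ i, 0 < G i) :
    av (fun i => v i * G i) ≤ Ent G + av G * Real.log (av (fun i => Real.exp (v i))) := by
  have h := log_sum G (fun i => Real.exp (v i)) hG (fun i => Real.exp_pos _)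
  have h2 : av (fun i => G i * (Real.log (G i) - Real.log (Real.exp (v i)))) =
    av (fun i => G i * Real.log (G i)) - av (fun i => v i * G i) := by
    rw [← av_sub]; exact av_congr fun i => by rw [Real.log_exp]; ring
  rw [h2] at h
  unfold Ent
  linarith

end av

section perm
open Equiv

lemma av_perm_apply {α : Type} [Fintype α] [DecidableEq α] (i : α) (Φ : α → ℝ) :
    av (fun σ : Perm α => Φ (σ i)) = av Φ := by
  have : Nonempty α := ⟨i⟩
  have h : ∀ k, av (fun σ : Perm α => Φ (σ i)) = av (fun σ : Perm α => Φ (σ k)) := by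
    intro k
    rw [← av_equiv_self (Equiv.mulRight (swap i k)) (fun σ : Perm α => Φ (σ i))]
    exact av_congr fun σ => by simp [Perm.mul_apply]
  have h2 : av (fun σ : Perm α => Φ (σ i)) = av (fun k => av (fun σ : Perm α => Φ (σ k))) := by
    rw [← av_congr h, av_const]
  rw [h2, av_comm]
  rw [← av_const (ι := Perm α) (av Φ)]
  exact av_congr fun σ => av_equiv σ Φ

variable {α : Type} [Fintype α] [DecidableEq α]

lemma av_mul_subtype {p : α → Prop} [DecidablePred p] (F : Perm α → ℝ) :
    av F = av (fun σ : Perm α => av (fun ρ : Perm {x // p x} => F (σ * Perm.ofSubtype ρ))) := by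
  rw [av_comm]
  rw [← av_const (ι := Perm {x // p x}) (av F)]
  exact av_congr fun ρ => (av_equiv_self (Equiv.mulRight (Perm.ofSubtype ρ)) F).symm

lemma mlsi_step (i : α) (G : Perm α → ℝ) (hG : ∀ σ, 0 < G σ) :
    Ent G ≤ av (fun σ : Perm α => Ent (fun ρ : Perm {x // x ≠ i} => G (σ * Perm.ofSubtype ρ)))
      + (∑ j, av (fun σ : Perm α => psi (G σ) (G (σ * swap i j)))) / (2 * Fintype.card α) := by
  have : Nonempty α := ⟨i⟩
  have hcard : (0:ℝ) < Fintype.card α := by exact_mod_cast Fintype.card_pos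
  set h : Perm α → ℝ := fun σ => av (fun ρ : Perm {x // x ≠ i} => G (σ * Perm.ofSubtype ρ)) with hh
  set ht : α → ℝ := fun k => h (swap i k) with hht
  have hinv : ∀ σ, h σ = ht (σ i) := by
    intro σ
    have hfix0 : ((swap i (σ i))⁻¹ * σ) i = i := by simp
    have hsub : ∀ x, ((swap i (σ i))⁻¹ * σ) x ≠ i ↔ x ≠ i := by
      intro x
      rw [not_iff_not]
      constructor
      · intro hx
        exact ((swap i (σ i))⁻¹ * σ).injective (hx.trans hfix0.symm)
      · rintro rfl
        exact hfix0
    have e1 : σ = swap i (σ i) * Perm.ofSubtype (p := fun x => x ≠ i)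
        (Perm.subtypePerm ((swap i (σ i))⁻¹ * σ) hsub) := by
      rw [Perm.ofSubtype_subtypePerm]
      · simp
      · rintro x hx rfl
        exact hx hfix0
    set τ := (Perm.subtypePerm ((swap i (σ i))⁻¹ * σ) hsub : Perm {x // x ≠ i})
    simp only [hh, hht]
    conv_lhs => rw [e1]
    rw [← av_equiv_self (Equiv.mulLeft τ) (fun ρ => G (swap i (σ i) * Perm.ofSubtype ρ))]
    exact av_congr fun ρ => by simp [mul_assoc]
  have hhpos : ∀ σ, 0 < h σ := fun σ => av_pos fun _ => hG _
  have htpos : ∀ k, 0 < ht k := fun k => hhpos _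
  -- decomposition
  have hav : av G = av h := av_mul_subtype G
  have hdec : Ent G = av (fun σ : Perm α => Ent (fun ρ : Perm {x // x ≠ i} => G (σ * Perm.ofSubtype ρ)))
      + Ent h := by
    have : av (fun σ : Perm α => Ent (fun ρ : Perm {x // x ≠ i} => G (σ * Perm.ofSubtype ρ))) =
        av (fun σ => G σ * Real.log (G σ)) - av (fun σ => h σ * Real.log (h σ)) := by
      unfold Ent
      rw [av_sub, ← av_mul_subtype (p := fun x => x ≠ i) (fun σ => G σ * Real.log (G σ))]
    rw [this]; unfold Ent; rw [← hav]; ring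
  rw [hdec]
  gcongr
  -- Ent h ≤ Cov
  have hcov : Ent h ≤ av (fun k => ht k * Real.log (ht k)) - av ht * av (fun k => Real.log (ht k)) := by
    unfold Ent
    have e1 : av h = av ht := by
      rw [← av_perm_apply i ht]; exact av_congr hinv
    have e2 : av (fun σ => h σ * Real.log (h σ)) = av (fun k => ht k * Real.log (ht k)) := by
      rw [← av_perm_apply i (fun k => ht k * Real.log (ht k))]
      exact av_congr fun σ => by rw [hinv]
    rw [e1, e2]
    have := av_log_le ht htpos
    have := av_pos htpos
    gcongr
  refine hcov.trans ?_
  have hcov2 : av (fun k => ht k * Real.log (ht k)) - av ht * av (fun k => Real.log (ht k)) =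
      av (fun σ : Perm α => av (fun l => psi (ht (σ i)) (ht l))) / 2 := by
    rw [av_perm_apply i (fun k => av (fun l => psi (ht k) (ht l)))]
    have : ∀ k, av (fun l => psi (ht k) (ht l)) = ht k * Real.log (ht k) + av (fun l => ht l * Real.log (ht l))
       - ht k * av (fun l => Real.log (ht l)) - Real.log (ht k) * av ht := by
      intro k
      rw [← av_mul_left, ← av_mul_left, ← av_const (ι := α) (ht k * Real.log (ht k)), ← av_add, ← av_sub, ← av_sub]
      exact av_congr fun l => by unfold psi; ring
    rw [av_congr this, av_sub, av_sub, av_add, av_const, av_mul_right, av_mul_right]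
    ring
  rw [hcov2]
  have hconv : ∀ σ : Perm α, av (fun l => psi (ht (σ i)) (ht l)) ≤
      av (fun ρ : Perm {x // x ≠ i} => av (fun j => psi (G (σ * Perm.ofSubtype ρ)) (G (σ * Perm.ofSubtype ρ * swap i j)))) := by
    intro σ
    have hfix : ∀ ρ : Perm {x // x ≠ i}, Perm.ofSubtype ρ i = i := fun ρ =>
      Perm.ofSubtype_apply_of_not_mem ρ (by simp)
    have h1 : ∀ l, psi (ht (σ i)) (ht l) ≤ av (fun ρ : Perm {x // x ≠ i} =>
        psi (G (σ * Perm.ofSubtype ρ)) (G (swap (σ i) l * σ * Perm.ofSubtype ρ))) := by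
      intro l
      have : ht l = h (swap (σ i) l * σ) := by rw [hinv]; simp
      rw [this, ← hinv]
      exact psi_av _ _ (fun _ => hG _) (fun _ => hG _)
    refine (av_mono h1).trans (le_of_eq ?_)
    rw [av_comm]
    refine av_congr fun ρ => ?_
    rw [← av_equiv_self (σ * Perm.ofSubtype ρ)]
    refine av_congr fun j => ?_
    congr 2
    have := Equiv.swap_mul_eq_mul_swap (σ * Perm.ofSubtype ρ) (σ i) ((σ * Perm.ofSubtype ρ) j)
    rw [mul_assoc, this]
    congr 2
    · rw [Perm.inv_eq_iff_eq]; simp [hfix]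
    · simp
  have h3 := av_mono hconv
  rw [← av_mul_subtype (p := fun x => x ≠ i) (fun σ => av (fun j => psi (G σ) (G (σ * swap i j)))),
    av_comm (fun σ j => psi (G σ) (G (σ * swap i j)))] at h3
  have h4 : av (fun j => av (fun σ : Perm α => psi (G σ) (G (σ * swap i j)))) =
    (∑ j, av (fun σ : Perm α => psi (G σ) (G (σ * swap i j)))) / Fintype.card α := rfl
  rw [h4] at h3
  rw [mul_comm (2:ℝ), ← div_div _ _ (2:ℝ)]
  linarith

lemma psi_nonneg {x y : ℝ} (hx : 0 < x) (hy : 0 < y) : 0 ≤ psi x y := by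
  unfold psi
  rcases le_total x y with h | h
  · have := Real.log_le_log hx h
    nlinarith
  · have := Real.log_le_log hy h
    nlinarith

lemma psi_self (x : ℝ) : psi x x = 0 := by simp [psi]

lemma sum_ne_pairs (i : α) (D : α → α → ℝ) : ∑ a : {x // x ≠ i}, ∑ b : {x // x ≠ i}, D a b =
    ∑ a, ∑ b, D a b - ∑ b, D i b - ∑ a, D a i + D i i := by
  have h : ∀ f : α → ℝ, ∑ a : {x // x ≠ i}, f a = ∑ a, f a - f i := by
    intro f
    rw [← Finset.sum_erase_eq_sub (Finset.mem_univ i)]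
    exact (Finset.sum_subtype (Finset.univ.erase i) (by simp) f).symm
  simp only [h]
  rw [h (fun a => ∑ b, D a b - D a i)]
  simp [Finset.sum_sub_distrib]
  ring

theorem mlsi : ∀ (n : ℕ) (α : Type) [Fintype α] [DecidableEq α], Fintype.card α = n → 
    ∀ (G : Perm α → ℝ), (∀ σ, 0 < G σ) →
    (n : ℝ) * Ent G ≤ (∑ a, ∑ b, av (fun σ : Perm α => psi (G σ) (G (σ * swap a b)))) / 2 := by
  intro n
  induction n with
  | zero =>
    intro α _ _ hα G hG
    have : IsEmpty α := Fintype.card_eq_zero_iff.mp hα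
    simp
  | succ n ih =>
    intro α _ _ hα G hG
    set D : α → α → ℝ := fun a b => av (fun σ : Perm α => psi (G σ) (G (σ * swap a b))) with hD
    have hDn : ∀ a b, 0 ≤ D a b := fun a b => av_nonneg fun σ => psi_nonneg (hG _) (hG _)
    have hD0 : ∀ a, D a a = 0 := fun a => by
      have : ∀ σ : Perm α, psi (G σ) (G (σ * swap a a)) = 0 := fun σ => by
        rw [swap_self]; exact psi_self _
      simp only [hD, this, av]; simp
    set T := ∑ a, ∑ b, D a b with hT
    have hTn : 0 ≤ T := Finset.sum_nonneg fun a _ => Finset.sum_nonneg fun b _ => hDn a b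
    have hsub : ∀ i, (n:ℝ) * av (fun σ : Perm α => Ent (fun ρ : Perm {x // x ≠ i} => G (σ * Perm.ofSubtype ρ))) ≤
        (T - ∑ b, D i b - ∑ a, D a i) / 2 := by
      intro i
      have h1 : ∀ σ : Perm α, (n:ℝ) * Ent (fun ρ : Perm {x // x ≠ i} => G (σ * Perm.ofSubtype ρ)) ≤ 
        (∑ a : {x // x ≠ i}, ∑ b : {x // x ≠ i}, av (fun ρ : Perm {x // x ≠ i} => 
          psi (G (σ * Perm.ofSubtype ρ)) (G (σ * Perm.ofSubtype ρ * swap (a:α) (b:α))))) / 2 := by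
        intro σ
        have h := ih {x // x ≠ i} (by simp [Fintype.card_subtype_compl, hα]) (fun ρ : Perm {x // x ≠ i} => G (σ * Perm.ofSubtype ρ)) (fun _ => hG _)
        refine h.trans (le_of_eq ?_)
        simp only [map_mul, Perm.ofSubtype_swap_eq, mul_assoc]
      have h2 := av_mono h1
      rw [av_mul_left] at h2
      refine h2.trans (le_of_eq ?_)
      have h3 := sum_ne_pairs i D
      rw [hD0] at h3
      rw [hT, show (∑ a, ∑ b, D a b - ∑ b, D i b - ∑ a, D a i) = ∑ a : {x // x ≠ i}, ∑ b : {x // x ≠ i}, D a b by rw [h3]; ring]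
      simp only [div_eq_mul_inv]
      rw [av_mul_right, av_sum]
      congr 1
      refine Finset.sum_congr rfl fun a _ => ?_
      rw [av_sum]
      refine Finset.sum_congr rfl fun b _ => ?_
      rw [← av_mul_subtype (p := fun x => x ≠ i) (fun σ => psi (G σ) (G (σ * swap (a:α) (b:α))))]
    have hstep : ∀ i, Ent G ≤ av (fun σ : Perm α => Ent (fun ρ : Perm {x // x ≠ i} => G (σ * Perm.ofSubtype ρ)))
      + (∑ j, D i j) / (2 * (n+1)) := by
      intro i
      have := mlsi_step i G hG
      rw [hα] at this
      push_cast at this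
      exact this
    rcases Nat.eq_zero_or_pos n with hn | hn
    · subst hn
      have : Subsingleton α := Fintype.card_le_one_iff_subsingleton.mp (by omega)
      obtain ⟨g, hg⟩ : ∃ g, ∀ σ, G σ = g := ⟨G 1, fun σ => by rw [Subsingleton.elim σ 1]⟩
      have : Ent G = 0 := by
        unfold Ent
        rw [show G = fun _ => g from funext hg, av_const, av_const]; ring
      rw [this]
      simp only [mul_zero]
      positivity
    have hn' : (0:ℝ) < n := by exact_mod_cast hn
    have hsum : ∑ i : α, (n:ℝ) * Ent G ≤ ∑ i : α, ((T - ∑ b, D i b - ∑ a, D a i) / 2 + n * ((∑ j, D i j) / (2 * (n+1)))) := by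
      refine Finset.sum_le_sum fun i _ => ?_
      have h1 := mul_le_mul_of_nonneg_left (hstep i) hn'.le
      have h2 := hsub i
      linarith
    simp only [Finset.sum_add_distrib, ← Finset.sum_div, Finset.sum_sub_distrib, ← Finset.mul_sum, Finset.sum_const,
      Finset.card_univ, hα, nsmul_eq_mul] at hsum
    rw [Finset.sum_comm (f := fun i a => D a i)] at hsum
    rw [← hT] at hsum
    push_cast at hsum ⊢
    have h5 : (n:ℝ) * (T / (2 * (n+1))) ≤ T / 2 := by
      rw [mul_div_assoc', div_le_div_iff₀ (by positivity) (by positivity)]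
      nlinarith
    have h6 : (n:ℝ) * ((n+1) * Ent G) ≤ n * (T / 2) := by nlinarith
    exact le_of_mul_le_mul_left h6 hn'

/-- One-sided gradient. -/
noncomputable def Gam (F : Perm α → ℝ) (σ : Perm α) : ℝ :=
  (∑ a, ∑ b, (max (F σ - F (σ * swap a b)) 0) ^ 2) / Fintype.card α

theorem mlsi_exp [Nonempty α] (F : Perm α → ℝ) :
    Ent (fun σ => Real.exp (F σ)) ≤ av (fun σ => Gam F σ * Real.exp (F σ)) := by
  have hc : (0:ℝ) < Fintype.card α := by exact_mod_cast Fintype.card_pos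
  have h := mlsi _ α rfl (fun σ => Real.exp (F σ)) (fun _ => Real.exp_pos _)
  have key : ∀ x y : ℝ, psi (Real.exp x) (Real.exp y) ≤ (max (x - y) 0)^2 * Real.exp x + (max (y - x) 0)^2 * Real.exp y := by
    have aux : ∀ x y : ℝ, y ≤ x → (Real.exp x - Real.exp y) * (x - y) ≤ (x - y)^2 * Real.exp x := by
      intro x y hxy
      have h1 := Real.add_one_le_exp (y - x)
      have h2 : Real.exp x * (y - x + 1) ≤ Real.exp y := by
        calc _ ≤ Real.exp x * Real.exp (y - x) := by gcongr
          _ = _ := by rw [← Real.exp_add]; congr 1; ring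
      nlinarith
    intro x y
    unfold psi
    rw [Real.log_exp, Real.log_exp]
    rcases le_total y x with hxy | hxy
    · rw [max_eq_left (by linarith), max_eq_right (by linarith)]
      have := aux x y hxy
      linarith
    · rw [max_eq_right (by linarith), max_eq_left (by linarith)]
      have := aux y x hxy
      linarith
  have h2 : ∀ a b : α, av (fun σ : Perm α => psi (Real.exp (F σ)) (Real.exp (F (σ * swap a b)))) ≤
      2 * av (fun σ => (max (F σ - F (σ * swap a b)) 0)^2 * Real.exp (F σ)) := by
    intro a b
    refine (av_mono fun σ => key _ _).trans ?_
    rw [av_add, two_mul]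
    gcongr
    rw [← av_equiv_self (Equiv.mulRight (swap a b)) (fun σ => (max (F σ - F (σ * swap a b)) 0)^2 * Real.exp (F σ))]
    refine le_of_eq (av_congr fun σ => ?_)
    simp [mul_assoc]
  have h3 : (∑ a, ∑ b, av (fun σ : Perm α => psi (Real.exp (F σ)) (Real.exp (F (σ * swap a b))))) / 2 ≤
      Fintype.card α * av (fun σ => Gam F σ * Real.exp (F σ)) := by
    have e : (Fintype.card α : ℝ) * av (fun σ => Gam F σ * Real.exp (F σ)) = 
       ∑ a, ∑ b, av (fun σ => (max (F σ - F (σ * swap a b)) 0)^2 * Real.exp (F σ)) := by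
      rw [← av_mul_left]
      simp only [← av_sum]
      refine av_congr fun σ => ?_
      unfold Gam
      simp only [← Finset.sum_mul]
      field_simp
    rw [e, div_le_iff₀ (by norm_num), Finset.sum_mul]
    refine Finset.sum_le_sum fun a _ => ?_
    rw [Finset.sum_mul]
    refine Finset.sum_le_sum fun b _ => ?_
    linarith [h2 a b]
  exact le_of_mul_le_mul_left (h.trans h3) hc
end perm


section herbst
set_option linter.unusedSectionVars false
variable {ι : Type*} [Fintype ι] [Nonempty ι]

lemma hasDerivAt_avexp (Y : ι → ℝ) (s : ℝ) :
    HasDerivAt (fun s : ℝ => av (fun i => Real.exp (s * Y i))) (av (fun i => Y i * Real.exp (s * Y i))) s := by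
  unfold av
  refine HasDerivAt.div_const (HasDerivAt.fun_sum fun i _ => ?_) _
  have h := ((hasDerivAt_id s).mul_const (Y i)).exp
  simp only [id, one_mul] at h
  rw [mul_comm]; exact h

lemma herbst (Y : ι → ℝ) (s0 κ β : ℝ) (hs0 : 0 < s0)
    (h : ∀ s, 0 < s → s ≤ s0 → Ent (fun i => Real.exp (s * Y i)) ≤
      s ^ 2 * (κ * av (fun i => Y i * Real.exp (s * Y i)) + β * av (fun i => Real.exp (s * Y i)))) :
    Real.log (av (fun i => Real.exp (s0 * Y i))) * (1 - κ * s0) ≤ s0 * av Y + β * s0 ^ 2 := by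
  set M : ℝ → ℝ := fun s => av (fun i => Real.exp (s * Y i)) with hM
  set M' : ℝ → ℝ := fun s => av (fun i => Y i * Real.exp (s * Y i)) with hM'
  have hMp : ∀ s, 0 < M s := fun s => av_pos fun i => Real.exp_pos _
  have hd : ∀ s, HasDerivAt M (M' s) s := fun s => hasDerivAt_avexp Y s
  have hK : ∀ s, HasDerivAt (fun s => Real.log (M s)) (M' s / M s) s := fun s => (hd s).log (hMp s).ne'
  have hEnt : ∀ s, Ent (fun i => Real.exp (s * Y i)) = s * M' s - M s * Real.log (M s) := by
    intro s
    unfold Ent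
    simp only [Real.log_exp, hM, hM']
    rw [← av_mul_left]
    congr 1
    exact av_congr fun i => by ring
  set Φ : ℝ → ℝ := fun s => Real.log (M s) / s - κ * Real.log (M s) - β * s with hΦ
  have hΦd : ∀ s, 0 < s → HasDerivAt Φ ((M' s / M s * s - Real.log (M s) * 1) / s ^ 2 - κ * (M' s / M s) - β * 1) s := by
    intro s hs
    exact (((hK s).div (hasDerivAt_id s) hs.ne').sub ((hK s).const_mul κ)).sub ((hasDerivAt_id s).const_mul β)
  have hanti : AntitoneOn Φ (Set.Ioc 0 s0) := by
    apply antitoneOn_of_deriv_nonpos (convex_Ioc 0 s0)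
    · intro s hs
      exact (hΦd s hs.1).continuousAt.continuousWithinAt
    · intro s hs
      rw [interior_Ioc] at hs
      exact (hΦd s hs.1).differentiableAt.differentiableWithinAt
    · intro s hs
      rw [interior_Ioc] at hs
      rw [(hΦd s hs.1).deriv]
      have h1 := h s hs.1 hs.2.le
      rw [hEnt] at h1
      have hp := hMp s
      have hs2 : 0 < s ^ 2 := pow_pos hs.1 2
      have h2 : (M' s / M s * s - Real.log (M s) * 1) / s ^ 2 ≤ κ * (M' s / M s) + β := by
        rw [div_le_iff₀ hs2]
        have : M' s / M s * s - Real.log (M s) * 1 = (s * M' s - M s * Real.log (M s)) / M s := by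
          field_simp
        rw [this, div_le_iff₀ hp]
        refine h1.trans (le_of_eq ?_)
        field_simp
        rfl
      linarith
  have hM0 : M 0 = 1 := by simp only [hM, zero_mul, Real.exp_zero]; exact av_const 1
  have hM'0 : M' 0 = av Y := by simp [hM']
  have hlim : Filter.Tendsto Φ (nhdsWithin 0 (Set.Ioi 0)) (nhds (av Y)) := by
    have h1 := (hK 0).hasDerivWithinAt (s := Set.Ioi 0)
    rw [hasDerivWithinAt_iff_tendsto_slope] at h1
    have e : (Set.Ioi (0:ℝ)) \ {0} = Set.Ioi 0 := by ext x; simp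
    rw [e, hM0, hM'0, div_one] at h1
    have h2 : Filter.Tendsto (fun s => κ * Real.log (M s) + β * s) (nhdsWithin 0 (Set.Ioi 0)) (nhds 0) := by
      have : ContinuousAt (fun s => κ * Real.log (M s) + β * s) 0 :=
        ((hK 0).continuousAt.const_mul κ).add (continuousAt_id.const_mul β)
      have h3 := this.tendsto
      simp only [hM0, Real.log_one, mul_zero, add_zero] at h3
      exact h3.mono_left nhdsWithin_le_nhds
    have h4 := h1.sub h2
    rw [sub_zero] at h4
    refine h4.congr fun s => ?_
    simp only [slope_def_field, hM0, Real.log_one, hΦ]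
    ring
  have hfin : Φ s0 ≤ av Y := by
    refine ge_of_tendsto hlim ?_
    filter_upwards [Ioc_mem_nhdsGT hs0] with s hs
    exact hanti hs ⟨hs0, le_rfl⟩ hs.2
  have := mul_le_mul_of_nonneg_left hfin hs0.le
  have e : s0 * Φ s0 = Real.log (M s0) * (1 - κ * s0) - β * s0 ^ 2 := by
    simp only [hΦ]; field_simp
  linarith

end herbst

section conc
open Equiv
variable {α : Type} [Fintype α] [DecidableEq α]

lemma Gam_smul (s : ℝ) (hs : 0 ≤ s) (Y : Perm α → ℝ) (σ : Perm α) :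
    Gam (fun σ => s * Y σ) σ = s ^ 2 * Gam Y σ := by
  unfold Gam
  rw [← mul_div_assoc, Finset.mul_sum]
  simp only [Finset.mul_sum]
  congr 1
  refine Finset.sum_congr rfl fun a _ => Finset.sum_congr rfl fun b _ => ?_
  rw [← mul_pow, mul_max_of_nonneg _ _ hs]
  congr 2 <;> ring

lemma Gam_nonneg (Y : Perm α → ℝ) (σ : Perm α) : 0 ≤ Gam Y σ := by unfold Gam; positivity

lemma self_bound [Nonempty α] (Y : Perm α → ℝ) (h : ∀ σ, Gam Y σ ≤ Y σ / 2) :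
    av (fun σ => Real.exp (Y σ)) ≤ Real.exp (2 * av Y) := by
  have h1 := herbst Y 1 (1/2) 0 one_pos (by
    intro s hs _
    refine (mlsi_exp (fun σ => s * Y σ)).trans ?_
    rw [← av_mul_left, zero_mul, add_zero, ← av_mul_left]
    refine av_mono fun σ => ?_
    rw [Gam_smul s hs.le, mul_assoc]
    have := mul_le_mul_of_nonneg_right (h σ) (Real.exp_pos (s * Y σ)).le
    refine mul_le_mul_of_nonneg_left ?_ (by positivity)
    linarith)
  simp only [one_mul] at h1
  rw [← Real.log_le_iff_le_exp (av_pos fun _ => Real.exp_pos _)]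
  linarith

lemma conc [Nonempty α] (f v : Perm α → ℝ) (B V : ℝ) (hB : 0 ≤ B) (hV : 0 ≤ V) (hBV : 0 < V + B)
    (hG : ∀ σ, Gam f σ ≤ v σ)
    (hv : ∀ l : ℝ, 0 ≤ l → l * B ^ 2 ≤ 1 → av (fun σ => Real.exp (l * v σ)) ≤ Real.exp (l * V))
    (t : ℝ) (ht : 0 < t) :
    av (fun σ => if f σ - av f ≥ t then (1:ℝ) else 0) ≤ Real.exp (-(t ^ 2 / (8 * V + 4 * B * t))) := by
  have hden : 0 < 4 * V + 2 * B * t := by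
    rcases hV.lt_or_eq with h | h
    · positivity
    · have : 0 < B := by linarith
      positivity
  set θ := t / (4 * V + 2 * B * t) with hθ
  have hθ0 : 0 < θ := by positivity
  have hθB : θ * B ≤ 1/2 := by
    rw [hθ, div_mul_eq_mul_div, div_le_iff₀ hden]; nlinarith
  have hθV : 2 * V * θ ≤ t / 2 := by
    rw [hθ, mul_div_assoc', div_le_iff₀ hden]; nlinarith [mul_nonneg hB ht.le, mul_nonneg (mul_nonneg hB ht.le) ht.le]
  have h1 := herbst f θ 0 (2 * V) hθ0 (by
    intro s hs hsθ
    have hsB : 2 * s ^ 2 * B ^ 2 ≤ 1 := by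
      have h2 : s * B ≤ 1/2 := (mul_le_mul_of_nonneg_right hsθ hB).trans hθB
      have h3 : 0 ≤ s * B := by positivity
      nlinarith
    have e1 := mlsi_exp (fun σ => s * f σ)
    have e2 : av (fun σ => Gam (fun σ => s * f σ) σ * Real.exp (s * f σ)) ≤
       (1/2) * av (fun σ => (2 * s ^ 2 * v σ) * Real.exp (s * f σ)) := by
      rw [← av_mul_left]
      refine av_mono fun σ => ?_
      rw [Gam_smul s hs.le]
      have := mul_le_mul_of_nonneg_right (mul_le_mul_of_nonneg_left (hG σ) (sq_nonneg s)) (Real.exp_pos (s * f σ)).le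
      linarith
    have e3 := ent_var (fun σ => Real.exp (s * f σ)) (fun σ => 2 * s ^ 2 * v σ) (fun _ => Real.exp_pos _)
    have e4 := hv (2 * s ^ 2) (by positivity) hsB
    rw [← Real.log_le_iff_le_exp (av_pos fun _ => Real.exp_pos _)] at e4
    have hp : 0 < av (fun σ => Real.exp (s * f σ)) := av_pos fun _ => Real.exp_pos _
    have e5 := mul_le_mul_of_nonneg_left e4 hp.le
    nlinarith)
  have h2 : ∀ σ, (if f σ - av f ≥ t then (1:ℝ) else 0) ≤ Real.exp (-(θ * (av f + t))) * Real.exp (θ * f σ) := by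
    intro σ
    split_ifs with hc
    · rw [← Real.exp_add]
      apply Real.one_le_exp
      nlinarith
    · positivity
  refine (av_mono h2).trans ?_
  rw [av_mul_left]
  have hp : 0 < av (fun σ => Real.exp (θ * f σ)) := av_pos fun _ => Real.exp_pos _
  rw [← Real.exp_log hp, ← Real.exp_add]
  apply Real.exp_le_exp.mpr
  have e6 : t ^ 2 / (8 * V + 4 * B * t) = θ * t / 2 := by
    rw [hθ, show 8 * V + 4 * B * t = 2 * (4 * V + 2 * B * t) by ring]; field_simp
  rw [e6]
  nlinarith

end conc


/-- exponential moment bound -/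
def MB {ι : Type*} [Fintype ι] (f : ι → ℝ) (A β : ℝ) : Prop :=
  ∀ l : ℝ, 0 ≤ l → l * β ≤ 1 → av (fun i => Real.exp (l * f i)) ≤ Real.exp (l * A)

section MBs
variable {ι κ : Type*} [Fintype ι] [Fintype κ]

lemma MB.mono {f g : ι → ℝ} {A A' β β' : ℝ} (h : MB g A β) (hf : ∀ i, f i ≤ g i) (hA : A ≤ A') (hβ : β ≤ β') :
    MB f A' β' := by
  intro l hl hlβ
  refine (av_mono fun i => ?_).trans ((h l hl ((mul_le_mul_of_nonneg_left hβ hl).trans hlβ)).trans ?_)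
  · exact Real.exp_le_exp.mpr (mul_le_mul_of_nonneg_left (hf i) hl)
  · exact Real.exp_le_exp.mpr (mul_le_mul_of_nonneg_left hA hl)

lemma MB.smul {f : ι → ℝ} {A β : ℝ} (h : MB f A β) (c : ℝ) (hc : 0 ≤ c) :
    MB (fun i => c * f i) (c * A) (c * β) := by
  intro l hl hlβ
  have := h (l * c) (by positivity) (by rw [mul_assoc]; exact hlβ)
  simpa only [mul_assoc] using this

lemma MB.const [Nonempty ι] (A β : ℝ) : MB (fun _ : ι => A) A β := by
  intro l hl hlβ
  rw [av_const]

lemma MB.add [Nonempty ι] {f g : ι → ℝ} {A A' β : ℝ} (h : MB f A β) (h' : MB g A' β) :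
    MB (fun i => f i + g i) (A + A') (2 * β) := by
  intro l hl hlβ
  have h1 := h (2 * l) (by positivity) (by linarith)
  have h2 := h' (2 * l) (by positivity) (by linarith)
  have key : ∀ i, Real.exp (l * (f i + g i)) ≤ Real.exp (l * (A + A')) * (1/2 * (Real.exp (-(2*l*A)) * Real.exp (2 * l * f i)
      + Real.exp (-(2*l*A')) * Real.exp (2 * l * g i))) := by
    intro i
    have e1 : Real.exp (l * (f i + g i)) = Real.exp (l * (A + A')) * (Real.exp (l * (f i - A)) * Real.exp (l * (g i - A'))) := by
      rw [← Real.exp_add, ← Real.exp_add]; congr 1; ring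
    have e2 : Real.exp (-(2*l*A)) * Real.exp (2 * l * f i) = Real.exp (l * (f i - A)) ^ 2 := by
      rw [← Real.exp_add, sq, ← Real.exp_add]; congr 1; ring
    have e3 : Real.exp (-(2*l*A')) * Real.exp (2 * l * g i) = Real.exp (l * (g i - A')) ^ 2 := by
      rw [← Real.exp_add, sq, ← Real.exp_add]; congr 1; ring
    rw [e1, e2, e3]
    refine mul_le_mul_of_nonneg_left ?_ (Real.exp_pos _).le
    nlinarith [sq_nonneg (Real.exp (l * (f i - A)) - Real.exp (l * (g i - A')))]
  refine (av_mono key).trans ?_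
  rw [av_mul_left, av_mul_left, av_add, av_mul_left, av_mul_left]
  have h3 := mul_le_mul_of_nonneg_left h1 (Real.exp_pos (-(2*l*A))).le
  have h4 := mul_le_mul_of_nonneg_left h2 (Real.exp_pos (-(2*l*A'))).le
  rw [← Real.exp_add, neg_add_cancel, Real.exp_zero] at h3 h4
  have := mul_le_mul_of_nonneg_left (show 1/2 * (Real.exp (-(2*l*A)) * av (fun i => Real.exp (2 * l * f i)) +
    Real.exp (-(2*l*A')) * av (fun i => Real.exp (2 * l * g i))) ≤ 1 by linarith) (Real.exp_pos (l * (A + A'))).le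
  linarith

lemma MB.avg [Nonempty κ] {f : κ → ι → ℝ} {A β : ℝ} (h : ∀ k, MB (f k) A β) :
    MB (fun i => av (fun k => f k i)) A β := by
  intro l hl hlβ
  have h1 : ∀ i, Real.exp (l * av (fun k => f k i)) ≤ av (fun k => Real.exp (l * f k i)) := by
    intro i
    rw [← av_mul_left]; exact exp_av_le _
  refine (av_mono h1).trans ?_
  rw [av_comm]
  refine (av_mono fun k => h k l hl hlβ).trans ?_
  rw [av_const]

lemma MB.sum [Nonempty κ] {f : κ → ι → ℝ} {A : κ → ℝ} {β : ℝ} (h : ∀ k, MB (f k) (A k) β) :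
    MB (fun i => ∑ k, f k i) (∑ k, A k) (Fintype.card κ * β) := by
  have hc : (0:ℝ) < Fintype.card κ := by exact_mod_cast Fintype.card_pos
  have h1 : MB (fun i => av (fun k => Fintype.card κ * f k i - Fintype.card κ * A k)) 0 (Fintype.card κ * β) := by
    refine MB.avg fun k => ?_
    intro l hl hlβ
    have := h k (l * Fintype.card κ) (by positivity) (by linarith)
    rw [mul_zero, Real.exp_zero]
    have e : ∀ i, Real.exp (l * (Fintype.card κ * f k i - Fintype.card κ * A k)) =
      Real.exp (-(l * Fintype.card κ * A k)) * Real.exp (l * Fintype.card κ * f k i) := fun i => by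
        rw [← Real.exp_add]; congr 1; ring
    rw [av_congr e, av_mul_left]
    have := mul_le_mul_of_nonneg_left this (Real.exp_pos (-(l * Fintype.card κ * A k))).le
    rwa [← Real.exp_add, neg_add_cancel, Real.exp_zero] at this
  intro l hl hlβ
  have h2 := h1 l hl hlβ
  have e : ∀ i, av (fun k => Fintype.card κ * f k i - Fintype.card κ * A k) = ∑ k, f k i - ∑ k, A k := by
    intro i
    unfold av
    rw [← Finset.sum_sub_distrib, Finset.sum_div]
    exact Finset.sum_congr rfl fun k _ => by field_simp
  have e2 : ∀ i, Real.exp (l * ∑ k, f k i) = Real.exp (l * ∑ k, A k) * Real.exp (l * av (fun k => Fintype.card κ * f k i - Fintype.card κ * A k)) := by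
    intro i
    rw [e, ← Real.exp_add]; congr 1; ring
  rw [av_congr e2, av_mul_left]
  rw [mul_zero, Real.exp_zero] at h2
  have := mul_le_mul_of_nonneg_left h2 (Real.exp_pos (l * ∑ k, A k)).le
  linarith

end MBs

section moments
open Equiv
variable {α : Type} [Fintype α] [DecidableEq α]

lemma MB.self [Nonempty α] (Y : Perm α → ℝ) (κ : ℝ) (hY : ∀ σ, 0 ≤ Y σ) (h : ∀ σ, Gam Y σ ≤ κ * Y σ) :
    MB Y (2 * av Y) (2 * κ) := by
  intro l hl hlκ
  have := self_bound (fun σ => l * Y σ) (fun σ => by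
    rw [Gam_smul l hl]
    have h1 := mul_le_mul_of_nonneg_left (h σ) (sq_nonneg l)
    have h2 := mul_le_mul_of_nonneg_right (show l * κ ≤ 1/2 by linarith) (mul_nonneg hl (hY σ))
    nlinarith)
  rw [av_mul_left] at this
  convert this using 2; ring

lemma MB.cond {p : α → Prop} [DecidablePred p] {Y M : Perm α → ℝ} {A β : ℝ}
    (h : ∀ σ : Perm α, MB (fun ρ : Perm {x // p x} => Y (σ * Perm.ofSubtype ρ)) (M σ) β) (h2 : MB M A β) :
    MB Y A β := by
  intro l hl hlβ
  rw [av_mul_subtype (p := p)]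
  exact (av_mono fun σ => h σ l hl hlβ).trans (h2 l hl hlβ)

lemma lin_swap (F : α → α → ℝ) (σ : Perm α) (a b : α) :
    ∑ c, F c (σ c) - ∑ c, F c ((σ * swap a b) c) = F a (σ a) + F b (σ b) - F a (σ b) - F b (σ a) := by
  by_cases hab : a = b
  · subst hab
    have : ∀ c, (σ * swap a a) c = σ c := fun c => by rw [swap_self]; rfl
    simp only [this]; ring
  rw [← Finset.sum_sub_distrib]
  rw [← Finset.sum_subset (Finset.subset_univ {a, b})]
  · rw [Finset.sum_pair hab]; simp; ring
  · intro c _ hc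
    simp only [Finset.mem_insert, Finset.mem_singleton, not_or] at hc
    rw [Perm.mul_apply, swap_apply_of_ne_of_ne hc.1 hc.2, sub_self]

lemma av_marg1 (F : α → α → ℝ) : av (fun σ : Perm α => ∑ a, F a (σ a)) = (∑ a, ∑ k, F a k) / Fintype.card α := by
  rw [av_sum, Finset.sum_div]
  exact Finset.sum_congr rfl fun a _ => av_perm_apply a (F a)

lemma sum_ne_one (i : α) (f : α → ℝ) : ∑ a : {x // x ≠ i}, f a = ∑ a, f a - f i := by
  rw [← Finset.sum_erase_eq_sub (Finset.mem_univ i)]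
  exact (Finset.sum_subtype (Finset.univ.erase i) (by simp) f).symm

lemma av_marg2 (a b : α) (hab : b ≠ a) (Φ : α → α → ℝ) :
    av (fun σ : Perm α => Φ (σ a) (σ b)) =
      (∑ k, (∑ l, Φ k l - Φ k k)) / (Fintype.card α * (Fintype.card α - 1)) := by
  rw [av_mul_subtype (p := fun x => x ≠ a)]
  have h1 : ∀ σ : Perm α, av (fun ρ : Perm {x // x ≠ a} => Φ ((σ * Perm.ofSubtype ρ) a) ((σ * Perm.ofSubtype ρ) b)) =
     (∑ l, Φ (σ a) l - Φ (σ a) (σ a)) / (Fintype.card α - 1) := by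
    intro σ
    have e1 : ∀ ρ : Perm {x // x ≠ a}, Φ ((σ * Perm.ofSubtype ρ) a) ((σ * Perm.ofSubtype ρ) b) =
      (fun c : {x // x ≠ a} => Φ (σ a) (σ c)) (ρ ⟨b, hab⟩) := by
      intro ρ
      simp only [Perm.mul_apply]
      rw [Perm.ofSubtype_apply_of_not_mem ρ (by simp), Perm.ofSubtype_apply_of_mem ρ hab]
    rw [av_congr e1]
    refine (av_perm_apply (⟨b, hab⟩ : {x // x ≠ a}) (fun c : {x // x ≠ a} => Φ (σ a) (σ c))).trans ?_
    unfold av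
    rw [sum_ne_one a (fun c => Φ (σ a) (σ c)), Equiv.sum_comp σ (Φ (σ a))]
    congr 1
    rw [Fintype.card_subtype_compl, Fintype.card_subtype_eq, Nat.cast_sub]
    · simp
    · exact Fintype.card_pos_iff.mpr ⟨a⟩
  rw [av_congr h1, av_perm_apply a (fun k => (∑ l, Φ k l - Φ k k) / ((Fintype.card α : ℝ) - 1))]
  unfold av
  rw [← Finset.sum_div, div_div, mul_comm]

lemma NL [Nonempty α] (q : α → α → ℝ) (β : ℝ) (h0 : ∀ a k, 0 ≤ q a k) (h1 : ∀ a k, q a k ≤ β) :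
    MB (fun σ : Perm α => ∑ a, q a (σ a)) (2 / Fintype.card α * ∑ a, ∑ k, q a k) (8 * β) := by
  have hc : (0:ℝ) < Fintype.card α := by exact_mod_cast Fintype.card_pos
  have := MB.self (fun σ : Perm α => ∑ a, q a (σ a)) (4 * β) (fun σ => Finset.sum_nonneg fun a _ => h0 _ _) (by
    intro σ
    unfold Gam
    rw [div_le_iff₀ hc]
    have key : ∀ a b : α, (max (∑ c, q c (σ c) - ∑ c, q c ((σ * swap a b) c)) 0)^2 ≤ 2 * β * q a (σ a) + 2 * β * q b (σ b) := by
      intro a b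
      rw [lin_swap]
      have ha := h0 a (σ a)
      have hb := h0 b (σ b)
      have ha' := h1 a (σ a)
      have hb' := h1 b (σ b)
      have : max (q a (σ a) + q b (σ b) - q a (σ b) - q b (σ a)) 0 ≤ q a (σ a) + q b (σ b) := by
        apply max_le
        · linarith [h0 a (σ b), h0 b (σ a)]
        · linarith
      have h3 := pow_le_pow_left₀ (le_max_right _ _) this 2
      nlinarith [sq_nonneg (q a (σ a) - q b (σ b))]
    refine (Finset.sum_le_sum fun a _ => Finset.sum_le_sum fun b _ => key a b).trans (le_of_eq ?_)
    simp only [Finset.sum_add_distrib, Finset.sum_const, Finset.card_univ, nsmul_eq_mul, ← Finset.mul_sum]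
    ring)
  rw [av_marg1] at this
  refine this.mono (fun _ => le_rfl) (le_of_eq ?_) (by linarith)
  ring

lemma NP [Nonempty α] (hα : 2 ≤ Fintype.card α) (p : α → α → α → α → ℝ) (κ : ℝ) (h0 : ∀ a b k l, 0 ≤ p a b k l)
    (h1 : ∀ a b k l, p a b k l ≤ κ / Fintype.card α) (hd : ∀ a k l, p a a k l = 0) :
    MB (fun σ : Perm α => ∑ a, ∑ b, p a b (σ a) (σ b)) (4 / (Fintype.card α) ^ 2 * ∑ a, ∑ b, ∑ k, ∑ l, p a b k l) (32 * κ) := by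
  have hc : (0:ℝ) < Fintype.card α := by exact_mod_cast Fintype.card_pos
  have hc2 : (2:ℝ) ≤ Fintype.card α := by exact_mod_cast hα
  have := MB.self (fun σ : Perm α => ∑ a, ∑ b, p a b (σ a) (σ b)) (16 * κ) (fun σ => Finset.sum_nonneg fun a _ => Finset.sum_nonneg fun a _ => h0 _ _ _ _) (by
    intro σ
    unfold Gam
    rw [div_le_iff₀ hc]
    set y : α → ℝ := fun a => ∑ c, p a c (σ a) (σ c) + ∑ c, p c a (σ c) (σ a) with hy
    have hy0 : ∀ a, 0 ≤ y a := fun a => add_nonneg (Finset.sum_nonneg fun c _ => h0 _ _ _ _) (Finset.sum_nonneg fun c _ => h0 _ _ _ _)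
    have hy1 : ∀ a, y a ≤ 2 * κ := by
      intro a
      have e1 : ∑ c, p a c (σ a) (σ c) ≤ κ := by
        refine (Finset.sum_le_sum fun c _ => h1 _ _ _ _).trans (le_of_eq ?_)
        simp; field_simp
      have e2 : ∑ c, p c a (σ c) (σ a) ≤ κ := by
        refine (Finset.sum_le_sum fun c _ => h1 _ _ _ _).trans (le_of_eq ?_)
        simp; field_simp
      simp only [hy]; linarith
    have hysum : ∑ a, y a = 2 * ∑ a, ∑ b, p a b (σ a) (σ b) := by
      simp only [hy, Finset.sum_add_distrib]
      rw [Finset.sum_comm (f := fun a c => p c a (σ c) (σ a))]; ring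
    have key : ∀ a b : α, (max (∑ c, ∑ d, p c d (σ c) (σ d) - ∑ c, ∑ d, p c d ((σ * swap a b) c) ((σ * swap a b) d)) 0)^2 ≤ 4 * κ * y a + 4 * κ * y b := by
      intro a b
      have e : ∑ c, ∑ d, p c d (σ c) (σ d) - ∑ c, ∑ d, p c d ((σ * swap a b) c) ((σ * swap a b) d) ≤ y a + y b := by
        have e1 : y a + y b = ∑ c, ∑ d, p c d (σ c) (σ d) * ((if c = a then 1 else 0) + (if d = a then 1 else 0) + (if c = b then 1 else 0) + (if d = b then 1 else 0)) := by
          simp only [mul_add, mul_ite, mul_one, mul_zero, Finset.sum_add_distrib, Finset.sum_ite_eq', Finset.mem_univ, if_true]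
          have e2 : ∀ a, ∑ x, ∑ d, (if x = a then p x d (σ x) (σ d) else 0) = ∑ d, p a d (σ a) (σ d) := by
            intro a
            rw [Finset.sum_comm]; simp
          rw [e2, e2]; simp only [hy]; ring
        rw [e1, ← Finset.sum_sub_distrib]
        refine Finset.sum_le_sum fun c _ => ?_
        rw [← Finset.sum_sub_distrib]
        refine Finset.sum_le_sum fun d _ => ?_
        have hp := h0 c d (σ c) (σ d)
        have hp' := h0 c d ((σ * swap a b) c) ((σ * swap a b) d)
        by_cases hca : c = a
        · simp only [hca, if_true] at hp hp' ⊢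
          have : (0:ℝ) ≤ (if d = a then 1 else 0) + (if a = b then 1 else 0) + (if d = b then 1 else 0) := by positivity
          nlinarith
        by_cases hda : d = a
        · simp only [hda, if_true] at hp hp' ⊢
          have : (0:ℝ) ≤ (if c = a then 1 else 0) + (if c = b then 1 else 0) + (if a = b then 1 else 0) := by positivity
          nlinarith
        by_cases hcb : c = b
        · simp only [hcb, if_true] at hp hp' ⊢
          have : (0:ℝ) ≤ (if b = a then 1 else 0) + (if d = a then 1 else 0) + (if d = b then 1 else 0) := by positivity
          nlinarith
        by_cases hdb : d = b
        · simp only [hdb, if_true] at hp hp' ⊢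
          have : (0:ℝ) ≤ (if c = a then 1 else 0) + (if b = a then 1 else 0) + (if c = b then 1 else 0) := by positivity
          nlinarith
        rw [Perm.mul_apply, swap_apply_of_ne_of_ne hca hcb, Perm.mul_apply, swap_apply_of_ne_of_ne hda hdb]
        simp [hca, hda, hcb, hdb]
      have h3 := pow_le_pow_left₀ (le_max_right _ _) (max_le e (add_nonneg (hy0 a) (hy0 b))) 2
      nlinarith [sq_nonneg (y a - y b), hy0 a, hy0 b, hy1 a, hy1 b]
    refine (Finset.sum_le_sum fun a _ => Finset.sum_le_sum fun b _ => key a b).trans (le_of_eq ?_)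
    simp only [Finset.sum_add_distrib, Finset.sum_const, Finset.card_univ, nsmul_eq_mul, ← Finset.mul_sum, hysum]
    ring)
  refine this.mono (fun _ => le_rfl) ?_ (by linarith)
  rw [av_sum]
  simp only [av_sum]
  have : ∀ a b : α, av (fun σ : Perm α => p a b (σ a) (σ b)) ≤ 2 / (Fintype.card α) ^ 2 * ∑ k, ∑ l, p a b k l := by
    intro a b
    by_cases hab : b = a
    · subst hab
      simp [hd, av]
    · rw [av_marg2 a b hab (p a b), div_mul_eq_mul_div, div_le_div_iff₀ (by nlinarith) (by positivity)]
      have e1 : ∑ k, (∑ l, p a b k l - p a b k k) ≤ ∑ k, ∑ l, p a b k l :=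
        Finset.sum_le_sum fun k _ => by linarith [h0 a b k k]
      have e2 : 0 ≤ ∑ k, ∑ l, p a b k l := Finset.sum_nonneg fun k _ => Finset.sum_nonneg fun l _ => h0 _ _ _ _
      have e3 := mul_le_mul_of_nonneg_right e1 (sq_nonneg (Fintype.card α : ℝ))
      have e4 : (Fintype.card α : ℝ)^2 ≤ 2 * (Fintype.card α * (Fintype.card α - 1)) := by nlinarith
      have e5 := mul_le_mul_of_nonneg_left e4 e2
      linarith
  have h2 := Finset.sum_le_sum fun a (_ : a ∈ Finset.univ) => Finset.sum_le_sum fun b (_ : b ∈ Finset.univ) => this a b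
  simp only [← Finset.mul_sum] at h2
  calc _ ≤ _ := mul_le_mul_of_nonneg_left h2 (by norm_num : (0:ℝ) ≤ 2)
    _ = _ := by ring

end moments


section lemQ
open Equiv
variable {α : Type} [Fintype α] [DecidableEq α]

lemma av_sq_le (hα : 2 ≤ Fintype.card α) (h : ℝ) (m : α → α → ℝ) :
    av (fun σ : Perm α => (h + ∑ i, m i (σ i)) ^ 2) ≤
      (h + (∑ i, ∑ k, m i k) / Fintype.card α) ^ 2 + 2 / Fintype.card α * ∑ i, ∑ k, m i k ^ 2 := by
  have hc2 : (2:ℝ) ≤ Fintype.card α := by exact_mod_cast hα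
  set n : ℝ := (Fintype.card α : ℝ) with hn
  have : Nonempty α := Fintype.card_pos_iff.mp (by omega)
  set S := ∑ i, ∑ k, m i k with hS
  set R : α → ℝ := fun i => ∑ k, m i k with hR
  set C : α → ℝ := fun k => ∑ i, m i k with hC
  set Q := ∑ i, ∑ k, m i k ^ 2 with hQ
  have e1 : ∀ σ : Perm α, (h + ∑ i, m i (σ i)) ^ 2 = h ^ 2 + 2 * h * ∑ i, m i (σ i) + ∑ i, ∑ j, m i (σ i) * m j (σ j) := by
    intro σ
    rw [← Finset.sum_mul_sum]; ring
  rw [av_congr e1, av_add, av_add, av_const, av_mul_left, av_marg1, av_sum]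
  simp only [av_sum]
  set T : α → α → ℝ := fun i j => (R i * R j - ∑ k, m i k * m j k) / (n * (n - 1)) with hT
  have e2 : ∀ i j : α, av (fun σ : Perm α => m i (σ i) * m j (σ j)) =
      T i j + if j = i then (∑ k, m i k ^ 2) / n - T i i else 0 := by
    intro i j
    split_ifs with hij
    · subst hij
      rw [av_perm_apply j (fun k => m j k * m j k)]
      unfold av
      simp only [← sq]; ring
    · rw [av_marg2 i j hij (fun k l => m i k * m j l)]
      simp only [hT, hR, add_zero, Finset.sum_sub_distrib, ← Finset.mul_sum, ← Finset.sum_mul]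
      rfl
  have e3 : ∑ i, ∑ j, av (fun σ : Perm α => m i (σ i) * m j (σ j)) = ∑ i, ∑ j, T i j + Q / n - ∑ i, T i i := by
    simp only [e2, Finset.sum_add_distrib, Finset.sum_ite_eq', Finset.mem_univ, if_true, Finset.sum_sub_distrib, ← Finset.sum_div]
    rw [← hQ]; ring
  have e4 : ∑ i, ∑ j, T i j = (S ^ 2 - ∑ k, C k ^ 2) / (n * (n - 1)) := by
    simp only [hT, ← Finset.sum_div, Finset.sum_sub_distrib, ← Finset.mul_sum, ← Finset.sum_mul]
    congr 2
    · rw [hS, sq]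
    · have : ∀ i, ∑ j, ∑ k, m i k * m j k = ∑ k, m i k * C k := by
        intro i
        rw [Finset.sum_comm]; simp only [hC, Finset.mul_sum]
      simp only [this]
      rw [Finset.sum_comm]
      simp only [← Finset.sum_mul, hC, sq]
  have e5 : ∑ i, T i i = (∑ i, R i ^ 2 - Q) / (n * (n - 1)) := by
    simp only [hT, ← Finset.sum_div, Finset.sum_sub_distrib, ← sq]
    rfl
  rw [e3, e4, e5]
  have e6 : S ^ 2 ≤ n * ∑ i, R i ^ 2 := by
    have := sq_sum_le_card_mul_sum_sq (s := (Finset.univ : Finset α)) (f := R)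
    simpa [hn] using this
  have e7 : 0 ≤ ∑ k, C k ^ 2 := Finset.sum_nonneg fun _ _ => sq_nonneg _
  have e8 : 0 ≤ Q := Finset.sum_nonneg fun _ _ => Finset.sum_nonneg fun _ _ => sq_nonneg _
  have hn0 : 0 < n := by linarith
  have hn1 : 0 < n - 1 := by linarith
  have main : (S ^ 2 - ∑ k, C k ^ 2) / (n * (n - 1)) + Q / n - (∑ i, R i ^ 2 - Q) / (n * (n - 1)) ≤ (S / n) ^ 2 + 2 / n * Q := by
    have : (S / n) ^ 2 + 2 / n * Q - ((S ^ 2 - ∑ k, C k ^ 2) / (n * (n - 1)) + Q / n - (∑ i, R i ^ 2 - Q) / (n * (n - 1)))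
      = ((n * ∑ i, R i ^ 2 - S ^ 2) + n * ∑ k, C k ^ 2 + n * (n - 2) * Q) / (n ^ 2 * (n - 1)) := by
      field_simp; ring
    have h2 : 0 ≤ ((n * ∑ i, R i ^ 2 - S ^ 2) + n * ∑ k, C k ^ 2 + n * (n - 2) * Q) / (n ^ 2 * (n - 1)) := by
      apply div_nonneg _ (by positivity)
      have : 0 ≤ n * (n - 2) * Q := mul_nonneg (mul_nonneg hn0.le (by linarith)) e8
      have : 0 ≤ n * ∑ k, C k ^ 2 := by positivity
      linarith
    linarith
  have : (h + S / n) ^ 2 = h ^ 2 + 2 * h * (S / n) + (S / n) ^ 2 := by ring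
  rw [this]; linarith

lemma lemQ {A : Type*} [Fintype A] (hα : 2 ≤ Fintype.card α) (h : A → ℝ) (m : A → α → α → ℝ) (κ : ℝ)
    (hop : ∀ (ρ : Perm α) (x : A → ℝ), ∑ i, (∑ a, x a * m a i (ρ i)) ^ 2 ≤ κ * ∑ a, x a ^ 2) :
    MB (fun σ : Perm α => ∑ a, (h a + ∑ i, m a i (σ i)) ^ 2)
      (2 * ∑ a, ((h a + (∑ i, ∑ k, m a i k) / Fintype.card α) ^ 2 + 2 / Fintype.card α * ∑ i, ∑ k, m a i k ^ 2)) (128 * κ) := by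
  have : Nonempty α := Fintype.card_pos_iff.mp (by omega)
  have hc : (0:ℝ) < Fintype.card α := by exact_mod_cast Fintype.card_pos
  have := MB.self (fun σ : Perm α => ∑ a, (h a + ∑ i, m a i (σ i)) ^ 2) (64 * κ) (fun σ => by positivity) (by
    intro σ
    unfold Gam
    rw [div_le_iff₀ hc]
    set U : A → ℝ := fun a => h a + ∑ i, m a i (σ i) with hU
    set z : α → α → ℝ := fun i k => ∑ a, U a * m a i k with hz
    have key : ∀ i j : α, (max (∑ a, (h a + ∑ c, m a c (σ c)) ^ 2 - ∑ a, (h a + ∑ c, m a c ((σ * swap i j) c)) ^ 2) 0)^2 ≤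
        16 * (z i (σ i) ^ 2 + z j (σ j) ^ 2 + z i (σ j) ^ 2 + z j (σ i) ^ 2) := by
      intro i j
      have e : ∑ a, (h a + ∑ c, m a c (σ c)) ^ 2 - ∑ a, (h a + ∑ c, m a c ((σ * swap i j) c)) ^ 2 ≤
         2 * (z i (σ i) + z j (σ j) - z i (σ j) - z j (σ i)) := by
        have e1 : 2 * (z i (σ i) + z j (σ j) - z i (σ j) - z j (σ i)) = ∑ a, 2 * U a * (∑ c, m a c (σ c) - ∑ c, m a c ((σ * swap i j) c)) := by
          simp only [hz, lin_swap]
          rw [← Finset.sum_add_distrib, ← Finset.sum_sub_distrib, ← Finset.sum_sub_distrib, Finset.mul_sum]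
          exact Finset.sum_congr rfl fun a _ => by ring
        rw [e1, ← Finset.sum_sub_distrib]
        refine Finset.sum_le_sum fun a _ => ?_
        simp only [hU]
        nlinarith [sq_nonneg (∑ c, m a c (σ c) - ∑ c, m a c ((σ * swap i j) c))]
      set D := ∑ a, (h a + ∑ c, m a c (σ c)) ^ 2 - ∑ a, (h a + ∑ c, m a c ((σ * swap i j) c)) ^ 2
      set p := z i (σ i)
      set q := z j (σ j)
      set r := z i (σ j)
      set s := z j (σ i)
      have h3 : (max D 0) ^ 2 ≤ (2 * (p + q - r - s)) ^ 2 := by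
        rcases le_total D 0 with hD | hD
        · rw [max_eq_right hD]; simp only [ne_eq, OfNat.ofNat_ne_zero, not_false_eq_true, zero_pow]; exact sq_nonneg _
        · rw [max_eq_left hD]; exact pow_le_pow_left₀ hD e 2
      nlinarith [sq_nonneg (p - q), sq_nonneg (p + r), sq_nonneg (p + s), sq_nonneg (q + r), sq_nonneg (q + s), sq_nonneg (r - s)]
    refine (Finset.sum_le_sum fun a _ => Finset.sum_le_sum fun b _ => key a b).trans ?_
    have e1 : ∑ i, z i (σ i) ^ 2 ≤ κ * ∑ a, U a ^ 2 := hop σ U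
    have e2 : (∑ i, ∑ k, z i k ^ 2) / Fintype.card α ≤ κ * ∑ a, U a ^ 2 := by
      rw [← av_marg1 (fun i k => z i k ^ 2)]
      refine (av_mono fun ρ => hop ρ U).trans ?_
      rw [av_const]
    have e2' : (∑ i, ∑ k, z i k ^ 2) ≤ Fintype.card α * (κ * ∑ a, U a ^ 2) := by
      rw [div_le_iff₀ hc] at e2; linarith
    have e3 : ∑ i, ∑ j, z i (σ j) ^ 2 = ∑ i, ∑ k, z i k ^ 2 :=
      Finset.sum_congr rfl fun i _ => Equiv.sum_comp σ (fun k => z i k ^ 2)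
    have e4 : ∑ i, ∑ j, z j (σ i) ^ 2 = ∑ i, ∑ k, z i k ^ 2 := by rw [Finset.sum_comm, e3]
    simp only [← Finset.mul_sum, Finset.sum_add_distrib, Finset.sum_const, Finset.card_univ, nsmul_eq_mul, e3, e4]
    have e5 := mul_le_mul_of_nonneg_left e1 hc.le
    have : ∑ a, (h a + ∑ i, m a i (σ i)) ^ 2 = ∑ a, U a ^ 2 := rfl
    rw [this]
    linarith)
  refine this.mono (fun _ => le_rfl) ?_ (by linarith)
  refine mul_le_mul_of_nonneg_left ?_ (by norm_num)
  rw [av_sum]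
  exact Finset.sum_le_sum fun a _ => av_sq_le hα (h a) (m a)

end lemQ


section classC
set_option linter.unusedSectionVars false
open Equiv
variable {α : Type} [Fintype α] [DecidableEq α]

structure CC (c : α → α → α → α → ℝ) (β : ℝ) : Prop where
  diag : ∀ a i k, c a i k k = 0
  zero : ∀ a i k, ∑ l, c a i k l = 0
  op : ∀ (σ ρ : Perm α) (x : α → ℝ), ∑ i, (∑ a, x a * c a i (σ a) (ρ i)) ^ 2 ≤ β * ∑ a, x a ^ 2

noncomputable def Vc (c : α → α → α → α → ℝ) : ℝ := (∑ a, ∑ i, ∑ k, ∑ l, c a i k l ^ 2) / (Fintype.card α : ℝ) ^ 2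

lemma Vc_nonneg (c : α → α → α → α → ℝ) : 0 ≤ Vc c := by unfold Vc; positivity

def OpB (c : α → α → α → α → ℝ) (β : ℝ) : Prop :=
  ∀ (σ ρ : Perm α) (x : α → ℝ), ∑ i, (∑ a, x a * c a i (σ a) (ρ i)) ^ 2 ≤ β * ∑ a, x a ^ 2

lemma OpB.avg [Nonempty α] {c : α → α → α → α → ℝ} {β : ℝ} (h : OpB c β) (σ : Perm α) (x : α → ℝ) :
    ∑ i, ∑ l, (∑ a, x a * c a i (σ a) l) ^ 2 ≤ Fintype.card α * (β * ∑ a, x a ^ 2) := by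
  have hc : (0:ℝ) < Fintype.card α := by exact_mod_cast Fintype.card_pos
  have e2 : (∑ i, ∑ l, (∑ a, x a * c a i (σ a) l) ^ 2) / Fintype.card α ≤ β * ∑ a, x a ^ 2 := by
    rw [← av_marg1 (fun i l => (∑ a, x a * c a i (σ a) l) ^ 2)]
    refine (av_mono fun ρ => h σ ρ x).trans ?_
    rw [av_const]
  rw [div_le_iff₀ hc] at e2; linarith

lemma OpB.row {c : α → α → α → α → ℝ} {β : ℝ} (h : OpB c β) (a k : α) (ρ : Perm α) :
    ∑ i, c a i k (ρ i) ^ 2 ≤ β := by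
  have := h (swap a k) ρ (fun b => if b = a then 1 else 0)
  simpa using this

lemma OpB.rowavg [Nonempty α] {c : α → α → α → α → ℝ} {β : ℝ} (h : OpB c β) (a k : α) :
    ∑ i, ∑ l, c a i k l ^ 2 ≤ Fintype.card α * β := by
  have := h.avg (swap a k) (fun b => if b = a then 1 else 0)
  simpa using this

lemma OpB.nonneg [Nonempty α] {c : α → α → α → α → ℝ} {β : ℝ} (h : OpB c β) : 0 ≤ β := by
  obtain ⟨a⟩ := ‹Nonempty α›
  exact le_trans (Finset.sum_nonneg fun _ _ => sq_nonneg _) (h.row a a 1)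

lemma OpB.mono {c : α → α → α → α → ℝ} {β β' : ℝ} (h : OpB c β) (hb : β ≤ β') : OpB c β' := fun σ ρ x =>
  (h σ ρ x).trans (mul_le_mul_of_nonneg_right hb (Finset.sum_nonneg fun _ _ => sq_nonneg _))

lemma OpB.sub {c d : α → α → α → α → ℝ} {β β' : ℝ} (h : OpB c β) (h' : OpB d β') :
    OpB (fun a i k l => c a i k l - d a i k l) (2 * β + 2 * β') := by
  intro σ ρ x
  have h1 := h σ ρ x
  have h2 := h' σ ρ x
  have h3 : ∑ i, (∑ a, x a * (c a i (σ a) (ρ i) - d a i (σ a) (ρ i))) ^ 2 ≤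
    2 * ∑ i, (∑ a, x a * c a i (σ a) (ρ i)) ^ 2 + 2 * ∑ i, (∑ a, x a * d a i (σ a) (ρ i)) ^ 2 := by
    rw [Finset.mul_sum, Finset.mul_sum, ← Finset.sum_add_distrib]
    refine Finset.sum_le_sum fun i _ => ?_
    simp only [mul_sub, Finset.sum_sub_distrib]
    nlinarith [sq_nonneg (∑ a, x a * c a i (σ a) (ρ i) + ∑ a, x a * d a i (σ a) (ρ i))]
  linarith

lemma Vc_sub (c d : α → α → α → α → ℝ) : Vc (fun a i k l => c a i k l - d a i k l) ≤ 2 * Vc c + 2 * Vc d := by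
  unfold Vc
  rw [mul_div_assoc', mul_div_assoc', ← add_div]
  refine div_le_div_of_nonneg_right ?_ (by positivity)
  simp only [Finset.mul_sum, ← Finset.sum_add_distrib]
  refine Finset.sum_le_sum fun a _ => Finset.sum_le_sum fun i _ => Finset.sum_le_sum fun k _ => Finset.sum_le_sum fun l _ => ?_
  nlinarith [sq_nonneg (c a i k l + d a i k l)]

/-- averaging over i in S -/
noncomputable def avI (c : α → α → α → α → ℝ) (S : Finset α) (s : ℝ) : α → α → α → α → ℝ :=
  fun a _ k l => s * ∑ j ∈ S, c a j k l

lemma OpB.avI [Nonempty α] {c : α → α → α → α → ℝ} {β : ℝ} (h : OpB c β) (S : Finset α) (s : ℝ) :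
    OpB (avI c S s) (s ^ 2 * S.card * Fintype.card α * β) := by
  intro σ ρ x
  have h1 := h.avg σ x
  have e : ∀ l, (∑ a, x a * _root_.avI c S s a l (σ a) l) ^ 2 ≤ s ^ 2 * (S.card * ∑ j, (∑ a, x a * c a j (σ a) l) ^ 2) := by
    intro l
    have e1 : ∑ a, x a * _root_.avI c S s a l (σ a) l = s * ∑ j ∈ S, ∑ a, x a * c a j (σ a) l := by
      rw [Finset.sum_comm]
      simp only [_root_.avI, Finset.mul_sum]
      exact Finset.sum_congr rfl fun a _ => Finset.sum_congr rfl fun j _ => by ring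
    rw [e1, mul_pow]
    refine mul_le_mul_of_nonneg_left ?_ (sq_nonneg s)
    refine (sq_sum_le_card_mul_sum_sq (s := S) (f := fun j => ∑ a, x a * c a j (σ a) l)).trans ?_
    refine mul_le_mul_of_nonneg_left ?_ (by positivity)
    exact Finset.sum_le_sum_of_subset_of_nonneg (Finset.subset_univ S) fun _ _ _ => sq_nonneg _
  have e2 : ∑ i, (∑ a, x a * _root_.avI c S s a i (σ a) (ρ i)) ^ 2 = ∑ l, (∑ a, x a * _root_.avI c S s a l (σ a) l) ^ 2 :=
    Equiv.sum_comp ρ (fun l => (∑ a, x a * _root_.avI c S s a l (σ a) l) ^ 2)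
  rw [e2]
  refine (Finset.sum_le_sum fun l _ => e l).trans ?_
  rw [← Finset.mul_sum, ← Finset.mul_sum, Finset.sum_comm]
  have : 0 ≤ s ^ 2 * (S.card : ℝ) := by positivity
  have := mul_le_mul_of_nonneg_left h1 this
  linarith

lemma Vc_avI [Nonempty α] (c : α → α → α → α → ℝ) (S : Finset α) (s : ℝ) :
    Vc (avI c S s) ≤ s ^ 2 * S.card * Fintype.card α * Vc c := by
  unfold Vc
  rw [mul_div_assoc']
  refine div_le_div_of_nonneg_right ?_ (by positivity)
  rw [Finset.mul_sum]
  refine Finset.sum_le_sum fun a _ => ?_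
  have e : ∀ k l, avI c S s a a k l ^ 2 ≤ s ^ 2 * S.card * ∑ j, c a j k l ^ 2 := by
    intro k l
    unfold avI
    rw [mul_pow, mul_assoc]
    refine mul_le_mul_of_nonneg_left ?_ (sq_nonneg s)
    refine (sq_sum_le_card_mul_sum_sq (s := S)).trans ?_
    refine mul_le_mul_of_nonneg_left ?_ (by positivity)
    exact Finset.sum_le_sum_of_subset_of_nonneg (Finset.subset_univ S) fun _ _ _ => sq_nonneg _
  have e2 : ∑ i, ∑ k, ∑ l, avI c S s a i k l ^ 2 = Fintype.card α * ∑ k, ∑ l, avI c S s a a k l ^ 2 := by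
    rw [← nsmul_eq_mul, ← Finset.card_univ, ← Finset.sum_const]; rfl
  rw [e2]
  have e3 := Finset.sum_le_sum fun k (_ : k ∈ Finset.univ) => Finset.sum_le_sum fun l (_ : l ∈ Finset.univ) => e k l
  simp only [← Finset.mul_sum] at e3
  have e4 : ∑ k, ∑ l, ∑ j, c a j k l ^ 2 = ∑ j, ∑ k, ∑ l, c a j k l ^ 2 := by
    rw [Finset.sum_comm (s := (Finset.univ : Finset α)) (f := fun j k => ∑ l, c a j k l ^ 2)]
    exact Finset.sum_congr rfl fun k _ => Finset.sum_comm
  rw [e4] at e3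
  have hc : (0:ℝ) ≤ Fintype.card α := by positivity
  have := mul_le_mul_of_nonneg_left e3 hc
  linarith

lemma lemC [Nonempty α] {c : α → α → α → α → ℝ} {β : ℝ} (hop : OpB c β) (hz : ∀ a i k, ∑ l, c a i k l = 0)
    (G : Finset α) (n : ℝ) (hn : n = Fintype.card α - G.card) (hn2 : 2 ≤ n) (hnN : Fintype.card α ≤ 2 * n)
    (A β1 : ℝ) (hβ1 : 0 ≤ β1)
    (hA : MB (fun σ : Perm α => ∑ a ∈ G, (∑ i ∈ G, (c a i (σ a) (σ i) - avI c Gᶜ (1/n) a i (σ a) (σ i))) ^ 2) A β1) :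
    MB (fun σ : Perm α => ∑ a ∈ G, (∑ i, c a i (σ a) (σ i)) ^ 2) (2 * A + 16 * Vc c) (4 * β1 + 128 * β) := by
  have hc : (0:ℝ) < Fintype.card α := by exact_mod_cast Fintype.card_pos
  have hβ := hop.nonneg
  have hn0 : 0 < n := by linarith
  set q : α → α → ℝ := fun a k => if a ∈ G then 4 / Fintype.card α * ∑ i, ∑ l, c a i k l ^ 2 else 0 with hq
  have hq0 : ∀ a k, 0 ≤ q a k := by
    intro a k; simp only [hq]; split_ifs <;> positivity
  have hq1 : ∀ a k, q a k ≤ 4 * β := by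
    intro a k; simp only [hq]; split_ifs
    · have := hop.rowavg a k
      rw [div_mul_eq_mul_div, div_le_iff₀ hc]; linarith
    · positivity
  have hNL := NL q (4 * β) hq0 hq1
  have hsum := ((hA.mono (β' := max β1 (32 * β)) (fun _ => le_rfl) le_rfl (le_max_left _ _)).add
    (hNL.mono (β' := max β1 (32 * β)) (fun _ => le_rfl) le_rfl (by
      refine le_trans (le_of_eq ?_) (le_max_right _ _); ring))).smul 2 (by norm_num)
  have hqV : 2 / Fintype.card α * ∑ a, ∑ k, q a k ≤ 8 * Vc c := by
    have e1 : ∑ a, ∑ k, q a k ≤ ∑ a, ∑ k, 4 / Fintype.card α * ∑ i, ∑ l, c a i k l ^ 2 := by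
      refine Finset.sum_le_sum fun a _ => Finset.sum_le_sum fun k _ => ?_
      simp only [hq]; split_ifs
      · exact le_rfl
      · positivity
    refine (mul_le_mul_of_nonneg_left e1 (by positivity)).trans (le_of_eq ?_)
    simp only [← Finset.mul_sum]
    have : ∑ a, ∑ k, ∑ i, ∑ l, c a i k l ^ 2 = ∑ a, ∑ i, ∑ k, ∑ l, c a i k l ^ 2 :=
      Finset.sum_congr rfl fun a _ => Finset.sum_comm
    rw [this]
    unfold Vc
    field_simp; ring
  have hmax : max β1 (32 * β) ≤ β1 + 32 * β := max_le (by linarith) (by linarith)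
  have hM := hsum.mono (β' := 4 * β1 + 128 * β) (A' := 2 * A + 16 * Vc c) (fun _ => le_rfl) (by linarith) (by linarith)
  refine MB.cond (p := fun x => x ∉ G) ?_ hM
  intro σ
  have hcard : (Fintype.card {x // x ∉ G} : ℝ) = n := by
    rw [hn, Fintype.card_subtype_compl, Nat.cast_sub (Fintype.card_subtype_le _)]
    simp
  have hsplit : ∀ f : α → ℝ, ∑ i, f i = ∑ i ∈ G, f i + ∑ i : {x // x ∉ G}, f i := by
    intro f
    rw [← Finset.sum_add_sum_compl G f]
    congr 1
    exact Finset.sum_subtype Gᶜ (by simp) f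
  have hQ := lemQ (α := {x // x ∉ G}) (A := {x // x ∈ G}) (by
      have : (2:ℝ) ≤ Fintype.card {x // x ∉ G} := by rw [hcard]; exact hn2
      exact_mod_cast this)
    (fun a => ∑ i ∈ G, c a i (σ a) (σ i)) (fun a i k => c a i (σ a) (σ k)) β (by
      intro ρ x
      have h1 := hop σ (σ * Perm.ofSubtype ρ) (fun a => if h : a ∈ G then x ⟨a, h⟩ else 0)
      have hs1 : ∀ F : α → ℝ, ∑ a, (if h : a ∈ G then x ⟨a, h⟩ else 0) * F a = ∑ a : {x // x ∈ G}, x a * F a := by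
        intro F
        rw [hsplit]
        have e1 : ∑ i : {x // x ∉ G}, (if h : (i:α) ∈ G then x ⟨i, h⟩ else 0) * F i = 0 :=
          Finset.sum_eq_zero fun i _ => by rw [dif_neg i.2, zero_mul]
        rw [e1, add_zero, Finset.sum_subtype G (fun _ => Iff.rfl)]
        exact Finset.sum_congr rfl fun a _ => by rw [dif_pos a.2]
      have hs2 : ∑ a, (if h : a ∈ G then x ⟨a, h⟩ else 0) ^ 2 = ∑ a, x a ^ 2 := by
        have := hs1 (fun a => if h : a ∈ G then x ⟨a, h⟩ else 0)
        simp only [sq]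
        rw [this]
        exact Finset.sum_congr rfl fun a _ => by rw [dif_pos a.2]
      rw [hs2] at h1
      simp only [hs1] at h1
      refine le_trans ?_ h1
      rw [hsplit]
      refine le_trans (le_of_eq ?_) (le_add_of_nonneg_left (Finset.sum_nonneg fun _ _ => sq_nonneg _))
      refine Finset.sum_congr rfl fun i _ => ?_
      rw [Perm.mul_apply, Perm.ofSubtype_apply_coe])
  refine hQ.mono ?_ ?_ (by linarith)
  · intro ρ
    refine le_of_eq ?_
    have hfix : ∀ a ∈ G, (σ * Perm.ofSubtype ρ) a = σ a := fun a ha => by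
      rw [Perm.mul_apply, Perm.ofSubtype_apply_of_not_mem ρ (by simpa using ha)]
    rw [Finset.sum_subtype G (fun _ => Iff.rfl)]
    refine Finset.sum_congr rfl fun a _ => ?_
    rw [hfix a a.2, hsplit]
    congr 2
    · exact Finset.sum_congr rfl fun i hi => by rw [hfix i hi]
    · exact Finset.sum_congr rfl fun i _ => by rw [Perm.mul_apply, Perm.ofSubtype_apply_coe]
  · rw [hcard]
    refine mul_le_mul_of_nonneg_left ?_ (by norm_num)
    have eq1 : ∑ a, q a (σ a) = ∑ a ∈ G, 4 / Fintype.card α * ∑ i, ∑ l, c a i (σ a) l ^ 2 := by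
      simp only [hq, Finset.sum_ite_mem, Finset.univ_inter]
    rw [eq1, ← Finset.sum_add_distrib, Finset.sum_subtype G (fun _ => Iff.rfl)]
    refine Finset.sum_le_sum fun a _ => ?_
    have f1 : (∑ i ∈ G, c a i (σ a) (σ i)) + (∑ i : {x // x ∉ G}, ∑ k : {x // x ∉ G}, c a i (σ a) (σ k)) / n =
       ∑ i ∈ G, (c a i (σ a) (σ i) - avI c Gᶜ (1/n) a i (σ a) (σ i)) := by
      rw [Finset.sum_sub_distrib, sub_eq_add_neg]
      congr 1
      have g1 : ∀ i : α, ∑ k : {x // x ∉ G}, c a i (σ a) (σ k) = - ∑ k ∈ G, c a i (σ a) (σ k) := by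
        intro i
        have := hsplit (fun k => c a i (σ a) (σ k))
        rw [Equiv.sum_comp σ (fun k => c a i (σ a) k), hz] at this
        linarith
      simp only [g1, avI, ← Finset.mul_sum]
      rw [Finset.sum_comm, Finset.sum_neg_distrib, Finset.sum_subtype Gᶜ (p := fun x => x ∉ G) (by simp) (fun j => ∑ i ∈ G, c a j (σ a) (σ i))]
      ring
    rw [f1]
    refine add_le_add le_rfl ?_
    have f2 : ∑ i : {x // x ∉ G}, ∑ k : {x // x ∉ G}, c a i (σ a) (σ k) ^ 2 ≤ ∑ i, ∑ l, c a i (σ a) l ^ 2 := by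
      rw [hsplit (fun i => ∑ l, c a i (σ a) l ^ 2)]
      refine le_trans ?_ (le_add_of_nonneg_left (by positivity))
      refine Finset.sum_le_sum fun i _ => ?_
      rw [← Equiv.sum_comp σ (fun l => c a i (σ a) l ^ 2), hsplit (fun l => c a i (σ a) (σ l) ^ 2)]
      exact le_add_of_nonneg_left (by positivity)
    have f3 : 2 / n ≤ 4 / Fintype.card α := by
      rw [div_le_div_iff₀ hn0 hc]; linarith
    exact mul_le_mul f3 f2 (by positivity) (by positivity)

end classC


section small
open Equiv
set_option linter.unusedSectionVars false
variable {α : Type} [Fintype α] [DecidableEq α]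

lemma av_sq_le_av {ι : Type*} [Fintype ι] [Nonempty ι] (f : ι → ℝ) : (av f) ^ 2 ≤ av (fun i => f i ^ 2) := by
  have h : 0 ≤ av (fun i => (f i - av f) ^ 2) := av_nonneg fun i => sq_nonneg _
  have e : ∀ i, (f i - av f) ^ 2 = f i ^ 2 - 2 * av f * f i + av f ^ 2 := fun i => by ring
  rw [av_congr e, av_add, av_sub, av_mul_left, av_const] at h
  linarith

def flipE (a : α) : (α → Bool) ≃ (α → Bool) where
  toFun χ := Function.update χ a (!χ a)
  invFun χ := Function.update χ a (!χ a)
  left_inv χ := by simp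
  right_inv χ := by simp

lemma av_color (a i : α) (h : a ≠ i) :
    av (fun χ : α → Bool => (if χ a then (1:ℝ) else 0) * (if χ i then 0 else 1)) = 1 / 4 := by
  set f : (α → Bool) → ℝ := fun χ => (if χ a then (1:ℝ) else 0) * (if χ i then 0 else 1) with hf
  have h1 : av (fun χ => f (flipE a χ)) = av f := av_equiv_self _ _
  have h2 : av (fun χ => f (flipE i χ)) = av f := av_equiv_self _ _
  have h3 : av (fun χ => f (flipE a (flipE i χ))) = av f := by
    exact (av_equiv_self (flipE i) (fun χ => f (flipE a χ))).trans h1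
  have h4 : av (fun χ => f χ + f (flipE a χ) + f (flipE i χ) + f (flipE a (flipE i χ))) = 1 := by
    rw [← av_const (ι := α → Bool) 1]
    refine av_congr fun χ => ?_
    simp only [hf, flipE, Equiv.coe_fn_mk, Function.update_self, Function.update_of_ne h, Function.update_of_ne h.symm]
    cases χ a <;> cases χ i <;> simp
  rw [av_add, av_add, av_add, h1, h2, h3] at h4
  linarith

/-- decoupling -/
lemma decouple (c : α → α → ℝ) (I : Finset α) (hd : ∀ a, c a a = 0) :
    ∑ a ∈ I, (∑ i ∈ I, c a i) ^ 2 ≤ 16 * av (fun χ : α → Bool =>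
      ∑ a ∈ I.filter (fun a => χ a = true), (∑ i ∈ I.filter (fun i => χ i = false), c a i) ^ 2) := by
  have h1 : ∀ a, (∑ i ∈ I, c a i) = 4 * av (fun χ : α → Bool => (if χ a then (1:ℝ) else 0) * ∑ i ∈ I.filter (fun i => χ i = false), c a i) := by
    intro a
    have e : ∀ χ : α → Bool, (if χ a then (1:ℝ) else 0) * ∑ i ∈ I.filter (fun i => χ i = false), c a i =
       ∑ i ∈ I, ((if χ a then (1:ℝ) else 0) * (if χ i then 0 else 1)) * c a i := by
      intro χ
      rw [Finset.sum_filter, Finset.mul_sum]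
      refine Finset.sum_congr rfl fun i _ => ?_
      cases χ i <;> simp
    rw [av_congr e, av_sum, Finset.mul_sum]
    refine Finset.sum_congr rfl fun i _ => ?_
    rw [av_mul_right]
    by_cases hai : a = i
    · subst hai; simp [hd]
    · rw [av_color a i hai]; ring
  have h2 : ∀ a, (∑ i ∈ I, c a i) ^ 2 ≤ 16 * av (fun χ : α → Bool => (if χ a then (1:ℝ) else 0) * (∑ i ∈ I.filter (fun i => χ i = false), c a i) ^ 2) := by
    intro a
    rw [h1, mul_pow]
    have := av_sq_le_av (fun χ : α → Bool => (if χ a then (1:ℝ) else 0) * ∑ i ∈ I.filter (fun i => χ i = false), c a i)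
    have e : ∀ χ : α → Bool, ((if χ a then (1:ℝ) else 0) * ∑ i ∈ I.filter (fun i => χ i = false), c a i) ^ 2 =
      (if χ a then (1:ℝ) else 0) * (∑ i ∈ I.filter (fun i => χ i = false), c a i) ^ 2 := by
      intro χ
      split_ifs <;> simp
    rw [av_congr e] at this
    linarith
  refine (Finset.sum_le_sum fun a _ => h2 a).trans (le_of_eq ?_)
  rw [← Finset.mul_sum, ← av_sum]
  congr 1
  refine av_congr fun χ => ?_
  rw [Finset.sum_filter]
  refine Finset.sum_congr rfl fun a _ => ?_
  split_ifs <;> simp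

lemma small_phi (N n s : ℝ) (hN : 0 < N) (hs : 128 * s ≤ N) (_hs0 : 0 ≤ s) (hn : 127 * N ≤ 128 * n) :
    (1 / n) ^ 2 * s * N ≤ 1 / 100 := by
  have hn0 : 0 < n := by linarith
  rw [show (1 / n) ^ 2 * s * N = s * N / n ^ 2 by field_simp, div_le_iff₀ (by positivity)]
  nlinarith

lemma small [Nonempty α] (hα : 20 ≤ Fintype.card α) : ∀ (m : ℕ) (I : Finset α), I.card = m → (m ≤ 1 ∨ 128 * m ≤ Fintype.card α) →
    ∀ (c : α → α → α → α → ℝ) (β : ℝ), CC c β →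
    MB (fun σ : Perm α => ∑ a ∈ I, (∑ i ∈ I, c a i (σ a) (σ i)) ^ 2) (512 * Vc c) (8192 * β) := by
  intro m
  induction m using Nat.strong_induction_on with
  | _ m ih =>
  intro I hI hm c β hc
  have hop : OpB c β := hc.op
  have hβ := hop.nonneg
  have hV := Vc_nonneg c
  by_cases hm1 : m ≤ 1
  · have h0 : MB (fun _ : Perm α => (0:ℝ)) 0 0 := MB.const 0 0
    refine h0.mono (fun σ => le_of_eq ?_) (by positivity) (by positivity)
    refine Finset.sum_eq_zero fun a ha => ?_
    rw [Finset.sum_eq_zero, zero_pow (by norm_num)]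
    intro i hi
    have : i = a := Finset.card_le_one.mp (by omega) i hi a ha
    rw [this, hc.diag]
  have hm2 : 128 * m ≤ Fintype.card α := by omega
  have hNpos : (0:ℝ) < Fintype.card α := by exact_mod_cast Fintype.card_pos
  have hN20 : (20:ℝ) ≤ Fintype.card α := by exact_mod_cast hα
  have hmR : 128 * (m:ℝ) ≤ Fintype.card α := by exact_mod_cast hm2
  -- main claim for each χ
  have key : ∀ χ : α → Bool, MB (fun σ : Perm α => ∑ a ∈ I.filter (fun a => χ a = true), (∑ i ∈ I.filter (fun i => χ i = false), c a i (σ a) (σ i)) ^ 2)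
      (32 * Vc c) (512 * β) := by
    intro χ
    set I1 := I.filter (fun a => χ a = true) with hI1
    set I2 := I.filter (fun a => χ a = false) with hI2
    have hcards : I1.card + I2.card = m := by
      rw [← hI, ← Finset.card_filter_add_card_filter_not (s := I) (fun a => χ a = true)]
      simp [hI1, hI2]
    by_cases h2 : I2.card = 0
    · have h0 : MB (fun _ : Perm α => (0:ℝ)) 0 0 := MB.const 0 0
      refine h0.mono (fun σ => le_of_eq ?_) (by positivity) (by positivity)
      rw [Finset.card_eq_zero.mp h2]
      simp
    set c1 : α → α → α → α → ℝ := fun a i k l => if i ∈ I2 then c a i k l else 0 with hc1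
    set n : ℝ := Fintype.card α - I1.card with hn
    have hI1R : (I1.card : ℝ) ≤ m := by exact_mod_cast (by omega : I1.card ≤ m)
    have hI2R : (I2.card : ℝ) ≤ m := by exact_mod_cast (by omega : I2.card ≤ m)
    have hphi := small_phi (Fintype.card α) n I2.card hNpos (by linarith) (by positivity) (by linarith)
    set φ := (1 / n) ^ 2 * I2.card * Fintype.card α with hφ
    have hop1 : OpB c1 β := by
      intro σ ρ x
      refine le_trans ?_ (hop σ ρ x)
      refine Finset.sum_le_sum fun i _ => ?_
      by_cases hi : i ∈ I2
      · simp [hc1, hi]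
      · simp only [hc1, hi, if_false, mul_zero, Finset.sum_const_zero]
        rw [zero_pow (by norm_num)]; exact sq_nonneg _
    have hz1 : ∀ a i k, ∑ l, c1 a i k l = 0 := by
      intro a i k
      by_cases hi : i ∈ I2
      · simp [hc1, hi, hc.zero]
      · simp [hc1, hi]
    have hCE : CC (avI c I2 (1/n)) (φ * β) := by
      refine ⟨?_, ?_, hop.avI I2 (1/n)⟩
      · intro a i k
        simp [avI, hc.diag]
      · intro a i k
        simp only [avI]
        rw [← Finset.mul_sum, Finset.sum_comm]
        simp [hc.zero]
    have hIH := ih I1.card (by omega) I1 rfl (by omega) _ _ hCE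
    have hVE := Vc_avI c I2 (1/n)
    rw [← hφ] at hVE
    have hA : MB (fun σ : Perm α => ∑ a ∈ I1, (∑ i ∈ I1, (c1 a i (σ a) (σ i) - avI c1 I1ᶜ (1/n) a i (σ a) (σ i))) ^ 2)
      (512 / 100 * Vc c) (8192 / 100 * β) := by
      refine hIH.mono (fun σ => le_of_eq ?_) ?_ ?_
      · refine Finset.sum_congr rfl fun a _ => ?_
        rw [← neg_sq, ← Finset.sum_neg_distrib]
        congr 1
        refine Finset.sum_congr rfl fun i hi => ?_
        have hi2 : i ∉ I2 := by
          simp only [hI1, hI2, Finset.mem_filter] at hi ⊢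
          simp [hi.2]
        have : avI c1 I1ᶜ (1/n) a i (σ a) (σ i) = avI c I2 (1/n) a i (σ a) (σ i) := by
          simp only [avI]
          congr 1
          simp only [hc1]
          rw [Finset.sum_ite_mem]
          refine Finset.sum_congr ?_ fun _ _ => rfl
          ext j
          simp only [hI1, hI2, Finset.mem_inter, Finset.mem_compl, Finset.mem_filter]
          cases χ j <;> simp
        rw [this]
        simp [hc1, hi2]
      · nlinarith
      · nlinarith
    have hC := lemC hop1 hz1 I1 n hn (by linarith) (by linarith) _ _ (by positivity) hA
    have hVc1 : Vc c1 ≤ Vc c := by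
      unfold Vc
      refine div_le_div_of_nonneg_right ?_ (by positivity)
      refine Finset.sum_le_sum fun a _ => Finset.sum_le_sum fun i _ => Finset.sum_le_sum fun k _ => Finset.sum_le_sum fun l _ => ?_
      simp only [hc1]
      split_ifs
      · exact le_rfl
      · simp only [ne_eq, OfNat.ofNat_ne_zero, not_false_eq_true, zero_pow]; positivity
    refine hC.mono (fun σ => le_of_eq ?_) (by linarith) (by linarith)
    refine Finset.sum_congr rfl fun a _ => ?_
    congr 1
    simp only [hc1]
    rw [Finset.sum_ite_mem, Finset.univ_inter]
  have := (MB.avg key).smul 16 (by norm_num)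
  refine this.mono (fun σ => ?_) (by linarith) (by linarith)
  exact decouple (fun a i => c a i (σ a) (σ i)) I (fun a => hc.diag _ _ _)

lemma block_card (N : ℕ) (hN : 0 < N) (p : Fin 256) :
    let G : Finset (Fin N) := Finset.univ.filter (fun a => a.val % 256 = p.val)
    G.card ≤ 1 ∨ 128 * G.card ≤ N := by
  intro G
  have h : G.card ≤ (N - 1) / 256 + 1 := by
    rw [← Finset.card_range ((N - 1) / 256 + 1)]
    refine Finset.card_le_card_of_injOn (fun a => a.val / 256) ?_ ?_
    · intro a _
      have := a.2
      simp only [Finset.coe_range, Set.mem_Iio]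
      omega
    · intro a ha b hb hab
      simp only [G, Finset.coe_filter, Set.mem_ofPred_eq, Finset.mem_univ, true_and] at ha hb hab
      ext
      omega
  omega

lemma topM (N : ℕ) (hN : 20 ≤ N) (c : Fin N → Fin N → Fin N → Fin N → ℝ) (β : ℝ) (hc : CC c β) :
    MB (fun σ : Perm (Fin N) => ∑ a, (∑ i, c a i (σ a) (σ i)) ^ 2) (2 ^ 21 * Vc c) (2 ^ 26 * β) := by
  have : Nonempty (Fin N) := ⟨⟨0, by omega⟩⟩
  have hop : OpB c β := hc.op
  have hβ := hop.nonneg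
  have hV := Vc_nonneg c
  have hN20 : (20:ℝ) ≤ N := by exact_mod_cast hN
  have key : ∀ p : Fin 256, MB (fun σ : Perm (Fin N) => ∑ a ∈ Finset.univ.filter (fun a : Fin N => a.val % 256 = p.val), (∑ i, c a i (σ a) (σ i)) ^ 2)
      (6160 * Vc c) (196736 * β) := by
    intro p
    have hG := block_card N (by omega) p
    simp only at hG
    set G : Finset (Fin N) := Finset.univ.filter (fun a : Fin N => a.val % 256 = p.val) with hGdef
    set n : ℝ := (Fintype.card (Fin N) : ℝ) - G.card with hn
    have hG2 : 2 * G.card ≤ N - 4 := by omega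
    have hG3 : 2 * (G.card : ℝ) ≤ N - 4 := by
      have : 2 * G.card + 4 ≤ N := by omega
      have : 2 * (G.card : ℝ) + 4 ≤ N := by exact_mod_cast this
      linarith
    have hnN : (N:ℝ) ≤ 2 * n := by
      rw [hn, Fintype.card_fin]; linarith
    have hn0 : 0 < n := by linarith
    have hcompl : (Gᶜ.card : ℝ) = n := by
      rw [Finset.card_compl, Nat.cast_sub (Finset.card_le_univ G)]
    have hφ : (1 / n) ^ 2 * Gᶜ.card * Fintype.card (Fin N) ≤ 2 := by
      rw [hcompl, Fintype.card_fin, show (1 / n) ^ 2 * n * N = N / n by field_simp, div_le_iff₀ hn0]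
      exact hnN
    have hVE := Vc_avI c Gᶜ (1/n)
    have hOE := hop.avI Gᶜ (1/n)
    set φ := (1 / n) ^ 2 * Gᶜ.card * (Fintype.card (Fin N) : ℝ)
    have hC2 : CC (fun a i k l => c a i k l - avI c Gᶜ (1/n) a i k l) (6 * β) := by
      refine ⟨?_, ?_, (hop.sub hOE).mono (by nlinarith)⟩
      · intro a i k
        simp [avI, hc.diag]
      · intro a i k
        rw [Finset.sum_sub_distrib, hc.zero]
        simp only [avI]
        rw [← Finset.mul_sum, Finset.sum_comm]
        simp [hc.zero]
    have hV2 := Vc_sub c (avI c Gᶜ (1/n))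
    have hA := small (by simpa using hN) G.card G rfl (by simpa using hG) _ _ hC2
    have hC := lemC hop hc.zero G n hn (by linarith) (by rw [Fintype.card_fin]; exact hnN) _ _ (by positivity) hA
    exact hC.mono (fun _ => le_rfl) (by nlinarith) (by linarith)
  have := MB.sum key
  refine this.mono (fun σ => le_of_eq ?_) ?_ ?_
  · rw [← Finset.sum_fiberwise_of_maps_to (s := Finset.univ) (t := (Finset.univ : Finset (Fin 256)))
      (g := fun a : Fin N => (⟨a.val % 256, Nat.mod_lt _ (by norm_num)⟩ : Fin 256)) (fun _ _ => Finset.mem_univ _)]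
    refine Finset.sum_congr rfl fun p _ => ?_
    refine Finset.sum_congr ?_ fun _ _ => rfl
    ext a
    simp [Fin.ext_iff]
  · simp only [Finset.sum_const, Finset.card_univ, Fintype.card_fin, nsmul_eq_mul]
    push_cast
    linarith
  · rw [Fintype.card_fin]
    push_cast
    linarith

end small


section thmD
open Equiv
set_option linter.unusedSectionVars false

lemma MB.avg2 {ι κ : Type*} [Fintype ι] [Fintype κ] [Nonempty κ] {f : κ → ι → ℝ} {M : κ → ℝ} {A β : ℝ}
    (h : ∀ k, MB (f k) (M k) β) (h2 : MB M A β) :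
    MB (fun i => av (fun k => f k i)) A β := by
  intro l hl hlβ
  have h1 : ∀ i, Real.exp (l * av (fun k => f k i)) ≤ av (fun k => Real.exp (l * f k i)) := by
    intro i
    rw [← av_mul_left]; exact exp_av_le _
  refine (av_mono h1).trans ?_
  rw [av_comm]
  exact (av_mono fun k => h k l hl hlβ).trans (h2 l hl hlβ)

variable {N : ℕ}

structure EE (e : Fin N → Fin N → Fin N → Fin N → ℝ) (β V : ℝ) : Prop where
  d1 : ∀ a k l, e a a k l = 0
  d2 : ∀ a i k, e a i k k = 0
  op : OpB e β
  rb : ∀ a k, (∑ j, ∑ l, e a j k l) ^ 2 ≤ β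
  v1 : Vc e ≤ V
  v2 : (∑ a, ∑ k, (∑ j, ∑ l, e a j k l) ^ 2) / (N:ℝ) ^ 2 ≤ V

lemma ratio_le (hN : 20 ≤ N) : (N:ℝ) ^ 2 / ((N:ℝ) - 1) ^ 2 ≤ 2 := by
  have hN20 : (20:ℝ) ≤ N := by exact_mod_cast hN
  rw [div_le_iff₀ (by nlinarith)]
  nlinarith

lemma sum_mid {e : Fin N → Fin N → Fin N → Fin N → ℝ} {β : ℝ} (hN : 20 ≤ N) (h : OpB e β) :
    OpB (fun a i k _ => (∑ l', e a i k l') / ((N:ℝ) - 1)) (2 * β) := by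
  have : Nonempty (Fin N) := ⟨⟨0, by omega⟩⟩
  have hβ := h.nonneg
  have hN20 : (20:ℝ) ≤ N := by exact_mod_cast hN
  intro σ ρ x
  have h1 := h.avg σ x
  rw [Fintype.card_fin] at h1
  have e1 : ∀ i, (∑ a, x a * ((∑ l', e a i (σ a) l') / ((N:ℝ) - 1))) ^ 2 ≤ N / ((N:ℝ) - 1) ^ 2 * ∑ l, (∑ a, x a * e a i (σ a) l) ^ 2 := by
    intro i
    have e2 : ∑ a, x a * ((∑ l', e a i (σ a) l') / ((N:ℝ) - 1)) = (∑ l, ∑ a, x a * e a i (σ a) l) / ((N:ℝ) - 1) := by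
      rw [Finset.sum_comm, Finset.sum_div]
      refine Finset.sum_congr rfl fun a _ => ?_
      rw [← Finset.mul_sum]; ring
    rw [e2, div_pow, div_mul_eq_mul_div]
    refine div_le_div_of_nonneg_right ?_ (sq_nonneg _)
    have := sq_sum_le_card_mul_sum_sq (s := (Finset.univ : Finset (Fin N))) (f := fun l => ∑ a, x a * e a i (σ a) l)
    simpa using this
  refine (Finset.sum_le_sum fun i _ => e1 i).trans ?_
  rw [← Finset.mul_sum]
  refine (mul_le_mul_of_nonneg_left h1 (by positivity)).trans ?_
  have h3 : 0 ≤ β * ∑ a, x a ^ 2 := by positivity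
  have := mul_le_mul_of_nonneg_right (ratio_le hN) h3
  refine le_trans (le_of_eq ?_) (this.trans (le_of_eq (by ring)))
  ring

lemma sum_diag {e : Fin N → Fin N → Fin N → Fin N → ℝ} {β : ℝ} (hN : 20 ≤ N) (h : OpB e β) :
    OpB (fun a i k l => if k = l then (∑ l', e a i k l') / ((N:ℝ) - 1) else 0) (2 * β) := by
  have : Nonempty (Fin N) := ⟨⟨0, by omega⟩⟩
  have hβ := h.nonneg
  have hN20 : (20:ℝ) ≤ N := by exact_mod_cast hN
  intro σ ρ x
  have hs : ∀ a i k, ((∑ l', e a i k l') / ((N:ℝ) - 1)) ^ 2 ≤ 2 * β := by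
    intro a i k
    have h1 := h.rowavg a k
    rw [Fintype.card_fin] at h1
    have h2 : ∑ l, e a i k l ^ 2 ≤ N * β :=
      (Finset.single_le_sum (f := fun i => ∑ l, e a i k l ^ 2) (fun _ _ => Finset.sum_nonneg fun _ _ => sq_nonneg _) (Finset.mem_univ i)).trans h1
    have h3 := sq_sum_le_card_mul_sum_sq (s := (Finset.univ : Finset (Fin N))) (f := fun l => e a i k l)
    rw [Finset.card_univ, Fintype.card_fin] at h3
    rw [div_pow, div_le_iff₀ (by nlinarith)]
    have h4 := ratio_le hN
    rw [div_le_iff₀ (by nlinarith)] at h4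
    nlinarith [mul_le_mul_of_nonneg_left h2 (by positivity : (0:ℝ) ≤ N), mul_le_mul_of_nonneg_right h4 hβ]
  have e1 : ∀ i, (∑ a, x a * (if σ a = ρ i then (∑ l', e a i (σ a) l') / ((N:ℝ) - 1) else 0)) ^ 2 ≤ 2 * β * x ((σ⁻¹ * ρ) i) ^ 2 := by
    intro i
    have e2 : ∑ a, x a * (if σ a = ρ i then (∑ l', e a i (σ a) l') / ((N:ℝ) - 1) else 0) =
       x ((σ⁻¹ * ρ) i) * ((∑ l', e ((σ⁻¹ * ρ) i) i (ρ i) l') / ((N:ℝ) - 1)) := by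
      rw [Finset.sum_eq_single ((σ⁻¹ * ρ) i)]
      · simp
      · intro b _ hb
        rw [if_neg, mul_zero]
        intro hbe
        apply hb
        rw [Perm.mul_apply, ← hbe]; simp
      · simp
    rw [e2, mul_pow, mul_comm]
    exact mul_le_mul_of_nonneg_right (hs _ _ _) (sq_nonneg _)
  refine (Finset.sum_le_sum fun i _ => e1 i).trans (le_of_eq ?_)
  rw [← Finset.mul_sum, Equiv.sum_comp (σ⁻¹ * ρ) (fun a => x a ^ 2)]

noncomputable def hatc (e : Fin N → Fin N → Fin N → Fin N → ℝ) : Fin N → Fin N → Fin N → Fin N → ℝ := fun a i k l =>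
  e a i k l - ((∑ l', e a i k l') / ((N:ℝ) - 1) - if k = l then (∑ l', e a i k l') / ((N:ℝ) - 1) else 0)

lemma hatc_CC {e : Fin N → Fin N → Fin N → Fin N → ℝ} {β V : ℝ} (hN : 20 ≤ N) (h : EE e β V) : CC (hatc e) (18 * β) := by
  have hN20 : (20:ℝ) ≤ N := by exact_mod_cast hN
  refine ⟨?_, ?_, ?_⟩
  · intro a i k
    simp [hatc, h.d2]
  · intro a i k
    simp only [hatc, Finset.sum_sub_distrib, Finset.sum_ite_eq, Finset.mem_univ, if_true, Finset.sum_const, Finset.card_univ, Fintype.card_fin, nsmul_eq_mul]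
    have : (N:ℝ) - 1 ≠ 0 := by linarith
    field_simp; ring
  · have := h.op.sub ((sum_mid hN h.op).sub (sum_diag hN h.op))
    exact OpB.mono this (by linarith)

lemma hatc_V {e : Fin N → Fin N → Fin N → Fin N → ℝ} (hN : 20 ≤ N) : Vc (hatc e) ≤ 6 * Vc e := by
  have hN20 : (20:ℝ) ≤ N := by exact_mod_cast hN
  have h1 := Vc_sub e (fun a i k l => ((∑ l', e a i k l') / ((N:ℝ) - 1) - if k = l then (∑ l', e a i k l') / ((N:ℝ) - 1) else 0))
  refine h1.trans ?_
  have h2 : Vc (fun a i k l => ((∑ l', e a i k l') / ((N:ℝ) - 1) - if k = l then (∑ l', e a i k l') / ((N:ℝ) - 1) else 0)) ≤ 2 * Vc e := by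
    unfold Vc
    rw [mul_div_assoc']
    refine div_le_div_of_nonneg_right ?_ (by positivity)
    rw [Finset.mul_sum]
    refine Finset.sum_le_sum fun a _ => ?_
    rw [Finset.mul_sum]
    refine Finset.sum_le_sum fun i _ => ?_
    rw [Finset.mul_sum]
    refine Finset.sum_le_sum fun k _ => ?_
    have e1 : ∀ l : Fin N, ((∑ l', e a i k l') / ((N:ℝ) - 1) - if k = l then (∑ l', e a i k l') / ((N:ℝ) - 1) else 0) ^ 2 ≤ ((∑ l', e a i k l') / ((N:ℝ) - 1)) ^ 2 := by
      intro l
      split_ifs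
      · rw [sub_self, zero_pow (by norm_num)]; positivity
      · rw [sub_zero]
    refine (Finset.sum_le_sum fun l _ => e1 l).trans ?_
    rw [Finset.sum_const, Finset.card_univ, Fintype.card_fin, nsmul_eq_mul]
    have h3 := sq_sum_le_card_mul_sum_sq (s := (Finset.univ : Finset (Fin N))) (f := fun l => e a i k l)
    rw [Finset.card_univ, Fintype.card_fin] at h3
    have h4 := ratio_le hN
    have h5 : 0 ≤ ∑ l, e a i k l ^ 2 := by positivity
    calc (N:ℝ) * ((∑ l', e a i k l') / ((N:ℝ) - 1)) ^ 2 = N / ((N:ℝ) - 1) ^ 2 * (∑ l', e a i k l') ^ 2 := by rw [div_pow]; ring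
      _ ≤ N / ((N:ℝ) - 1) ^ 2 * (N * ∑ l, e a i k l ^ 2) := mul_le_mul_of_nonneg_left h3 (by positivity)
      _ = N ^ 2 / ((N:ℝ) - 1) ^ 2 * ∑ l, e a i k l ^ 2 := by ring
      _ ≤ _ := mul_le_mul_of_nonneg_right h4 h5
  linarith

lemma thmD1 {e : Fin N → Fin N → Fin N → Fin N → ℝ} {β V : ℝ} (hN : 20 ≤ N) (h : EE e β V) :
    MB (fun σ : Perm (Fin N) => ∑ a, (∑ j, e a j (σ a) (σ j)) ^ 2) (2 ^ 25 * V) (2 ^ 33 * β) := by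
  have : Nonempty (Fin N) := ⟨⟨0, by omega⟩⟩
  have hN20 : (20:ℝ) ≤ N := by exact_mod_cast hN
  have hβ := h.op.nonneg
  have hV : 0 ≤ V := (Vc_nonneg e).trans h.v1
  have hT := topM N hN _ _ (hatc_CC hN h)
  have hV2 := (hatc_V (e := e) hN).trans (mul_le_mul_of_nonneg_left h.v1 (by norm_num))
  set r : Fin N → Fin N → ℝ := fun a k => ∑ j, ∑ l, e a j k l with hr
  have hq := NL (fun a k => (r a k / ((N:ℝ) - 1)) ^ 2) β (fun _ _ => sq_nonneg _) (fun a k => by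
    rw [div_pow, div_le_iff₀ (by nlinarith)]
    have := h.rb a k
    have h2 : 1 ≤ ((N:ℝ) - 1) ^ 2 := by nlinarith
    nlinarith)
  have hqV : 2 / (Fintype.card (Fin N) : ℝ) * ∑ a, ∑ k, (r a k / ((N:ℝ) - 1)) ^ 2 ≤ V := by
    refine le_trans ?_ h.v2
    simp only [div_pow, ← Finset.sum_div, Fintype.card_fin]
    have h5 : 0 ≤ ∑ a, ∑ k, r a k ^ 2 := by positivity
    rw [div_mul_div_comm, div_le_div_iff₀ (by nlinarith [sq_nonneg ((N:ℝ) - 1)]) (by positivity)]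
    have h6 : 2 * (N:ℝ) ^ 2 ≤ N * ((N:ℝ) - 1) ^ 2 := by
      have : 2 * (N:ℝ) ≤ ((N:ℝ) - 1) ^ 2 := by nlinarith
      nlinarith
    have := mul_le_mul_of_nonneg_left h6 h5
    linarith
  have hs := ((hT.mono (β' := 2 ^ 31 * β) (A' := 2 ^ 21 * (6 * V)) (fun _ => le_rfl) (by linarith) (by linarith)).add
    (hq.mono (β' := 2 ^ 31 * β) (fun _ => le_rfl) hqV (by linarith))).smul 2 (by norm_num)
  refine hs.mono (fun σ => ?_) (by linarith) (by linarith)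
  rw [← Finset.sum_add_distrib, Finset.mul_sum]
  refine Finset.sum_le_sum fun a _ => ?_
  have e1 : ∑ j, e a j (σ a) (σ j) = ∑ j, hatc e a j (σ a) (σ j) + r a (σ a) / ((N:ℝ) - 1) := by
    simp only [hatc, Finset.sum_sub_distrib, hr, ← Finset.sum_div]
    have : ∑ x, (if σ a = σ x then (∑ l', e a x (σ a) l') / ((N:ℝ) - 1) else 0) = 0 := by
      refine Finset.sum_eq_zero fun x _ => ?_
      split_ifs with hx
      · rw [σ.injective hx]; simp [h.d1]
      · rfl
    rw [this]; ring
  rw [e1]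
  nlinarith [sq_nonneg (∑ j, hatc e a j (σ a) (σ j) - r a (σ a) / ((N:ℝ) - 1))]

lemma thmD2 {e : Fin N → Fin N → Fin N → Fin N → ℝ} {β V : ℝ} (hN : 20 ≤ N) (h : EE e β V) :
    MB (fun π : Perm (Fin N) => (∑ a, ∑ k, (∑ j, e a j k (π j)) ^ 2) / N) (10 * V) (128 * β) := by
  have : Nonempty (Fin N) := ⟨⟨0, by omega⟩⟩
  have hN20 : (20:ℝ) ≤ N := by exact_mod_cast hN
  have hN0 : (0:ℝ) < N := by linarith
  have hβ := h.op.nonneg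
  have hV : 0 ≤ V := (Vc_nonneg e).trans h.v1
  set r : Fin N → Fin N → ℝ := fun a k => ∑ j, ∑ l, e a j k l with hr
  have hQ := fun σ : Perm (Fin N) => lemQ (α := Fin N) (A := Fin N) (by simp; omega) (fun _ => 0) (fun a j l => e a j (σ a) l) β
    (fun ρ x => h.op σ ρ x)
  simp only [Fintype.card_fin, zero_add] at hQ
  have hq := (NL (fun a k => (r a k / N) ^ 2 + 2 / N * ∑ j, ∑ l, e a j k l ^ 2) (3 * β) (fun _ _ => by positivity) (fun a k => by
    have h1 := h.op.rowavg a k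
    rw [Fintype.card_fin] at h1
    have h2 : (r a k / N) ^ 2 ≤ β := by
      rw [div_pow, div_le_iff₀ (by positivity)]
      have := h.rb a k
      have h2 : 1 ≤ (N:ℝ) ^ 2 := by nlinarith
      nlinarith
    have h3 : 2 / (N:ℝ) * ∑ j, ∑ l, e a j k l ^ 2 ≤ 2 * β := by
      rw [div_mul_eq_mul_div, div_le_iff₀ hN0]; linarith
    linarith)).smul 2 (by norm_num)
  have hqV : 2 / (Fintype.card (Fin N) : ℝ) * ∑ a, ∑ k, ((r a k / N) ^ 2 + 2 / N * ∑ j, ∑ l, e a j k l ^ 2) ≤ 5 * V := by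
    have h1 := h.v1
    have h2 := h.v2
    have h5 : 0 ≤ ∑ a, ∑ k, r a k ^ 2 := by positivity
    have e1 : ∑ a, ∑ k, ∑ j, ∑ l, e a j k l ^ 2 = ∑ a, ∑ i, ∑ k, ∑ l, e a i k l ^ 2 :=
      Finset.sum_congr rfl fun a _ => Finset.sum_comm
    simp only [Finset.sum_add_distrib, ← Finset.mul_sum, div_pow, ← Finset.sum_div, Fintype.card_fin, e1]
    unfold Vc at h1
    rw [Fintype.card_fin] at h1
    have e2 : 2 / (N:ℝ) * ((∑ a, ∑ k, r a k ^ 2) / N ^ 2 + 2 / N * ∑ a, ∑ i, ∑ k, ∑ l, e a i k l ^ 2) =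
      2 / N * ((∑ a, ∑ k, r a k ^ 2) / N ^ 2) + 4 * ((∑ a, ∑ i, ∑ k, ∑ l, e a i k l ^ 2) / N ^ 2) := by
      field_simp; ring
    rw [e2]
    have h3 : 2 / (N:ℝ) ≤ 1 := by rw [div_le_iff₀ hN0]; linarith
    have h4 : 2 / (N:ℝ) * ((∑ a, ∑ k, r a k ^ 2) / N ^ 2) ≤ 1 * V := mul_le_mul h3 h2 (by positivity) (by norm_num)
    linarith
  have hq2 := hq.mono (A' := 10 * V) (β' := 128 * β) (fun _ => le_rfl) (by linarith) (by linarith)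
  have hfin := MB.avg2 hQ hq2
  refine hfin.mono (fun π => le_of_eq ?_) le_rfl le_rfl
  rw [av_marg1 (fun a k => (∑ j, e a j k (π j)) ^ 2), Fintype.card_fin]

end thmD


section structd
open Equiv
variable {N : ℕ}

structure DD (d : Fin N → Fin N → Fin N → Fin N → ℝ) (B : ℝ) : Prop where
  z2 : ∀ i k l, ∑ j, d i j k l = 0
  z4 : ∀ i j k, ∑ l, d i j k l = 0
  z1 : ∀ j k l, ∑ i, d i j k l = 0
  z3 : ∀ i j l, ∑ k, d i j k l = 0
  bil : ∀ (σ : Perm (Fin N)) (x y : Fin N → ℝ), ∑ i, ∑ j, x i * d i j (σ i) (σ j) * y j ≤ B / 2 * (∑ i, x i ^ 2 + ∑ j, y j ^ 2)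
  B0 : 0 ≤ B

def dT (d : Fin N → Fin N → Fin N → Fin N → ℝ) : Fin N → Fin N → Fin N → Fin N → ℝ := fun i j k l => d j i l k

lemma DD.T {d : Fin N → Fin N → Fin N → Fin N → ℝ} {B : ℝ} (h : DD d B) : DD (dT d) B := by
  refine ⟨fun i k l => h.z1 _ _ _, fun i j k => h.z3 _ _ _, fun j k l => h.z2 _ _ _, fun i j l => h.z4 _ _ _, ?_, h.B0⟩
  intro σ x y
  have := h.bil σ y x
  rw [Finset.sum_comm] at this
  refine le_trans (le_of_eq ?_) (this.trans (le_of_eq (by ring)))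
  exact Finset.sum_congr rfl fun i _ => Finset.sum_congr rfl fun j _ => by simp only [dT]; ring

noncomputable def od (d : Fin N → Fin N → Fin N → Fin N → ℝ) : Fin N → Fin N → Fin N → Fin N → ℝ :=
  fun a i k l => if a = i ∨ k = l then 0 else d a i k l

lemma od_T (d : Fin N → Fin N → Fin N → Fin N → ℝ) (a i k l : Fin N) : od (dT d) a i k l = od d i a l k := by
  simp only [od, dT, eq_comm (a := a) (b := i), eq_comm (a := k) (b := l)]

lemma exists_theta (χ κ : Fin N → Bool) (σ ρ : Perm (Fin N)) : ∃ θ : Perm (Fin N),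
    (∀ i, χ i = true → κ (σ i) = true → θ i = σ i) ∧ (∀ i, χ i = false → κ (ρ i) = false → θ i = ρ i) := by
  have := Set.MapsTo.exists_equiv_extend_of_card_eq (α := Fin N) (β := Fin N) (t := Finset.univ) (by simp)
    (s := {i | (χ i = true ∧ κ (σ i) = true) ∨ (χ i = false ∧ κ (ρ i) = false)})
    (f := fun i => if χ i = true then σ i else ρ i) (fun _ _ => by simp) (by
      intro i hi j hj hij
      simp only [Set.mem_ofPred_eq] at hi hj
      simp only at hij
      rcases hi with ⟨h1, h2⟩ | ⟨h1, h2⟩ <;> rcases hj with ⟨h3, h4⟩ | ⟨h3, h4⟩ <;> simp only [h1, h3, if_true, Bool.false_eq_true, if_false] at hij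
      · exact σ.injective hij
      · rw [hij, h4] at h2; simp at h2
      · rw [hij, h4] at h2; simp at h2
      · exact ρ.injective hij)
  obtain ⟨g, hg⟩ := this
  refine ⟨g.trans (Equiv.subtypeUnivEquiv (by simp)), ?_, ?_⟩
  · intro i h1 h2
    have := hg i (Or.inl ⟨h1, h2⟩)
    simp only [h1, if_true] at this
    exact this
  · intro i h1 h2
    have := hg i (Or.inr ⟨h1, h2⟩)
    simp only [h1, Bool.false_eq_true, if_false] at this
    exact this

lemma od_bil {d : Fin N → Fin N → Fin N → Fin N → ℝ} {B : ℝ} (h : DD d B) (σ ρ : Perm (Fin N)) (x y : Fin N → ℝ) :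
    ∑ c, ∑ a, x c * od d c a (σ c) (ρ a) * y a ≤ 8 * B * (∑ i, x i ^ 2 + ∑ j, y j ^ 2) := by
  set u : (Fin N → Bool) → Fin N → Fin N → ℝ := fun χ a i => (if χ a then (1:ℝ) else 0) * (if χ i then 0 else 1) with hu
  have key : ∀ χ κ : Fin N → Bool, ∑ c, ∑ a, (u χ c a * u κ (σ c) (ρ a)) * (x c * od d c a (σ c) (ρ a) * y a) ≤
      B / 2 * (∑ i, x i ^ 2 + ∑ j, y j ^ 2) := by
    intro χ κ
    obtain ⟨θ, h1, h2⟩ := exists_theta χ κ σ ρ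
    have hb := h.bil θ (fun c => if χ c = true ∧ κ (σ c) = true then x c else 0) (fun a => if χ a = false ∧ κ (ρ a) = false then y a else 0)
    have e1 : ∑ c, (if χ c = true ∧ κ (σ c) = true then x c else 0) ^ 2 ≤ ∑ i, x i ^ 2 :=
      Finset.sum_le_sum fun c _ => by
        split_ifs
        · exact le_rfl
        · rw [zero_pow (by norm_num)]; exact sq_nonneg _
    have e2 : ∑ c, (if χ c = false ∧ κ (ρ c) = false then y c else 0) ^ 2 ≤ ∑ i, y i ^ 2 :=
      Finset.sum_le_sum fun c _ => by
        split_ifs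
        · exact le_rfl
        · rw [zero_pow (by norm_num)]; exact sq_nonneg _
    have e3 : ∑ c, ∑ a, (u χ c a * u κ (σ c) (ρ a)) * (x c * od d c a (σ c) (ρ a) * y a) =
       ∑ c, ∑ a, (if χ c = true ∧ κ (σ c) = true then x c else 0) * d c a (θ c) (θ a) * (if χ a = false ∧ κ (ρ a) = false then y a else 0) := by
      refine Finset.sum_congr rfl fun c _ => Finset.sum_congr rfl fun a _ => ?_
      by_cases hc : χ c = true ∧ κ (σ c) = true
      · by_cases ha : χ a = false ∧ κ (ρ a) = false
        · rw [if_pos hc, if_pos ha, h1 c hc.1 hc.2, h2 a ha.1 ha.2]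
          have hne : ¬ (c = a ∨ σ c = ρ a) := by
            rintro (h' | h')
            · rw [h', ha.1] at hc; simp at hc
            · rw [h', ha.2] at hc; simp at hc
          simp [hu, od, hne, hc.1, hc.2, ha.1, ha.2]
        · rw [if_neg ha]
          have : u χ c a * u κ (σ c) (ρ a) = 0 := by
            simp only [hu]
            cases h5 : χ a <;> cases h6 : κ (ρ a) <;> simp_all
          rw [this]; ring
      · rw [if_neg hc]
        have : u χ c a * u κ (σ c) (ρ a) = 0 := by
          simp only [hu]
          cases h5 : χ c <;> cases h6 : κ (σ c) <;> simp_all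
        rw [this]; ring
    rw [e3]
    refine hb.trans (mul_le_mul_of_nonneg_left (by linarith) (by linarith [h.B0]))
  have h3 := av_mono fun χ => av_mono fun κ => key χ κ
  simp only [av_const] at h3
  have e4 : av (fun χ : Fin N → Bool => av (fun κ : Fin N → Bool => ∑ c, ∑ a, (u χ c a * u κ (σ c) (ρ a)) * (x c * od d c a (σ c) (ρ a) * y a))) =
     ∑ c, ∑ a, 1 / 16 * (x c * od d c a (σ c) (ρ a) * y a) := by
    simp only [av_sum]
    refine Finset.sum_congr rfl fun c _ => Finset.sum_congr rfl fun a _ => ?_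
    simp only [av_mul_right, av_mul_left]
    by_cases hca : c = a ∨ σ c = ρ a
    · simp [od, hca]
    · push Not at hca
      rw [av_color c a hca.1, av_color _ _ hca.2]; ring
  rw [e4] at h3
  simp only [← Finset.mul_sum] at h3
  linarith

lemma od_OpB {d : Fin N → Fin N → Fin N → Fin N → ℝ} {B : ℝ} (h : DD d B) : OpB (od d) (256 * B ^ 2) := by
  intro σ ρ x
  set z : Fin N → ℝ := fun i => ∑ a, x a * od d a i (σ a) (ρ i) with hz
  set Z := ∑ i, z i ^ 2 with hZ
  set X := ∑ a, x a ^ 2 with hX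
  have hZ0 : 0 ≤ Z := Finset.sum_nonneg fun _ _ => sq_nonneg _
  have hX0 : 0 ≤ X := Finset.sum_nonneg fun _ _ => sq_nonneg _
  have key : ∀ t : ℝ, t * Z ≤ 8 * B * (X + t ^ 2 * Z) := by
    intro t
    have h1 := od_bil h σ ρ x (fun a => t * z a)
    have e1 : ∑ c, ∑ a, x c * od d c a (σ c) (ρ a) * (t * z a) = t * Z := by
      rw [Finset.sum_comm, hZ, Finset.mul_sum]
      refine Finset.sum_congr rfl fun a _ => ?_
      rw [← Finset.sum_mul]
      have : ∑ i, x i * od d i a (σ i) (ρ a) = z a := rfl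
      rw [this]; ring
    have e2 : ∑ a, (t * z a) ^ 2 = t ^ 2 * Z := by
      rw [hZ, Finset.mul_sum]; exact Finset.sum_congr rfl fun a _ => by ring
    rw [e1, e2] at h1
    exact h1
  rcases h.B0.lt_or_eq with hB | hB
  · have h1 := key (1 / (16 * B))
    have e : 8 * B * (X + (1 / (16 * B)) ^ 2 * Z) = 8 * B * X + 1 / (16 * B) * Z / 2 := by
      field_simp; ring
    rw [e] at h1
    have h2 : 1 / (16 * B) * Z ≤ 16 * B * X := by linarith
    rw [div_mul_eq_mul_div, one_mul, div_le_iff₀ (by positivity)] at h2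
    linarith
  · have h1 := key 1
    rw [← hB] at h1 ⊢
    linarith

lemma diag_le {d : Fin N → Fin N → Fin N → Fin N → ℝ} {B : ℝ} (h : DD d B) (a k : Fin N) : |d a a k k| ≤ B := by
  have h1 := h.bil (swap a k) (fun b => if b = a then 1 else 0) (fun b => if b = a then 1 else 0)
  have h2 := h.bil (swap a k) (fun b => if b = a then 1 else 0) (fun b => if b = a then -1 else 0)
  simp at h1 h2
  rw [abs_le]
  constructor <;> linarith

lemma od_rsum {d : Fin N → Fin N → Fin N → Fin N → ℝ} {B : ℝ} (h : DD d B) (a k : Fin N) :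
    ∑ j, ∑ l, od d a j k l = d a a k k := by
  have e1 : ∀ j, ∑ l, od d a j k l = if a = j then 0 else - d a j k k := by
    intro j
    by_cases hj : a = j
    · simp [od, hj]
    · have : ∀ l, od d a j k l = d a j k l - if k = l then d a j k l else 0 := by
        intro l
        by_cases hl : k = l <;> simp [od, hj, hl]
      simp only [this, Finset.sum_sub_distrib, h.z4, Finset.sum_ite_eq, Finset.mem_univ, if_true, hj, if_false, zero_sub]
  have e2 : ∀ j, (if a = j then 0 else - d a j k k) = - d a j k k + if a = j then d a j k k else 0 := by
    intro j; split_ifs <;> ring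
  simp only [e1, e2, Finset.sum_add_distrib, Finset.sum_neg_distrib, h.z2, Finset.sum_ite_eq, Finset.mem_univ, if_true, neg_zero, zero_add]

lemma od_sq_le (d : Fin N → Fin N → Fin N → Fin N → ℝ) (a i k l : Fin N) : od d a i k l ^ 2 ≤ d a i k l ^ 2 := by
  unfold od; split_ifs
  · rw [zero_pow (by norm_num)]; exact sq_nonneg _
  · exact le_rfl

lemma od_EE {d : Fin N → Fin N → Fin N → Fin N → ℝ} {B : ℝ} (h : DD d B) : EE (od d) (256 * B ^ 2) (Vc d) := by
  refine ⟨fun a k l => by simp [od], fun a i k => by simp [od], od_OpB h, ?_, ?_, ?_⟩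
  · intro a k
    rw [od_rsum h]
    have := sq_le_sq' (abs_le.mp (diag_le h a k)).1 (abs_le.mp (diag_le h a k)).2
    nlinarith [sq_nonneg B]
  · unfold Vc
    refine div_le_div_of_nonneg_right ?_ (by positivity)
    exact Finset.sum_le_sum fun a _ => Finset.sum_le_sum fun i _ => Finset.sum_le_sum fun k _ => Finset.sum_le_sum fun l _ => od_sq_le d a i k l
  · unfold Vc
    rw [Fintype.card_fin]
    refine div_le_div_of_nonneg_right ?_ (by positivity)
    simp only [od_rsum h]
    refine Finset.sum_le_sum fun a _ => ?_
    refine le_trans ?_ (Finset.single_le_sum (f := fun i => ∑ k, ∑ l, d a i k l ^ 2) (fun _ _ => by positivity) (Finset.mem_univ a))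
    refine Finset.sum_le_sum fun k _ => ?_
    exact Finset.single_le_sum (f := fun l => d a a k l ^ 2) (fun _ _ => by positivity) (Finset.mem_univ k)

lemma Vc_T (d : Fin N → Fin N → Fin N → Fin N → ℝ) : Vc (dT d) = Vc d := by
  unfold Vc
  congr 1
  rw [Finset.sum_comm]
  refine Finset.sum_congr rfl fun a _ => Finset.sum_congr rfl fun i _ => ?_
  rw [Finset.sum_comm]; rfl

end structd


section gamd
open Equiv
variable {N : ℕ}

lemma swap_quad (e : Fin N → Fin N → Fin N → Fin N → ℝ) (d1 : ∀ a k l, e a a k l = 0) (d2 : ∀ a i k, e a i k k = 0)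
    (σ : Perm (Fin N)) (a b : Fin N) :
    ∑ i, ∑ j, e i j (σ i) (σ j) - ∑ i, ∑ j, e i j ((σ * swap a b) i) ((σ * swap a b) j) =
    (∑ j, e a j (σ a) (σ j) + ∑ j, e b j (σ b) (σ j) - ∑ j, e a j (σ b) (σ j) - ∑ j, e b j (σ a) (σ j))
    + (∑ i, e i a (σ i) (σ a) + ∑ i, e i b (σ i) (σ b) - ∑ i, e i a (σ i) (σ b) - ∑ i, e i b (σ i) (σ a))
    - (e a b (σ a) (σ b) + e b a (σ b) (σ a) + e a b (σ b) (σ a) + e b a (σ a) (σ b)) := by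
  have h1 := lin_swap (fun c k => ∑ j, e c j k (σ j)) σ a b
  have h2 := lin_swap (fun c k => ∑ i, e i c (σ i) k) σ a b
  have h3 := lin_swap (fun c k => ∑ j, e c j k (σ j) - ∑ j, e c j k ((σ * swap a b) j)) σ a b
  have h4 : ∀ c k, ∑ j, e c j k (σ j) - ∑ j, e c j k ((σ * swap a b) j) =
      e c a k (σ a) + e c b k (σ b) - e c a k (σ b) - e c b k (σ a) := fun c k => lin_swap (fun j l => e c j k l) σ a b
  simp only [Finset.sum_sub_distrib] at h3
  simp only [h4, d1, d2] at h3
  have c1 : ∑ c, ∑ i, e i c (σ i) (σ c) = ∑ i, ∑ j, e i j (σ i) (σ j) := Finset.sum_comm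
  have c2 : ∑ c, ∑ i, e i c (σ i) ((σ * swap a b) c) = ∑ i, ∑ j, e i j (σ i) ((σ * swap a b) j) := Finset.sum_comm
  simp only [c1, c2] at h2
  linarith

lemma sum_four [Nonempty (Fin N)] (q : Fin N → Fin N → ℝ) (r : Fin N → Fin N → Fin N → Fin N → ℝ) (σ : Perm (Fin N)) :
    ∑ a, ∑ b, ((q a (σ a) + q b (σ b) + q a (σ b) + q b (σ a)) +
      (r a b (σ a) (σ b) + r b a (σ b) (σ a) + r a b (σ b) (σ a) + r b a (σ a) (σ b))) =
    2 * (N * ∑ a, q a (σ a) + ∑ a, ∑ k, q a k + ∑ a, ∑ b, (r a b (σ a) (σ b) + r a b (σ b) (σ a))) := by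
  have e1 : ∀ a, ∑ b, q a (σ b) = ∑ k, q a k := fun a => Equiv.sum_comp σ (q a)
  have e2 : ∑ a, ∑ b, q b (σ a) = ∑ a, ∑ k, q a k := by
    rw [Finset.sum_comm]; exact Finset.sum_congr rfl fun a _ => e1 a
  have e3 : ∑ a, ∑ b, r b a (σ b) (σ a) = ∑ a, ∑ b, r a b (σ a) (σ b) := Finset.sum_comm
  have e4 : ∑ a, ∑ b, r b a (σ a) (σ b) = ∑ a, ∑ b, r a b (σ b) (σ a) := Finset.sum_comm
  simp only [Finset.sum_add_distrib, e1, e2, e3, e4, Finset.sum_const, Finset.card_univ, Fintype.card_fin, nsmul_eq_mul, ← Finset.mul_sum]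
  ring

lemma gam_gen [Nonempty (Fin N)] (f : Perm (Fin N) → ℝ) (σ : Perm (Fin N)) (H : Fin N → Fin N → ℝ) (e : Fin N → Fin N → Fin N → Fin N → ℝ)
    (h : ∀ a b, f σ - f (σ * swap a b) = (H a (σ a) + H b (σ b) - H a (σ b) - H b (σ a)) -
      (e a b (σ a) (σ b) + e b a (σ b) (σ a) + e a b (σ b) (σ a) + e b a (σ a) (σ b))) :
    Gam f σ ≤ 16 * (∑ a, H a (σ a) ^ 2 + (∑ a, ∑ k, H a k ^ 2) / N + (∑ a, ∑ b, (e a b (σ a) (σ b) ^ 2 + e a b (σ b) (σ a) ^ 2)) / N) := by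
  have hN : (0:ℝ) < N := by
    have : 0 < Fintype.card (Fin N) := Fintype.card_pos
    rw [Fintype.card_fin] at this; exact_mod_cast this
  have s8 : ∀ x1 x2 x3 x4 y1 y2 y3 y4 : ℝ, (max ((x1 + x2 - x3 - x4) - (y1 + y2 + y3 + y4)) 0) ^ 2 ≤
      8 * ((x1^2+x2^2+x3^2+x4^2) + (y1^2+y2^2+y3^2+y4^2)) := by
    intro x1 x2 x3 x4 y1 y2 y3 y4
    have t2 : ∀ u v : ℝ, (u + v) ^ 2 ≤ 2 * (u ^ 2 + v ^ 2) := fun u v => by nlinarith [sq_nonneg (u - v)]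
    have a1 := t2 x1 x2
    have a2 := t2 x3 x4
    have a3 := t2 y1 y2
    have a4 := t2 y3 y4
    have b1 := t2 (x1 + x2) (-(x3 + x4))
    have b2 := t2 (y1 + y2) (y3 + y4)
    have b3 := t2 ((x1 + x2) + -(x3 + x4)) (-((y1 + y2) + (y3 + y4)))
    have g : (max ((x1 + x2 - x3 - x4) - (y1 + y2 + y3 + y4)) 0) ^ 2 ≤ ((x1 + x2) + -(x3 + x4) + (-((y1 + y2) + (y3 + y4)))) ^ 2 := by
      have : (x1 + x2 - x3 - x4) - (y1 + y2 + y3 + y4) = ((x1 + x2) + -(x3 + x4) + (-((y1 + y2) + (y3 + y4)))) := by ring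
      rw [this]
      rcases max_cases (((x1 + x2) + -(x3 + x4) + (-((y1 + y2) + (y3 + y4))))) 0 with ⟨h, _⟩ | ⟨h, _⟩ <;> rw [h]
      rw [zero_pow (by norm_num)]; exact sq_nonneg _
    rw [neg_sq] at b1 b3
    linarith
  have s := sum_four (fun a k => H a k ^ 2) (fun a b k l => e a b k l ^ 2) σ
  unfold Gam
  rw [Fintype.card_fin, div_le_iff₀ hN]
  have : ∑ a, ∑ b, (max (f σ - f (σ * swap a b)) 0) ^ 2 ≤ 8 * (2 * (N * ∑ a, H a (σ a) ^ 2 + ∑ a, ∑ k, H a k ^ 2 + ∑ a, ∑ b, (e a b (σ a) (σ b) ^ 2 + e a b (σ b) (σ a) ^ 2))) := by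
    rw [← s, Finset.mul_sum]
    refine Finset.sum_le_sum fun a _ => ?_
    rw [Finset.mul_sum]
    refine Finset.sum_le_sum fun b _ => ?_
    rw [h a b]
    exact s8 _ _ _ _ _ _ _ _
  refine this.trans (le_of_eq ?_)
  field_simp
  ring

/-- linear statistic tail -/
lemma conc_lin (hN : 20 ≤ N) (b : Fin N → Fin N → ℝ) (B V : ℝ) (hb : ∀ i k, |b i k| ≤ B) (hV : (∑ i, ∑ k, b i k ^ 2) / N ≤ V)
    (hBV : 0 < V + B) (t : ℝ) (ht : 0 < t) :
    av (fun σ : Perm (Fin N) => if ∑ i, b i (σ i) - av (fun σ : Perm (Fin N) => ∑ i, b i (σ i)) ≥ t then (1:ℝ) else 0) ≤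
      Real.exp (-(t ^ 2 / (8 * (2 ^ 10 * V) + 4 * (2 ^ 10 * B) * t))) := by
  have : Nonempty (Fin N) := ⟨⟨0, by omega⟩⟩
  have hN0 : (0:ℝ) < N := by positivity
  have hB : 0 ≤ B := (abs_nonneg _).trans (hb ⟨0, by omega⟩ ⟨0, by omega⟩)
  have hV0 : 0 ≤ V := le_trans (by positivity) hV
  refine conc (fun σ : Perm (Fin N) => ∑ i, b i (σ i)) (fun σ => 16 * (∑ a, b a (σ a) ^ 2 + (∑ a, ∑ k, b a k ^ 2) / N)) (2 ^ 10 * B) (2 ^ 10 * V) (by positivity) (by positivity) (by linarith) ?_ ?_ t ht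
  · intro σ
    have := gam_gen (fun σ : Perm (Fin N) => ∑ i, b i (σ i)) σ b (fun _ _ _ _ => 0) (by
      intro a b'
      simp only [add_zero, sub_zero]
      exact lin_swap b σ a b')
    simpa using this
  · have h1 := NL (fun a k => b a k ^ 2) (B ^ 2) (fun a k => sq_nonneg _) (fun a k => sq_le_sq' (by linarith [neg_abs_le (b a k), hb a k]) ((le_abs_self _).trans (hb a k)))
    have h2 := (h1.add (MB.const ((∑ a, ∑ k, b a k ^ 2) / N) (8 * B ^ 2))).smul 16 (by norm_num)
    refine MB.mono h2 (fun _ => le_rfl) ?_ ?_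
    · rw [Fintype.card_fin]
      have : 2 / (N:ℝ) * ∑ a, ∑ k, b a k ^ 2 = 2 * ((∑ a, ∑ k, b a k ^ 2) / N) := by ring
      rw [this]; linarith
    · nlinarith [sq_nonneg B]

set_option maxHeartbeats 2000000 in
lemma conc_quad (hN : 20 ≤ N) {d : Fin N → Fin N → Fin N → Fin N → ℝ} {B : ℝ} (h : DD d B) (ξ : Fin N → Fin N → ℝ) (V : ℝ)
    (hξ : ∀ i k, |ξ i k| ≤ 4 * B) (hV1 : (∑ i, ∑ k, ξ i k ^ 2) / N ≤ V) (hV2 : Vc d ≤ V)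
    (hBV : 0 < V + B) (t : ℝ) (ht : 0 < t) :
    av (fun σ : Perm (Fin N) => if (∑ i, ξ i (σ i) + ∑ i, ∑ j, od d i j (σ i) (σ j)) -
        av (fun σ : Perm (Fin N) => ∑ i, ξ i (σ i) + ∑ i, ∑ j, od d i j (σ i) (σ j)) ≥ t then (1:ℝ) else 0) ≤
      Real.exp (-(t ^ 2 / (8 * (2 ^ 33 * V) + 4 * (2 ^ 25 * B) * t))) := by
  have : Nonempty (Fin N) := ⟨⟨0, by omega⟩⟩
  have hN0 : (0:ℝ) < N := by positivity
  have hB := h.B0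
  have hV0 : 0 ≤ V := le_trans (by positivity) hV1
  have E1 := od_EE h
  have E2 := od_EE h.T
  rw [Vc_T] at E2
  refine conc (fun σ : Perm (Fin N) => ∑ i, ξ i (σ i) + ∑ i, ∑ j, od d i j (σ i) (σ j))
    (fun σ => 64 * (((∑ a, ξ a (σ a) ^ 2 + (∑ a, ∑ k, ξ a k ^ 2) / N) +
      (∑ a, ∑ b, (od d a b (σ a) (σ b) ^ 2 + od d a b (σ b) (σ a) ^ 2) / N)) +
      ((∑ a, (∑ j, od d a j (σ a) (σ j)) ^ 2 + (∑ a, ∑ k, (∑ j, od d a j k (σ j)) ^ 2) / N) +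
       (∑ a, (∑ j, od (dT d) a j (σ a) (σ j)) ^ 2 + (∑ a, ∑ k, (∑ j, od (dT d) a j k (σ j)) ^ 2) / N))))
    (2 ^ 25 * B) (2 ^ 33 * V) (by linarith) (by linarith) (by linarith) ?_ ?_ t ht
  · intro σ
    have := gam_gen (fun σ : Perm (Fin N) => ∑ i, ξ i (σ i) + ∑ i, ∑ j, od d i j (σ i) (σ j)) σ
      (fun c k => ξ c k + ∑ j, od d c j k (σ j) + ∑ j, od (dT d) c j k (σ j)) (od d) (by
      intro a b
      have s1 := swap_quad (od d) E1.d1 E1.d2 σ a b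
      have s2 := lin_swap ξ σ a b
      simp only [od_T]
      linarith)
    refine this.trans ?_
    have t3 : ∀ x y z : ℝ, (x + y + z) ^ 2 ≤ 3 * (x ^ 2 + y ^ 2 + z ^ 2) := fun x y z => by
      nlinarith [sq_nonneg (x - y), sq_nonneg (x - z), sq_nonneg (y - z)]
    have p1 : ∑ a, (ξ a (σ a) + ∑ j, od d a j (σ a) (σ j) + ∑ j, od (dT d) a j (σ a) (σ j)) ^ 2 ≤
        3 * (∑ a, ξ a (σ a) ^ 2 + ∑ a, (∑ j, od d a j (σ a) (σ j)) ^ 2 + ∑ a, (∑ j, od (dT d) a j (σ a) (σ j)) ^ 2) := by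
      rw [← Finset.sum_add_distrib, ← Finset.sum_add_distrib, Finset.mul_sum]
      exact Finset.sum_le_sum fun a _ => t3 _ _ _
    have p2 : (∑ a, ∑ k, (ξ a k + ∑ j, od d a j k (σ j) + ∑ j, od (dT d) a j k (σ j)) ^ 2) / N ≤
        3 * ((∑ a, ∑ k, ξ a k ^ 2) / N + (∑ a, ∑ k, (∑ j, od d a j k (σ j)) ^ 2) / N + (∑ a, ∑ k, (∑ j, od (dT d) a j k (σ j)) ^ 2) / N) := by
      rw [← add_div, ← add_div, ← mul_div_assoc]
      refine div_le_div_of_nonneg_right ?_ hN0.le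
      simp only [← Finset.sum_add_distrib, Finset.mul_sum]
      exact Finset.sum_le_sum fun a _ => Finset.sum_le_sum fun k _ => t3 _ _ _
    have p3 : (∑ a, ∑ b, (od d a b (σ a) (σ b) ^ 2 + od d a b (σ b) (σ a) ^ 2) / (N:ℝ)) = (∑ a, ∑ b, (od d a b (σ a) (σ b) ^ 2 + od d a b (σ b) (σ a) ^ 2)) / (N:ℝ) := by
      simp only [Finset.sum_div]
    rw [p3]
    have q1 : 0 ≤ ∑ a, ξ a (σ a) ^ 2 := by positivity
    have q2 : 0 ≤ (∑ a, ∑ k, ξ a k ^ 2) / (N:ℝ) := by positivity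
    have q3 : 0 ≤ (∑ a, ∑ b, (od d a b (σ a) (σ b) ^ 2 + od d a b (σ b) (σ a) ^ 2)) / (N:ℝ) :=
      div_nonneg (Finset.sum_nonneg fun _ _ => Finset.sum_nonneg fun _ _ => add_nonneg (sq_nonneg _) (sq_nonneg _)) hN0.le
    have q4 : 0 ≤ ∑ a, (∑ j, od d a j (σ a) (σ j)) ^ 2 := Finset.sum_nonneg fun _ _ => sq_nonneg _
    have q5 : 0 ≤ (∑ a, ∑ k, (∑ j, od d a j k (σ j)) ^ 2) / (N:ℝ) := div_nonneg (Finset.sum_nonneg fun _ _ => Finset.sum_nonneg fun _ _ => sq_nonneg _) hN0.le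
    have q6 : 0 ≤ ∑ a, (∑ j, od (dT d) a j (σ a) (σ j)) ^ 2 := Finset.sum_nonneg fun _ _ => sq_nonneg _
    have q7 : 0 ≤ (∑ a, ∑ k, (∑ j, od (dT d) a j k (σ j)) ^ 2) / (N:ℝ) := div_nonneg (Finset.sum_nonneg fun _ _ => Finset.sum_nonneg fun _ _ => sq_nonneg _) hN0.le
    linarith
  · have b0 : (0:ℝ) ≤ B ^ 2 := sq_nonneg _
    have h1 := NL (fun a k => ξ a k ^ 2) ((4 * B) ^ 2) (fun a k => sq_nonneg _) (fun a k => sq_le_sq' (by linarith [neg_abs_le (ξ a k), hξ a k]) ((le_abs_self _).trans (hξ a k)))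
    have h1' : MB (fun σ : Perm (Fin N) => ∑ a, ξ a (σ a) ^ 2) (2 * V) (2 ^ 41 * B ^ 2) := by
      refine h1.mono (fun _ => le_rfl) ?_ (by nlinarith)
      rw [Fintype.card_fin]
      have : 2 / (N:ℝ) * ∑ a, ∑ k, ξ a k ^ 2 = 2 * ((∑ a, ∑ k, ξ a k ^ 2) / N) := by ring
      rw [this]; linarith
    have h2' : MB (fun σ : Perm (Fin N) => (∑ a, ∑ k, ξ a k ^ 2) / (N:ℝ)) V (2 ^ 41 * B ^ 2) :=
      (MB.const _ _).mono (fun _ => le_rfl) hV1 le_rfl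
    have ebd : ∀ a b k l, od d a b k l ^ 2 ≤ 256 * B ^ 2 := by
      intro a b k l
      have r := E1.op.row a k (swap b l)
      have r2 := Finset.single_le_sum (f := fun i => od d a i k ((swap b l) i) ^ 2) (fun i _ => sq_nonneg _) (Finset.mem_univ b)
      simp only [swap_apply_left] at r2
      linarith
    have h3 := NP (by rw [Fintype.card_fin]; omega) (fun a b k l => (od d a b k l ^ 2 + od d a b l k ^ 2) / (N:ℝ)) (512 * B ^ 2)
      (fun a b k l => div_nonneg (add_nonneg (sq_nonneg _) (sq_nonneg _)) hN0.le) (fun a b k l => by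
        rw [Fintype.card_fin]
        refine div_le_div_of_nonneg_right ?_ hN0.le
        linarith [ebd a b k l, ebd a b l k]) (fun a k l => by simp [E1.d1])
    have h3' : MB (fun σ : Perm (Fin N) => ∑ a, ∑ b, (od d a b (σ a) (σ b) ^ 2 + od d a b (σ b) (σ a) ^ 2) / (N:ℝ)) V (2 ^ 42 * B ^ 2) := by
      refine h3.mono (fun _ => le_rfl) ?_ (by nlinarith)
      rw [Fintype.card_fin]
      have c1 : ∑ a, ∑ b, ∑ k, ∑ l, od d a b l k ^ 2 = ∑ a, ∑ b, ∑ k, ∑ l, od d a b k l ^ 2 :=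
        Finset.sum_congr rfl fun a _ => Finset.sum_congr rfl fun b _ => Finset.sum_comm
      have c2 : (∑ a, ∑ b, ∑ k, ∑ l, od d a b k l ^ 2) / (N:ℝ) ^ 2 ≤ V := by
        have := E1.v1.trans hV2
        unfold Vc at this
        rw [Fintype.card_fin] at this
        exact this
      simp only [← Finset.sum_div, Finset.sum_add_distrib, c1]
      have hN20 : (20:ℝ) ≤ N := by exact_mod_cast hN
      have hS0 : 0 ≤ ∑ a, ∑ b, ∑ k, ∑ l, od d a b k l ^ 2 := Finset.sum_nonneg fun _ _ => Finset.sum_nonneg fun _ _ => Finset.sum_nonneg fun _ _ => Finset.sum_nonneg fun _ _ => sq_nonneg _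
      generalize ∑ a, ∑ b, ∑ k, ∑ l, od d a b k l ^ 2 = S at c2 hS0 ⊢
      have : 4 / (N:ℝ) ^ 2 * ((S + S) / N) = (8 / N) * (S / (N:ℝ) ^ 2) := by ring
      rw [this]
      have h8 : 8 / (N:ℝ) ≤ 1 := by rw [div_le_one hN0]; linarith
      have hS : 0 ≤ S / (N:ℝ) ^ 2 := by positivity
      nlinarith
    have D1 : MB (fun σ : Perm (Fin N) => ∑ a, (∑ j, od d a j (σ a) (σ j)) ^ 2) (2 ^ 25 * V) (2 ^ 41 * B ^ 2) :=
      (thmD1 hN E1).mono (fun _ => le_rfl) (by linarith) (by linarith)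
    have D2 : MB (fun σ : Perm (Fin N) => (∑ a, ∑ k, (∑ j, od d a j k (σ j)) ^ 2) / (N:ℝ)) (10 * V) (2 ^ 41 * B ^ 2) :=
      (thmD2 hN E1).mono (fun _ => le_rfl) (by linarith) (by linarith)
    have D3 : MB (fun σ : Perm (Fin N) => ∑ a, (∑ j, od (dT d) a j (σ a) (σ j)) ^ 2) (2 ^ 25 * V) (2 ^ 41 * B ^ 2) :=
      (thmD1 hN E2).mono (fun _ => le_rfl) (by linarith) (by linarith)
    have D4 : MB (fun σ : Perm (Fin N) => (∑ a, ∑ k, (∑ j, od (dT d) a j k (σ j)) ^ 2) / (N:ℝ)) (10 * V) (2 ^ 41 * B ^ 2) :=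
      (thmD2 hN E2).mono (fun _ => le_rfl) (by linarith) (by linarith)
    have X1 := (h1'.add h2').mono (fun _ => le_rfl) (le_refl _) (show _ ≤ 2 ^ 42 * B ^ 2 by linarith)
    have X2 := X1.add h3'
    have X3 := (D1.add D2).add (D3.add D4)
    have X4 := (X2.mono (fun _ => le_rfl) (le_refl _) (show _ ≤ 2 * (2 * (2 ^ 41 * B ^ 2)) by linarith)).add X3
    exact (X4.smul 64 (by norm_num)).mono (fun _ => le_rfl) (by linarith) (by linarith)
end gamd


section struct
open Equiv
variable {N : ℕ}

lemma rot3 (f : Fin N → Fin N → Fin N → ℝ) : ∑ l, ∑ a, ∑ b, f a b l = ∑ a, ∑ b, ∑ l, f a b l := by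
  rw [Finset.sum_comm]; exact Finset.sum_congr rfl fun a _ => Finset.sum_comm

lemma rot4 (f : Fin N → Fin N → Fin N → Fin N → ℝ) : ∑ l, ∑ a, ∑ b, ∑ c, f a b c l = ∑ a, ∑ b, ∑ c, ∑ l, f a b c l := by
  rw [Finset.sum_comm]; exact Finset.sum_congr rfl fun a _ => rot3 _

lemma dw_z1 (hN : 0 < N) (w : Fin N → Fin N → Fin N → Fin N → ℝ) (j k l : Fin N) : ∑ i, dw N w i j k l = 0 := by
  have : (N:ℝ) ≠ 0 := by positivity
  simp only [dw, Finset.sum_add_distrib, Finset.sum_sub_distrib, ← Finset.sum_div, Finset.sum_const, Finset.card_univ, Fintype.card_fin, nsmul_eq_mul]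
  field_simp
  ring

lemma dw_z2 (hN : 0 < N) (w : Fin N → Fin N → Fin N → Fin N → ℝ) (i k l : Fin N) : ∑ j, dw N w i j k l = 0 := by
  have : (N:ℝ) ≠ 0 := by positivity
  have e1 : ∑ j, ∑ i', ∑ k', ∑ l', w i' j k' l' = ∑ i', ∑ j, ∑ k', ∑ l', w i' j k' l' := Finset.sum_comm
  have e2 : ∑ j, ∑ i', ∑ l', w i' j k l' = ∑ i', ∑ j, ∑ l', w i' j k l' := Finset.sum_comm
  have e3 : ∑ j, ∑ i', ∑ k', w i' j k' l = ∑ i', ∑ j, ∑ k', w i' j k' l := Finset.sum_comm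
  have e4 : ∑ j, ∑ i', w i' j k l = ∑ i', ∑ j, w i' j k l := Finset.sum_comm
  simp only [dw, Finset.sum_add_distrib, Finset.sum_sub_distrib, ← Finset.sum_div, Finset.sum_const, Finset.card_univ, Fintype.card_fin, nsmul_eq_mul]
  rw [e1, e2, e3, e4]
  field_simp
  ring

lemma dw_z3 (hN : 0 < N) (w : Fin N → Fin N → Fin N → Fin N → ℝ) (i j l : Fin N) : ∑ k, dw N w i j k l = 0 := by
  have : (N:ℝ) ≠ 0 := by positivity
  have e1 : ∑ k, ∑ i', ∑ j', ∑ l', w i' j' k l' = ∑ i', ∑ j', ∑ k, ∑ l', w i' j' k l' := rot3 (fun a b c => ∑ l', w a b c l')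
  have e2 : ∑ k, ∑ i', ∑ l', w i' j k l' = ∑ i', ∑ k, ∑ l', w i' j k l' := Finset.sum_comm
  have e3 : ∑ k, ∑ j', ∑ l', w i j' k l' = ∑ j', ∑ k, ∑ l', w i j' k l' := Finset.sum_comm
  have e4 : ∑ k, ∑ i', w i' j k l = ∑ i', ∑ k, w i' j k l := Finset.sum_comm
  have e5 : ∑ k, ∑ j', w i j' k l = ∑ j', ∑ k, w i j' k l := Finset.sum_comm
  have e6 : ∑ k, ∑ i', ∑ j', w i' j' k l = ∑ i', ∑ j', ∑ k, w i' j' k l := rot3 (fun a b c => w a b c l)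
  simp only [dw, Finset.sum_add_distrib, Finset.sum_sub_distrib, ← Finset.sum_div, Finset.sum_const, Finset.card_univ, Fintype.card_fin, nsmul_eq_mul]
  rw [e1, e2, e3, e4, e5, e6]
  field_simp
  ring

lemma dw_z4 (hN : 0 < N) (w : Fin N → Fin N → Fin N → Fin N → ℝ) (i j k : Fin N) : ∑ l, dw N w i j k l = 0 := by
  have : (N:ℝ) ≠ 0 := by positivity
  have e1 : ∑ l, ∑ i', ∑ j', ∑ k', w i' j' k' l = ∑ i', ∑ j', ∑ k', ∑ l, w i' j' k' l := rot4 (fun a b c l => w a b c l)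
  have e2 : ∑ l, ∑ i', ∑ j', w i' j' k l = ∑ i', ∑ j', ∑ l, w i' j' k l := rot3 (fun a b l => w a b k l)
  have e3 : ∑ l, ∑ i', ∑ k', w i' j k' l = ∑ i', ∑ k', ∑ l, w i' j k' l := rot3 (fun a c l => w a j c l)
  have e4 : ∑ l, ∑ j', ∑ k', w i j' k' l = ∑ j', ∑ k', ∑ l, w i j' k' l := rot3 (fun b c l => w i b c l)
  have e5 : ∑ l, ∑ i', w i' j k l = ∑ i', ∑ l, w i' j k l := Finset.sum_comm
  have e6 : ∑ l, ∑ j', w i j' k l = ∑ j', ∑ l, w i j' k l := Finset.sum_comm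
  have e7 : ∑ l, ∑ k', w i j k' l = ∑ k', ∑ l, w i j k' l := Finset.sum_comm
  simp only [dw, Finset.sum_add_distrib, Finset.sum_sub_distrib, ← Finset.sum_div, Finset.sum_const, Finset.card_univ, Fintype.card_fin, nsmul_eq_mul]
  rw [e1, e2, e3, e4, e5, e6, e7]
  field_simp
  ring

lemma aw_sum (hN : 0 < N) (w : Fin N → Fin N → Fin N → Fin N → ℝ) (σ : Perm (Fin N)) :
    (N:ℝ) ^ 2 * ∑ i, aw N w i (σ i) = ∑ i, ∑ j', ∑ l', w i j' (σ i) l' + ∑ j, ∑ i', ∑ k', w i' j k' (σ j)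
      - 2 / N * ∑ i', ∑ j', ∑ k', ∑ l', w i' j' k' l' := by
  have : (N:ℝ) ≠ 0 := by positivity
  have e1 : ∑ i, ∑ i', ∑ j', ∑ l', w i' j' (σ i) l' = ∑ i', ∑ j', ∑ k', ∑ l', w i' j' k' l' := by
    rw [Equiv.sum_comp σ (fun k => ∑ i', ∑ j', ∑ l', w i' j' k l')]; exact rot3 (fun a b c => ∑ l', w a b c l')
  have e2 : ∑ i, ∑ i', ∑ k', ∑ l', w i' i k' l' = ∑ i', ∑ j', ∑ k', ∑ l', w i' j' k' l' := Finset.sum_comm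
  have e3 : ∑ i, ∑ i', ∑ j', ∑ k', w i' j' k' (σ i) = ∑ i', ∑ j', ∑ k', ∑ l', w i' j' k' l' := by
    rw [Equiv.sum_comp σ (fun k => ∑ i', ∑ j', ∑ l', w i' j' l' k)]; exact rot4 (fun a b c d => w a b c d)
  simp only [aw, Finset.sum_add_distrib, Finset.sum_sub_distrib, ← Finset.sum_div, Finset.sum_const, Finset.card_univ, Fintype.card_fin, nsmul_eq_mul]
  rw [e1, e2, e3]
  field_simp
  ring

lemma dw_sum (hN : 0 < N) (w : Fin N → Fin N → Fin N → Fin N → ℝ) (σ : Perm (Fin N)) :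
    ∑ i, ∑ j, dw N w i j (σ i) (σ j) = ∑ i, ∑ j, w i j (σ i) (σ j) - 1 / N * (∑ i, ∑ j', ∑ l', w i j' (σ i) l' + ∑ j, ∑ i', ∑ k', w i' j k' (σ j))
      + 1 / (N:ℝ) ^ 2 * ∑ i', ∑ j', ∑ k', ∑ l', w i' j' k' l' := by
  have : (N:ℝ) ≠ 0 := by positivity
  have e0 : ∑ j, ∑ i', ∑ k', ∑ l', w i' j k' l' = ∑ i', ∑ j', ∑ k', ∑ l', w i' j' k' l' := Finset.sum_comm
  have e1 : ∑ i, ∑ i', ∑ j', ∑ l', w i' j' (σ i) l' = ∑ i', ∑ j', ∑ k', ∑ l', w i' j' k' l' := by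
    rw [Equiv.sum_comp σ (fun k => ∑ i', ∑ j', ∑ l', w i' j' k l')]; exact rot3 (fun a b c => ∑ l', w a b c l')
  have e3 : ∑ i, ∑ i', ∑ j', ∑ k', w i' j' k' (σ i) = ∑ i', ∑ j', ∑ k', ∑ l', w i' j' k' l' := by
    rw [Equiv.sum_comp σ (fun k => ∑ i', ∑ j', ∑ l', w i' j' l' k)]; exact rot4 (fun a b c d => w a b c d)
  have e4 : ∑ i, ∑ j, ∑ j', ∑ k', w i j' k' (σ j) = ∑ i', ∑ j', ∑ k', ∑ l', w i' j' k' l' := by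
    refine Finset.sum_congr rfl fun i _ => ?_
    rw [Equiv.sum_comp σ (fun k => ∑ j', ∑ l', w i j' l' k)]; exact rot3 (fun b c d => w i b c d)
  have e5 : ∑ i, ∑ j, ∑ i', ∑ l', w i' j (σ i) l' = ∑ i', ∑ j', ∑ k', ∑ l', w i' j' k' l' := by
    rw [Equiv.sum_comp σ (fun k => ∑ j, ∑ i', ∑ l', w i' j k l')]
    rw [rot3 (fun j i' k => ∑ l', w i' j k l')]; exact Finset.sum_comm
  have e6 : ∑ i, ∑ j, ∑ i', ∑ j', w i' j' (σ i) (σ j) = ∑ i', ∑ j', ∑ k', ∑ l', w i' j' k' l' := by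
    have : ∀ i, ∑ j, ∑ i', ∑ j', w i' j' (σ i) (σ j) = ∑ i', ∑ j', ∑ l', w i' j' (σ i) l' := by
      intro i
      rw [Equiv.sum_comp σ (fun l => ∑ i', ∑ j', w i' j' (σ i) l)]; exact rot3 (fun a b l => w a b (σ i) l)
    simp only [this]; exact e1
  have e7 : ∑ i, ∑ j, ∑ k', w i j k' (σ j) = ∑ j, ∑ i', ∑ k', w i' j k' (σ j) := Finset.sum_comm
  have e8 : ∑ i, ∑ j, ∑ j', w i j' (σ i) (σ j) = ∑ i, ∑ j', ∑ l', w i j' (σ i) l' := by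
    refine Finset.sum_congr rfl fun i _ => ?_
    rw [Equiv.sum_comp σ (fun l => ∑ j', w i j' (σ i) l)]; exact Finset.sum_comm
  have e9 : ∑ i, ∑ j, ∑ i', w i' j (σ i) (σ j) = ∑ j, ∑ i', ∑ k', w i' j k' (σ j) := by
    rw [Equiv.sum_comp σ (fun k => ∑ j, ∑ i', w i' j k (σ j))]
    exact rot3 (fun j i' k => w i' j k (σ j))
  simp only [dw, Finset.sum_add_distrib, Finset.sum_sub_distrib, ← Finset.sum_div, Finset.sum_const, Finset.card_univ, Fintype.card_fin, nsmul_eq_mul, ← Finset.mul_sum]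
  rw [e0, e1, e3, e4, e5, e6, e7, e8, e9]
  field_simp
  ring

lemma Q_decomp (hN : 0 < N) (w : Fin N → Fin N → Fin N → Fin N → ℝ) (σ : Perm (Fin N)) :
    ∑ i, ∑ j, w i j (σ i) (σ j) = ∑ i, (N * aw N w i (σ i)) + ∑ i, ∑ j, dw N w i j (σ i) (σ j)
      + 1 / (N:ℝ) ^ 2 * ∑ i', ∑ j', ∑ k', ∑ l', w i' j' k' l' := by
  have : (N:ℝ) ≠ 0 := by positivity
  have h1 := aw_sum hN w σ
  have h2 := dw_sum hN w σ
  have h3 : ∑ i, aw N w i (σ i) = ((N:ℝ) ^ 2 * ∑ i, aw N w i (σ i)) / N ^ 2 := by field_simp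
  rw [h2, ← Finset.mul_sum, h3, h1]
  field_simp
  ring

lemma opNorm_bil (M : Matrix (Fin N) (Fin N) ℝ) (B : ℝ) (hM : opNorm M ≤ B) (x y : Fin N → ℝ) :
    ∑ i, ∑ j, x i * M i j * y j ≤ B / 2 * (∑ i, x i ^ 2 + ∑ j, y j ^ 2) := by
  set T := LinearMap.toContinuousLinearMap (Matrix.toEuclideanLin M) with hT
  have hB : 0 ≤ B := (norm_nonneg T).trans hM
  set X : EuclideanSpace ℝ (Fin N) := WithLp.toLp 2 x
  set Y : EuclideanSpace ℝ (Fin N) := WithLp.toLp 2 y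
  have e1 : ∑ i, ∑ j, x i * M i j * y j = inner ℝ X (T Y) := by
    rw [PiLp.inner_apply]
    refine Finset.sum_congr rfl fun i _ => ?_
    simp [hT, X, Y, Matrix.mulVec, dotProduct, Matrix.toLpLin_apply, Finset.mul_sum, mul_comm, mul_left_comm]
  have e2 : inner ℝ X (T Y) ≤ ‖X‖ * (B * ‖Y‖) :=
    (real_inner_le_norm _ _).trans (mul_le_mul_of_nonneg_left ((T.le_opNorm Y).trans (mul_le_mul_of_nonneg_right hM (norm_nonneg _))) (norm_nonneg _))
  have e3 : ‖X‖ ^ 2 = ∑ i, x i ^ 2 := by rw [EuclideanSpace.norm_sq_eq]; simp [X]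
  have e4 : ‖Y‖ ^ 2 = ∑ i, y i ^ 2 := by rw [EuclideanSpace.norm_sq_eq]; simp [Y]
  rw [e1, ← e3, ← e4]
  nlinarith [mul_nonneg hB (sq_nonneg (‖X‖ - ‖Y‖))]

lemma od_sum (d : Fin N → Fin N → Fin N → Fin N → ℝ) (σ : Perm (Fin N)) :
    ∑ i, ∑ j, d i j (σ i) (σ j) = ∑ i, d i i (σ i) (σ i) + ∑ i, ∑ j, od d i j (σ i) (σ j) := by
  rw [← Finset.sum_add_distrib]
  refine Finset.sum_congr rfl fun i _ => ?_
  have : ∀ j, d i j (σ i) (σ j) = (if i = j then d i i (σ i) (σ i) else 0) + od d i j (σ i) (σ j) := by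
    intro j
    by_cases h : i = j
    · subst h; simp [od]
    · simp [od, h]
  rw [Finset.sum_congr rfl fun j _ => this j, Finset.sum_add_distrib]
  simp

lemma permExp_eq (f : Perm (Fin N) → ℝ) : permExp N f = av f := by
  unfold permExp av
  rw [Fintype.card_perm, Fintype.card_fin]

lemma permProb_eq (p : Perm (Fin N) → Prop) : permProb N p = av (fun σ => if p σ then (1:ℝ) else 0) := by
  unfold permProb av
  rw [Fintype.card_perm, Fintype.card_fin]
  simp

end struct


section fin
open Equiv
variable {N : ℕ}

lemma exp_cmp (V B c c' t : ℝ) (hV : 0 ≤ V) (hB : 0 ≤ B) (hVB : 0 < V + B) (ht : 0 < t) (hc : 0 < c) (hc' : 0 < c')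
    (h1 : 8 * c ≤ 2 ^ 38) (h2 : 2 * c' ≤ 2 ^ 38) :
    Real.exp (-((t / 2) ^ 2 / (8 * (c * V) + 4 * (c' * B) * (t / 2)))) ≤ Real.exp (-((1 / 2 ^ 40) * t ^ 2 / (V + B * t))) := by
  have hBt : 0 ≤ B * t := by positivity
  have hpos : 0 < V ∨ 0 < B := by
    rcases hV.lt_or_eq with h | h
    · exact Or.inl h
    · right; linarith
  have hD : 0 < V + B * t := by
    rcases hpos with h | h
    · linarith
    · have : 0 < B * t := by positivity
      linarith
  have hD' : 0 < 8 * (c * V) + 4 * (c' * B) * (t / 2) := by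
    rcases hpos with h | h
    · positivity
    · positivity
  have hle : 8 * (c * V) + 4 * (c' * B) * (t / 2) ≤ 2 ^ 38 * (V + B * t) := by
    have a1 := mul_le_mul_of_nonneg_right h1 hV
    have a2 := mul_le_mul_of_nonneg_right h2 hBt
    linarith
  rw [Real.exp_le_exp, neg_le_neg_iff, div_le_div_iff₀ hD hD']
  have := mul_le_mul_of_nonneg_left hle (sq_nonneg t)
  nlinarith

lemma av_split [Nonempty (Fin N)] (Q f g : Perm (Fin N) → ℝ) (c t : ℝ) (h : ∀ σ, Q σ = f σ + g σ + c) :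
    av (fun σ => if Q σ - av Q ≥ t then (1:ℝ) else 0) ≤ av (fun σ => if f σ - av f ≥ t / 2 then (1:ℝ) else 0) +
      av (fun σ => if g σ - av g ≥ t / 2 then (1:ℝ) else 0) := by
  have e : av Q = av f + av g + c := by
    have : Q = fun σ => (f σ + g σ) + c := funext h
    rw [this, av_add, av_add, av_const]
  rw [← av_add]
  refine av_mono fun σ => ?_
  rw [e, h σ]
  by_cases h1 : f σ - av f ≥ t / 2
  · rw [if_pos h1]
    split_ifs <;> norm_num
  · by_cases h2 : g σ - av g ≥ t / 2
    · rw [if_pos h2]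
      split_ifs <;> norm_num
    · rw [if_neg, if_neg h1, if_neg h2]
      · norm_num
      · push Not at h1 h2 ⊢
        linarith
end fin

/-- Concentration inequality for a general double-indexed permutation
statistic. -/
theorem general_dips_tail :
    ∃ K : ℝ, 0 < K ∧
      ∀ (N : ℕ) (hN : 20 ≤ N)
        (w : Fin N → Fin N → Fin N → Fin N → ℝ)
        (Ba Va Bd Vd : ℝ)
        (ξw : Fin N → Fin N → ℝ),
        Ba = (N : ℝ) * Finset.univ.sup'
            ⟨((⟨0, by omega⟩ : Fin N), (⟨0, by omega⟩ : Fin N)), Finset.mem_univ _⟩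
            (fun p : Fin N × Fin N => |aw N w p.1 p.2|) →
        Va = (N : ℝ) * ∑ i, ∑ j, (aw N w i j) ^ 2 →
        Bd = Finset.univ.sup' ⟨1, Finset.mem_univ 1⟩
            (fun σ : Equiv.Perm (Fin N) =>
              opNorm (Matrix.of fun i j => dw N w i j (σ i) (σ j))) →
        (∀ i k, ξw i k = dw N w i i k k - (∑ k', dw N w i i k' k') / (N : ℝ)
            - (∑ i', dw N w i' i' k k) / (N : ℝ)
            + (∑ i', ∑ k', dw N w i' i' k' k') / (N : ℝ) ^ 2) →
        Vd = (∑ i, ∑ k, (ξw i k) ^ 2) / (N : ℝ)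
            + (∑ i, ∑ j, ∑ k, ∑ l, (dw N w i j k l) ^ 2) / (N : ℝ) ^ 2 →
        0 < Va + Ba →
        0 < Vd + Bd →
        ∀ t : ℝ, 0 < t →
          permProb N (fun σ =>
              (∑ i, ∑ j, w i j (σ i) (σ j))
                - permExp N (fun σ' => ∑ i, ∑ j, w i j (σ' i) (σ' j)) ≥ t)
            ≤ Real.exp (-(K * t ^ 2 / (Va + Ba * t)))
              + Real.exp (-(K * t ^ 2 / (Vd + Bd * t))) := by
  refine ⟨1 / 2 ^ 40, by norm_num, ?_⟩
  intro N hN w Ba Va Bd Vd ξw hBa hVa hBd hξ hVd hpa hpd t ht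
  have hN1 : 0 < N := by omega
  have hN0 : (0:ℝ) < N := by exact_mod_cast hN1
  have : Nonempty (Fin N) := ⟨⟨0, hN1⟩⟩
  have hba : ∀ i k, |(N:ℝ) * aw N w i k| ≤ Ba := by
    intro i k
    rw [abs_mul, abs_of_pos hN0, hBa]
    refine mul_le_mul_of_nonneg_left ?_ hN0.le
    exact Finset.le_sup' (fun p : Fin N × Fin N => |aw N w p.1 p.2|) (Finset.mem_univ (i, k))
  have hBa0 : 0 ≤ Ba := (abs_nonneg _).trans (hba ⟨0, hN1⟩ ⟨0, hN1⟩)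
  have hva : (∑ i, ∑ k, ((N:ℝ) * aw N w i k) ^ 2) / N ≤ Va := by
    rw [hVa]
    simp only [mul_pow, ← Finset.mul_sum]
    apply le_of_eq
    field_simp
  have hVa0 : 0 ≤ Va := le_trans (by positivity) hva
  have hop : ∀ σ : Equiv.Perm (Fin N), opNorm (Matrix.of fun i j => dw N w i j (σ i) (σ j)) ≤ Bd := by
    intro σ
    rw [hBd]
    exact Finset.le_sup' (fun σ : Equiv.Perm (Fin N) => opNorm (Matrix.of fun i j => dw N w i j (σ i) (σ j))) (Finset.mem_univ σ)
  have hBd0 : 0 ≤ Bd := le_trans (norm_nonneg _) (hop 1)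
  have hDD : DD (dw N w) Bd := ⟨dw_z2 hN1 w, dw_z4 hN1 w, dw_z1 hN1 w, dw_z3 hN1 w,
    fun σ x y => opNorm_bil (Matrix.of fun i j => dw N w i j (σ i) (σ j)) Bd (hop σ) x y, hBd0⟩
  have hdi : ∀ i k, |dw N w i i k k| ≤ Bd := fun i k => diag_le hDD i k
  have hav : ∀ f : Fin N → ℝ, (∀ i, |f i| ≤ Bd) → |(∑ i, f i) / (N:ℝ)| ≤ Bd := by
    intro f hf
    rw [abs_div, abs_of_pos hN0, div_le_iff₀ hN0]
    refine (Finset.abs_sum_le_sum_abs _ _).trans ((Finset.sum_le_sum fun i _ => hf i).trans ?_)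
    simp [mul_comm]
  have hξb : ∀ i k, |ξw i k| ≤ 4 * Bd := by
    intro i k
    rw [hξ i k]
    have a1 := abs_le.mp (hdi i k)
    have a2 := abs_le.mp (hav (fun k' => dw N w i i k' k') (fun k' => hdi i k'))
    have a3 := abs_le.mp (hav (fun i' => dw N w i' i' k k) (fun i' => hdi i' k))
    have a4 := abs_le.mp (hav (fun i' => (∑ k', dw N w i' i' k' k') / (N:ℝ)) (fun i' => hav _ (fun k' => hdi i' k')))
    have e4 : (∑ i', (∑ k', dw N w i' i' k' k') / (N:ℝ)) / (N:ℝ) = (∑ i', ∑ k', dw N w i' i' k' k') / (N:ℝ) ^ 2 := by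
      rw [← Finset.sum_div, div_div, sq]
    rw [e4] at a4
    rw [abs_le]
    constructor <;> linarith [a1.1, a1.2, a2.1, a2.2, a3.1, a3.2, a4.1, a4.2]
  have hVc0 := Vc_nonneg (dw N w)
  have hVc : Vc (dw N w) = (∑ i, ∑ j, ∑ k, ∑ l, (dw N w i j k l) ^ 2) / (N : ℝ) ^ 2 := by
    unfold Vc
    rw [Fintype.card_fin]
  have hx0 : 0 ≤ (∑ i, ∑ k, (ξw i k) ^ 2) / (N : ℝ) := div_nonneg (Finset.sum_nonneg fun _ _ => Finset.sum_nonneg fun _ _ => sq_nonneg _) hN0.le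
  have hv1 : (∑ i, ∑ k, (ξw i k) ^ 2) / (N : ℝ) ≤ Vd := by rw [hVd, ← hVc]; linarith
  have hv2 : Vc (dw N w) ≤ Vd := by rw [hVd, ← hVc]; linarith
  have hVd0 : 0 ≤ Vd := hx0.trans hv1
  have ca := conc_lin hN (fun i k => (N:ℝ) * aw N w i k) Ba Va hba hva hpa (t / 2) (by linarith)
  have cd := conc_quad hN hDD ξw Vd hξb hv1 hv2 hpd (t / 2) (by linarith)
  obtain ⟨c, hc⟩ : ∃ c, ∀ σ : Equiv.Perm (Fin N), ∑ i, ∑ j, w i j (σ i) (σ j) =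
      (∑ i, (N:ℝ) * aw N w i (σ i)) + (∑ i, ξw i (σ i) + ∑ i, ∑ j, od (dw N w) i j (σ i) (σ j)) + c := by
    refine ⟨(∑ i', ∑ k', dw N w i' i' k' k') / (N:ℝ) + 1 / (N:ℝ) ^ 2 * ∑ i', ∑ j', ∑ k', ∑ l', w i' j' k' l', fun σ => ?_⟩
    rw [Q_decomp hN1 w σ, od_sum (dw N w) σ]
    have e1 : ∑ i, ξw i (σ i) = ∑ i, dw N w i i (σ i) (σ i) - (∑ i', ∑ k', dw N w i' i' k' k') / (N:ℝ) := by
      simp only [hξ]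
      have c1 : ∑ i, ∑ i', dw N w i' i' (σ i) (σ i) = ∑ i', ∑ k', dw N w i' i' k' k' := by
        rw [Equiv.sum_comp σ (fun k => ∑ i', dw N w i' i' k k)]; exact Finset.sum_comm
      simp only [Finset.sum_add_distrib, Finset.sum_sub_distrib, ← Finset.sum_div, Finset.sum_const, Finset.card_univ, Fintype.card_fin, nsmul_eq_mul]
      rw [c1]
      field_simp
      ring
    rw [e1]
    ring
  rw [permProb_eq]
  simp only [permExp_eq]
  refine (av_split (fun σ : Equiv.Perm (Fin N) => ∑ i, ∑ j, w i j (σ i) (σ j)) _ _ c t hc).trans (add_le_add (ca.trans ?_) (cd.trans ?_))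
  · exact exp_cmp Va Ba _ _ t hVa0 hBa0 hpa ht (by norm_num) (by norm_num) (by norm_num) (by norm_num)
  · exact exp_cmp Vd Bd _ _ t hVd0 hBd0 hpd ht (by norm_num) (by norm_num) (by norm_num) (by norm_num)
end

section
/- Let N be a positive integer and W = [w(i,j,k,ℓ)] ∈ R^{N×N×N×N} a fixed tensor. Then (i) for every permutation σ ∈ S_N the deterministic identity Σ_{i,j∈[N]} w(i,j,σ(i),σ(j)) = N Σ_{i=1}^N a_w(i,σ(i)) + Σ_{i,j∈[N]} d_w(i,j,σ(i),σ(j)) + N² w(·,·,·,·) holds; (ii) the tensor d_w is degenerate, i.e., for all i,j,k,ℓ ∈ [N], Σ_ℓ d_w(i,j,k,ℓ) = Σ_k d_w(i,j,k,ℓ) = Σ_j d_w(i,j,k,ℓ) = Σ_i d_w(i,j,k,ℓ) = 0; and (iii) Σ_{i,j∈[N]} a_w(i,j) = 0. -/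
open scoped BigOperators Classical

theorem mv2 {N : ℕ} (f : Fin N → Fin N → Fin N → ℝ) :
    ∑ x, ∑ a, ∑ b, f x a b = ∑ a, ∑ b, ∑ x, f x a b := by
  rw [Finset.sum_comm]
  exact Finset.sum_congr rfl fun a _ => Finset.sum_comm

theorem mv3 {N : ℕ} (f : Fin N → Fin N → Fin N → Fin N → ℝ) :
    ∑ x, ∑ a, ∑ b, ∑ c, f x a b c = ∑ a, ∑ b, ∑ c, ∑ x, f x a b c := by
  rw [Finset.sum_comm]
  exact Finset.sum_congr rfl fun a _ => mv2 _

/-- The Hoeffding-type decomposition of a double-indexed permutation statistic: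
the deterministic identity, degeneracy of `d_w`, and centering of `a_w`. -/
theorem dips_decomposition (N : ℕ) (hN : 0 < N)
    (w : Fin N → Fin N → Fin N → Fin N → ℝ) :
    (∀ σ : Equiv.Perm (Fin N),
        ∑ i, ∑ j, w i j (σ i) (σ j)
          = (N : ℝ) * ∑ i, aw N w i (σ i)
            + ∑ i, ∑ j, dw N w i j (σ i) (σ j)
            + (N : ℝ) ^ 2 *
              ((∑ i', ∑ j', ∑ k', ∑ l', w i' j' k' l') / (N : ℝ) ^ 4))
      ∧ (∀ i j k, ∑ l, dw N w i j k l = 0)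
      ∧ (∀ i j l, ∑ k, dw N w i j k l = 0)
      ∧ (∀ i k l, ∑ j, dw N w i j k l = 0)
      ∧ (∀ j k l, ∑ i, dw N w i j k l = 0)
      ∧ (∑ i, ∑ j, aw N w i j = 0) := by
  have hN' : (N : ℝ) ≠ 0 := by positivity
  refine ⟨?_, ?_, ?_, ?_, ?_, ?_⟩
  · intro σ
    have e : ∀ f : Fin N → ℝ, ∑ i, f (σ i) = ∑ i, f i := fun f => Equiv.sum_comp σ f
    have h1 : ∑ k, ∑ i, ∑ j, ∑ l, w i j k l = ∑ i, ∑ j, ∑ k, ∑ l, w i j k l := mv2 _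
    have h2 : ∑ l, ∑ i, ∑ j, ∑ k, w i j k l = ∑ i, ∑ j, ∑ k, ∑ l, w i j k l := mv3 _
    have h3 : ∑ j, ∑ i, ∑ k, ∑ l, w i j k l = ∑ i, ∑ j, ∑ k, ∑ l, w i j k l := Finset.sum_comm
    have g1 := e (fun k => ∑ i, ∑ j, ∑ l, w i j k l)
    have g2 := e (fun l => ∑ i, ∑ j, ∑ k, w i j k l)
    have g3 : ∑ i, ∑ j, ∑ a, ∑ b, w i a b (σ j) = ∑ i, ∑ j, ∑ k, ∑ l, w i j k l := by
      refine Finset.sum_congr rfl fun i _ => ?_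
      rw [e (fun l => ∑ a, ∑ b, w i a b l)]
      exact mv2 _
    have g4 : ∑ i, ∑ j, ∑ a, ∑ b, w a j (σ i) b = ∑ i, ∑ j, ∑ k, ∑ l, w i j k l := by
      rw [e (fun k => ∑ j, ∑ a, ∑ b, w a j k b), ← h1]
      exact Finset.sum_congr rfl fun i _ => Finset.sum_comm
    have g5 : ∑ i, ∑ j, ∑ a, ∑ b, w a b (σ i) (σ j) = ∑ i, ∑ j, ∑ k, ∑ l, w i j k l := by
      rw [e (fun k => ∑ j, ∑ a, ∑ b, w a b k (σ j)), ← h1]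
      refine Finset.sum_congr rfl fun i _ => ?_
      rw [e (fun l => ∑ a, ∑ b, w a b i l)]
      exact mv2 _
    have g6 : ∑ i, ∑ j, ∑ k, w i j k (σ j) = ∑ j, ∑ i, ∑ k, w i j k (σ j) := Finset.sum_comm
    have g7 : ∑ i, ∑ j, ∑ a, w i a (σ i) (σ j) = ∑ i, ∑ a, ∑ l, w i a (σ i) l := by
      refine Finset.sum_congr rfl fun i _ => ?_
      rw [e (fun l => ∑ a, w i a (σ i) l)]
      exact Finset.sum_comm
    have g8 : ∑ i, ∑ j, ∑ a, w a j (σ i) (σ j) = ∑ j, ∑ a, ∑ k, w a j k (σ j) := by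
      rw [e (fun k => ∑ j, ∑ a, w a j k (σ j)), mv2]
    simp only [aw, dw, Finset.sum_add_distrib, Finset.sum_sub_distrib, ← Finset.sum_div, Finset.sum_const, Finset.card_univ, Fintype.card_fin, nsmul_eq_mul, ← Finset.mul_sum] at *
    simp only [g1, g2, g3, g4, g5, g6, g7, g8, h1, h2, h3]
    field_simp
    ring
  · intro i j k
    have hi : ∑ l, ∑ i, w i j k l = ∑ i, ∑ l, w i j k l := Finset.sum_comm
    have hj : ∑ l, ∑ j, w i j k l = ∑ j, ∑ l, w i j k l := Finset.sum_comm
    have hk : ∑ l, ∑ k, w i j k l = ∑ k, ∑ l, w i j k l := Finset.sum_comm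
    have hij : ∑ l, ∑ i, ∑ j, w i j k l = ∑ i, ∑ j, ∑ l, w i j k l := mv2 _
    have hik : ∑ l, ∑ i, ∑ k, w i j k l = ∑ i, ∑ k, ∑ l, w i j k l := mv2 _
    have hjk : ∑ l, ∑ j, ∑ k, w i j k l = ∑ j, ∑ k, ∑ l, w i j k l := mv2 _
    have hijk : ∑ l, ∑ i, ∑ j, ∑ k, w i j k l = ∑ i, ∑ j, ∑ k, ∑ l, w i j k l := mv3 _
    simp only [dw, Finset.sum_add_distrib, Finset.sum_sub_distrib, ← Finset.sum_div, Finset.sum_const, Finset.card_univ, Fintype.card_fin, nsmul_eq_mul]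
    simp only [hi, hj, hk, hij, hik, hjk, hijk]
    field_simp
    ring
  · intro i j l
    have hi : ∑ k, ∑ i, w i j k l = ∑ i, ∑ k, w i j k l := Finset.sum_comm
    have hj : ∑ k, ∑ j, w i j k l = ∑ j, ∑ k, w i j k l := Finset.sum_comm
    have hij : ∑ k, ∑ i, ∑ j, w i j k l = ∑ i, ∑ j, ∑ k, w i j k l := mv2 _
    have hil : ∑ k, ∑ i, ∑ l, w i j k l = ∑ i, ∑ k, ∑ l, w i j k l := Finset.sum_comm
    have hjl : ∑ k, ∑ j, ∑ l, w i j k l = ∑ j, ∑ k, ∑ l, w i j k l := Finset.sum_comm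
    have hijl : ∑ k, ∑ i, ∑ j, ∑ l, w i j k l = ∑ i, ∑ j, ∑ k, ∑ l, w i j k l := mv2 _
    simp only [dw, Finset.sum_add_distrib, Finset.sum_sub_distrib, ← Finset.sum_div, Finset.sum_const, Finset.card_univ, Fintype.card_fin, nsmul_eq_mul]
    simp only [hi, hj, hij, hil, hjl, hijl]
    field_simp
    ring
  · intro i k l
    have hi : ∑ j, ∑ i, w i j k l = ∑ i, ∑ j, w i j k l := Finset.sum_comm
    have hik : ∑ j, ∑ i, ∑ k, w i j k l = ∑ i, ∑ j, ∑ k, w i j k l := Finset.sum_comm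
    have hil : ∑ j, ∑ i, ∑ l, w i j k l = ∑ i, ∑ j, ∑ l, w i j k l := Finset.sum_comm
    have hikl : ∑ j, ∑ i, ∑ k, ∑ l, w i j k l = ∑ i, ∑ j, ∑ k, ∑ l, w i j k l := Finset.sum_comm
    simp only [dw, Finset.sum_add_distrib, Finset.sum_sub_distrib, ← Finset.sum_div, Finset.sum_const, Finset.card_univ, Fintype.card_fin, nsmul_eq_mul]
    simp only [hi, hik, hil, hikl]
    field_simp
    ring
  · intro j k l
    simp only [dw, Finset.sum_add_distrib, Finset.sum_sub_distrib, ← Finset.sum_div, Finset.sum_const, Finset.card_univ, Fintype.card_fin, nsmul_eq_mul]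
    field_simp
    ring
  · have h1 : ∑ k, ∑ i, ∑ j, ∑ l, w i j k l = ∑ i, ∑ j, ∑ k, ∑ l, w i j k l := mv2 _
    have h2 : ∑ l, ∑ i, ∑ j, ∑ k, w i j k l = ∑ i, ∑ j, ∑ k, ∑ l, w i j k l := mv3 _
    have h3 : ∑ j, ∑ i, ∑ k, ∑ l, w i j k l = ∑ i, ∑ j, ∑ k, ∑ l, w i j k l := Finset.sum_comm
    have h4 : ∑ i, ∑ k, ∑ j, ∑ l, w i j k l = ∑ i, ∑ j, ∑ k, ∑ l, w i j k l :=
      Finset.sum_congr rfl fun i _ => Finset.sum_comm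
    have h5 : ∑ j, ∑ l, ∑ i, ∑ k, w i j k l = ∑ i, ∑ j, ∑ k, ∑ l, w i j k l := by
      rw [← h3]
      exact Finset.sum_congr rfl fun i _ => mv2 _
    simp only [aw, Finset.sum_add_distrib, Finset.sum_sub_distrib, ← Finset.sum_div, Finset.sum_const, Finset.card_univ, Fintype.card_fin, nsmul_eq_mul, ← Finset.mul_sum]
    simp only [h1, h2, h3, h4, h5]
    field_simp
    ring
end

section
/- Let A = [a(i,j)] ∈ R^{N×N} be a (possibly random) matrix, independent of π, satisfying Σ_{i,j∈[N]} a(i,j) = 0 almost surely. Let G_1,...,G_N be i.i.d. standard Gaussian random variables independent of (A, π). Then for every λ ∈ R: E[ exp( λ Σ_{i=1}^N a(i,π(i)) ) ] ≤ E[ exp( 2√3 · λ Σ_{i=1}^N a(i,π(i)) G_i ) ]. -/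
open scoped BigOperators Classical ENNReal
open MeasureTheory ProbabilityTheory

/-- Standard Gaussian product measure on `Fin n → ℝ` (i.i.d. `N(0,1)` coordinates). -/
noncomputable def gaussPi (n : ℕ) : Measure (Fin n → ℝ) :=
  Measure.pi (fun _ : Fin n => gaussianReal 0 1)

theorem aux_tanh (t : ℝ) (ht : 0 ≤ t) : Real.exp t - 1 ≤ t * (Real.exp t + 1) / 2 := by
  have hd : ∀ x : ℝ, HasDerivAt (fun x : ℝ => (2 + x) * Real.exp (-x) + x - 2)
      (1 - (1 + x) * Real.exp (-x)) x := by
    intro x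
    have h1 : HasDerivAt (fun x : ℝ => 2 + x) 1 x := (hasDerivAt_id x).const_add 2
    have h2 : HasDerivAt (fun x : ℝ => Real.exp (-x)) (Real.exp (-x) * (-1)) x :=
      (hasDerivAt_neg x).exp
    have h := ((h1.mul h2).add (hasDerivAt_id x)).sub_const 2
    refine h.congr_deriv ?_
    ring
  have hm : Monotone (fun x : ℝ => (2 + x) * Real.exp (-x) + x - 2) := by
    apply monotone_of_deriv_nonneg (fun x => (hd x).differentiableAt)
    intro x
    rw [(hd x).deriv]
    have h1 := Real.add_one_le_exp x
    have h2 := Real.exp_pos (-x)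
    have h3 : Real.exp x * Real.exp (-x) = 1 := by rw [← Real.exp_add]; simp
    nlinarith
  have h0 := hm ht
  simp only [neg_zero, Real.exp_zero] at h0
  have h3 : Real.exp t * Real.exp (-t) = 1 := by rw [← Real.exp_add]; simp
  have h4 := Real.exp_pos t
  nlinarith

theorem aux_diff (x y : ℝ) :
    (x - y) * (Real.exp x - Real.exp y) ≤ (x - y) ^ 2 * (Real.exp x + Real.exp y) / 2 := by
  wlog h : y ≤ x with H
  · have := H y x (le_of_not_ge h)
    nlinarith
  have h1 := aux_tanh (x - y) (by linarith)
  have h2 : Real.exp x = Real.exp (x - y) * Real.exp y := by rw [← Real.exp_add]; simp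
  have h3 := mul_le_mul_of_nonneg_left h1
    (mul_nonneg (sub_nonneg.2 h) (Real.exp_pos y).le)
  rw [h2]
  linarith

theorem aux_abstract {S : Type*} [Fintype S] [Nonempty S] (f W : S → ℝ)
    (hf : ∑ s, f s = 0) (hW : ∀ s, 0 ≤ W s)
    (key : ∀ θ : ℝ, 0 ≤ θ → θ ≤ 1 →
      ∑ s, f s * Real.exp (θ * f s) ≤ θ * ∑ s, W s * Real.exp (θ * f s)) :
    ((∑ s, Real.exp (f s)) / Fintype.card S) ^ 2
      ≤ (∑ s, Real.exp (3 * W s)) / Fintype.card S := by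
  set K : ℝ := (Fintype.card S : ℝ) with hK
  have hKpos : 0 < K := by rw [hK]; exact_mod_cast Fintype.card_pos
  set m : ℝ → ℝ := fun θ => (∑ s, Real.exp (θ * f s)) / K with hm
  have hmpos : ∀ θ, 0 < m θ := fun θ =>
    div_pos (Finset.sum_pos (fun s _ => Real.exp_pos _) Finset.univ_nonempty) hKpos
  have hm1 : ∀ θ, 1 ≤ m θ := by
    intro θ
    rw [hm, le_div_iff₀ hKpos, one_mul]
    calc K = ∑ s, (θ * f s + 1) := by
            rw [Finset.sum_add_distrib, ← Finset.mul_sum, hf]; simp [hK]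
      _ ≤ _ := Finset.sum_le_sum fun s _ => Real.add_one_le_exp _
  have hder : ∀ θ, HasDerivAt m ((∑ s, f s * Real.exp (θ * f s)) / K) θ := by
    intro θ
    apply HasDerivAt.div_const
    apply HasDerivAt.fun_sum
    intro s _
    have h := ((hasDerivAt_id θ).mul_const (f s)).exp
    refine h.congr_deriv ?_
    simp [mul_comm]
  set P : ℝ := (∑ s, Real.exp (3 * W s)) / K with hP
  have hP1 : 1 ≤ P := by
    rw [hP, le_div_iff₀ hKpos, one_mul]
    calc K = ∑ s : S, (1 : ℝ) := by simp [hK]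
      _ ≤ _ := Finset.sum_le_sum fun s _ => Real.one_le_exp (by linarith [hW s])
  obtain ⟨c, hc, hcs⟩ := exists_hasDerivAt_eq_slope (fun θ => Real.log (m θ))
    (fun θ => ((∑ s, f s * Real.exp (θ * f s)) / K) / m θ) (zero_lt_one)
    (fun θ _ => ((hder θ).log (hmpos θ).ne').continuousAt.continuousWithinAt)
    (fun θ _ => (hder θ).log (hmpos θ).ne')
  have hm0 : m 0 = 1 := by simp [hm, hK]
  simp only [hm0, Real.log_one, sub_zero, div_one] at hcs
  set x := Real.log (m 1) with hx
  have hx0 : 0 ≤ x := Real.log_nonneg (hm1 1)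
  have hL0 : 0 ≤ Real.log (m c) := Real.log_nonneg (hm1 c)
  set L := Real.log (m c) with hL
  -- tilted weights
  set q : S → ℝ := fun s => Real.exp (c * f s) / (K * m c) with hq
  have hKm : 0 < K * m c := mul_pos hKpos (hmpos c)
  have hq0 : ∀ s, 0 ≤ q s := fun s => (div_pos (Real.exp_pos _) hKm).le
  have hKmc : K * m c = ∑ s, Real.exp (c * f s) := by
    simp only [hm]; field_simp
  have hq1 : ∑ s, q s = 1 := by
    simp only [hq]
    rw [← Finset.sum_div, ← hKmc, div_self hKm.ne']
  have hqf : ∑ s, q s * f s = x := by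
    rw [← hcs, div_div, Finset.sum_div]
    exact Finset.sum_congr rfl fun s _ => by simp only [hq]; ring
  have hxW : x ≤ c * ∑ s, q s * W s := by
    have h := div_le_div_of_nonneg_right (key c hc.1.le hc.2.le) hKm.le
    have e : c * ∑ s, q s * W s = (c * ∑ s, W s * Real.exp (c * f s)) / (K * m c) := by
      rw [mul_div_assoc, Finset.sum_div]
      congr 1
      exact Finset.sum_congr rfl fun s _ => by simp only [hq]; ring
    rw [e, ← hcs, div_div]
    exact h
  have hJ := convexOn_exp.map_sum_le (t := Finset.univ) (w := q)
    (p := fun s => 3 * W s - c * f s + L) (fun s _ => hq0 s) hq1 (fun s _ => Set.mem_univ _)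
  simp only [smul_eq_mul] at hJ
  have hR : ∑ s, q s * Real.exp (3 * W s - c * f s + L) = P := by
    rw [hP, Finset.sum_div]
    refine Finset.sum_congr rfl fun s _ => ?_
    rw [Real.exp_add, Real.exp_sub, hL, Real.exp_log (hmpos c)]
    simp only [hq]
    have := Real.exp_pos (c * f s)
    have := hmpos c
    field_simp
  have hE : ∑ s, q s * (3 * W s - c * f s + L) = 3 * ∑ s, q s * W s - c * x + L := by
    calc _ = ∑ s, (3 * (q s * W s) - c * (q s * f s) + q s * L) :=
            Finset.sum_congr rfl fun s _ => by ring
      _ = _ := by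
        rw [Finset.sum_add_distrib, Finset.sum_sub_distrib, ← Finset.mul_sum, ← Finset.mul_sum,
          ← Finset.sum_mul, hq1, hqf, one_mul]
  rw [hR, hE] at hJ
  have hPpos : 0 < P := by linarith
  have hlog := (Real.le_log_iff_exp_le hPpos).2 hJ
  have hR0 : 0 ≤ Real.log P := Real.log_nonneg hP1
  have hfin : 2 * x ≤ Real.log P := by
    have h1 := mul_le_mul_of_nonneg_left hlog hc.1.le
    have h2 : c * Real.log P ≤ Real.log P := by nlinarith [hc.2]
    have h3 : c * (c * x) ≤ x := by
      have : c * c ≤ 1 := by nlinarith [hc.1, hc.2]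
      nlinarith
    have h4 : 0 ≤ c * L := mul_nonneg hc.1.le hL0
    nlinarith
  have hmm : (∑ s, Real.exp (f s)) / K = m 1 := by simp [hm]
  rw [hmm, ← Real.exp_log (hmpos 1), ← Real.exp_nat_mul, ← Real.le_log_iff_exp_le hPpos]
  exact_mod_cast hfin

section perm
variable {N : ℕ}

def fst (a : Fin N → Fin N → ℝ) (σ : Equiv.Perm (Fin N)) : ℝ := ∑ i, a i (σ i)

def dst (a : Fin N → Fin N → ℝ) (i j : Fin N) (σ : Equiv.Perm (Fin N)) : ℝ :=
  a i (σ i) + a j (σ j) - a i (σ j) - a j (σ i)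

theorem dst_eq (a : Fin N → Fin N → ℝ) (i j : Fin N) (σ : Equiv.Perm (Fin N)) :
    dst a i j σ = fst a σ - fst a (σ * Equiv.swap i j) := by
  unfold dst fst
  rw [← Finset.sum_sub_distrib]
  by_cases h : i = j
  · subst h; simp
  rw [← Finset.sum_subset (Finset.subset_univ {i, j}), Finset.sum_pair h]
  · simp; ring
  · intro k _ hk
    simp only [Finset.mem_insert, Finset.mem_singleton, not_or] at hk
    simp [Equiv.swap_apply_of_ne_of_ne hk.1 hk.2]

theorem dst_swap (a : Fin N → Fin N → ℝ) (i j : Fin N) (σ : Equiv.Perm (Fin N)) :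
    dst a i j (σ * Equiv.swap i j) = - dst a i j σ := by
  rw [dst_eq, dst_eq, mul_assoc, Equiv.swap_mul_self, mul_one]; ring

theorem sum_swap (i j : Fin N) (F : Equiv.Perm (Fin N) → ℝ) :
    ∑ σ, F (σ * Equiv.swap i j) = ∑ σ, F σ :=
  Equiv.sum_comp (Equiv.mulRight (Equiv.swap i j)) F

theorem sum_four_s9 (a b c d : Fin N → Fin N → ℝ) :
    ∑ i, ∑ j, (a i j + b i j + c i j + d i j)
      = ∑ i, ∑ j, a i j + ∑ i, ∑ j, b i j + ∑ i, ∑ j, c i j + ∑ i, ∑ j, d i j := by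
  simp [Finset.sum_add_distrib]

theorem sum_perm (a : Fin N → Fin N → ℝ) (σ : Equiv.Perm (Fin N)) :
    ∑ i, ∑ j, a i (σ j) = ∑ i, ∑ j, a i j :=
  Finset.sum_congr rfl fun i _ => Equiv.sum_comp σ (a i)

theorem sum_dst (a : Fin N → Fin N → ℝ) (σ : Equiv.Perm (Fin N)) :
    ∑ i, ∑ j, dst a i j σ = 2 * N * fst a σ - 2 * ∑ i, ∑ j, a i j := by
  have h1 : ∑ i, ∑ j, a i (σ j) = ∑ i, ∑ j, a i j := sum_perm a σ
  have h2 : ∑ i, ∑ j, a j (σ i) = ∑ i, ∑ j, a i j := by rw [Finset.sum_comm]; exact h1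
  unfold dst fst
  simp only [Finset.sum_add_distrib, Finset.sum_sub_distrib]
  rw [h1, h2]
  simp [← Finset.mul_sum]
  ring

theorem sum_dst_sq (a : Fin N → Fin N → ℝ) (σ : Equiv.Perm (Fin N)) :
    ∑ i, ∑ j, dst a i j σ ^ 2
      ≤ 8 * N * fst (fun i j => a i j ^ 2) σ + 8 * ∑ i, ∑ j, a i j ^ 2 := by
  have h1 : ∑ i, ∑ j, a i (σ j) ^ 2 = ∑ i, ∑ j, a i j ^ 2 := sum_perm (fun i j => a i j ^ 2) σ
  have h2 : ∑ i, ∑ j, a j (σ i) ^ 2 = ∑ i, ∑ j, a i j ^ 2 := by rw [Finset.sum_comm]; exact h1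
  calc _ ≤ ∑ i, ∑ j, 4 * (a i (σ i) ^ 2 + a j (σ j) ^ 2 + a i (σ j) ^ 2 + a j (σ i) ^ 2) := by
        refine Finset.sum_le_sum fun i _ => Finset.sum_le_sum fun j _ => ?_
        unfold dst
        generalize a i (σ i) = p
        generalize a j (σ j) = q
        generalize a i (σ j) = r
        generalize a j (σ i) = s
        nlinarith [sq_nonneg (p - q), sq_nonneg (p + r), sq_nonneg (p + s), sq_nonneg (q + r),
          sq_nonneg (q + s), sq_nonneg (r - s)]
    _ = _ := by
        simp only [← Finset.mul_sum, Finset.sum_add_distrib]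
        rw [h1, h2]
        unfold fst
        simp [← Finset.mul_sum]
        ring

theorem sum_fst (a : Fin N → Fin N → ℝ) :
    N * ∑ σ, fst a σ = (Nat.factorial N : ℝ) * ∑ i, ∑ j, a i j := by
  have h0 : ∀ i j, ∑ σ, dst a i j σ = 0 := by
    intro i j
    have := sum_swap i j (dst a i j)
    simp only [dst_swap, Finset.sum_neg_distrib] at this
    linarith
  have h1 : ∑ σ, ∑ i, ∑ j, dst a i j σ = 0 := by
    rw [Finset.sum_comm]
    refine Finset.sum_eq_zero fun i _ => ?_
    rw [Finset.sum_comm]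
    exact Finset.sum_eq_zero fun j _ => h0 i j
  simp only [sum_dst, Finset.sum_sub_distrib, ← Finset.mul_sum] at h1
  simp [Fintype.card_perm] at h1
  linarith

theorem key_ineq (hN : 0 < N) (a : Fin N → Fin N → ℝ) (h0 : ∑ i, ∑ j, a i j = 0)
    (θ : ℝ) (hθ : 0 ≤ θ) :
    ∑ σ, fst a σ * Real.exp (θ * fst a σ) ≤
      θ * ∑ σ, (2 * fst (fun i j => a i j ^ 2) σ + 2 * (∑ i, ∑ j, a i j ^ 2) / N)
        * Real.exp (θ * fst a σ) := by
  have hNR : (0 : ℝ) < N := by exact_mod_cast hN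
  set E : Equiv.Perm (Fin N) → ℝ := fun σ => Real.exp (θ * fst a σ) with hE
  have hij : ∀ i j, ∑ σ, dst a i j σ * E σ ≤ θ / 2 * ∑ σ, dst a i j σ ^ 2 * E σ := by
    intro i j
    have e1 := sum_swap i j (fun σ => dst a i j σ * E σ)
    have e2 := sum_swap i j (fun σ => dst a i j σ ^ 2 * E σ)
    simp only [dst_swap] at e1 e2
    have hp : ∀ σ, dst a i j σ * E σ + -dst a i j σ * E (σ * Equiv.swap i j)
        ≤ θ / 2 * (dst a i j σ ^ 2 * E σ + (-dst a i j σ) ^ 2 * E (σ * Equiv.swap i j)) := by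
      intro σ
      rcases hθ.eq_or_lt with h | h
      · subst h; simp [hE]
      have h := aux_diff (θ * fst a σ) (θ * fst a (σ * Equiv.swap i j))
      rw [← mul_sub, ← dst_eq] at h
      change θ * dst a i j σ * (E σ - E (σ * Equiv.swap i j)) ≤
        (θ * dst a i j σ) ^ 2 * (E σ + E (σ * Equiv.swap i j)) / 2 at h
      have hh : θ * (dst a i j σ * (E σ - E (σ * Equiv.swap i j))) ≤
        θ * (θ * dst a i j σ ^ 2 * (E σ + E (σ * Equiv.swap i j)) / 2) := by linarith
      have := le_of_mul_le_mul_left hh ‹0 < θ›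
      linarith
    have hs := Finset.sum_le_sum fun σ (_ : σ ∈ Finset.univ) => hp σ
    rw [Finset.sum_add_distrib, ← Finset.mul_sum, Finset.sum_add_distrib, e1, e2] at hs
    linarith
  have hs := Finset.sum_le_sum fun i (_ : i ∈ Finset.univ) =>
    Finset.sum_le_sum fun j (_ : j ∈ Finset.univ) => hij i j
  have sw : ∀ F : Fin N → Fin N → Equiv.Perm (Fin N) → ℝ,
      ∑ i, ∑ j, ∑ σ, F i j σ * E σ = ∑ σ, (∑ i, ∑ j, F i j σ) * E σ := by
    intro F
    simp only [Finset.sum_mul]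
    rw [Finset.sum_comm' (s := Finset.univ) (t := fun _ => Finset.univ) (s' := fun _ => Finset.univ)
      (t' := Finset.univ) (by simp)]
    rw [Finset.sum_comm]
    rw [Finset.sum_comm (s := (Finset.univ : Finset (Equiv.Perm (Fin N))))]
    exact Finset.sum_congr rfl fun i _ => Finset.sum_comm
  simp only [← Finset.mul_sum] at hs
  rw [sw, sw] at hs
  simp only [sum_dst, h0, mul_zero, sub_zero] at hs
  have h2 : ∑ σ, (∑ i, ∑ j, dst a i j σ ^ 2) * E σ ≤
      ∑ σ, 4 * N * ((2 * fst (fun i j => a i j ^ 2) σ + 2 * (∑ i, ∑ j, a i j ^ 2) / N) * E σ) := by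
    refine Finset.sum_le_sum fun σ _ => ?_
    rw [← mul_assoc]
    refine mul_le_mul_of_nonneg_right ((sum_dst_sq a σ).trans (le_of_eq ?_)) (Real.exp_pos _).le
    field_simp
    ring
  rw [← Finset.mul_sum] at h2
  have h3 := hs.trans (mul_le_mul_of_nonneg_left h2 (by linarith : 0 ≤ θ / 2))
  simp only [mul_assoc] at h3
  rw [← Finset.mul_sum, ← Finset.mul_sum] at h3
  have h4 : (2 * N : ℝ) * ∑ σ, fst a σ * E σ ≤ (2 * N) * (θ *
      ∑ σ, (2 * fst (fun i j => a i j ^ 2) σ + 2 * (∑ i, ∑ j, a i j ^ 2) / N) * E σ) := by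
    simp only [mul_assoc, mul_div_assoc] at h3 ⊢
    linarith
  exact le_of_mul_le_mul_left h4 (by positivity)

theorem det_ineq (hN : 0 < N) (a : Fin N → Fin N → ℝ) (h0 : ∑ i, ∑ j, a i j = 0) :
    ∑ σ, Real.exp (fst a σ) ≤ ∑ σ, Real.exp (6 * fst (fun i j => a i j ^ 2) σ) := by
  have hNR : (0 : ℝ) < N := by exact_mod_cast hN
  set K : ℝ := (Fintype.card (Equiv.Perm (Fin N)) : ℝ) with hK
  have hKf : K = Nat.factorial N := by rw [hK, Fintype.card_perm, Fintype.card_fin]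
  have hKpos : 0 < K := by rw [hK]; exact_mod_cast Fintype.card_pos
  set V := fst (fun i j => a i j ^ 2) with hV
  set Q := ∑ i, ∑ j, a i j ^ 2 with hQ
  have hf : ∑ σ, fst a σ = 0 := by
    have := sum_fst a
    rw [h0, mul_zero] at this
    exact (mul_eq_zero.1 this).resolve_left hNR.ne'
  have hQ0 : 0 ≤ Q := by positivity
  have hV0 : ∀ σ, 0 ≤ V σ := fun σ => Finset.sum_nonneg fun i _ => sq_nonneg _
  have hVs : ∑ σ, V σ = K * (Q / N) := by
    have := sum_fst (fun i j : Fin N => a i j ^ 2)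
    rw [← hKf] at this
    field_simp
    linarith
  have hmain := aux_abstract (fst a) (fun σ => 2 * V σ + 2 * Q / N) hf
    (fun σ => by have := hV0 σ; positivity) (fun θ h1 _ => key_ineq hN a h0 θ h1)
  rw [← hK] at hmain
  clear_value Q
  have he : ∑ σ, Real.exp (3 * (2 * V σ + 2 * Q / N))
      = Real.exp (6 * (Q / N)) * ∑ σ, Real.exp (6 * V σ) := by
    rw [Finset.mul_sum]
    apply Finset.sum_congr rfl
    intro σ _
    rw [← Real.exp_add]
    congr 1
    ring
  rw [he] at hmain
  have hJ := convexOn_exp.map_sum_le (t := Finset.univ) (w := fun _ : Equiv.Perm (Fin N) => 1 / K)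
    (p := fun σ => 6 * V σ) (fun s _ => by positivity) (by simp [hK, Finset.sum_const])
    (fun s _ => Set.mem_univ _)
  simp only [smul_eq_mul, ← Finset.mul_sum] at hJ
  rw [hVs] at hJ
  have e2 : 1 / K * (6 * (K * (Q / N))) = 6 * (Q / N) := by field_simp
  rw [e2] at hJ
  set B := ∑ σ, Real.exp (6 * V σ) with hB
  have hB0 : 0 < B := Finset.sum_pos (fun s _ => Real.exp_pos _) Finset.univ_nonempty
  have hsq : ((∑ σ, Real.exp (fst a σ)) / K) ^ 2 ≤ (B / K) ^ 2 := by
    refine hmain.trans ?_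
    rw [mul_div_assoc, sq]
    refine mul_le_mul_of_nonneg_right ?_ (by positivity)
    exact hJ.trans (le_of_eq (by ring))
  have := le_of_sq_le_sq hsq (by positivity)
  exact (div_le_div_iff_of_pos_right hKpos).1 this

theorem gauss_eq (c : Fin N → ℝ) :
    ∫⁻ g, ENNReal.ofReal (Real.exp (∑ i, c i * g i)) ∂(gaussPi N)
      = ENNReal.ofReal (Real.exp (∑ i, c i ^ 2 / 2)) := by
  have h : ∫ g, Real.exp (∑ i, c i * g i) ∂(gaussPi N) = Real.exp (∑ i, c i ^ 2 / 2) := by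
    simp only [Real.exp_sum, gaussPi]
    rw [integral_fintype_prod_eq_prod (fun i x => Real.exp (c i * x))]
    refine Finset.prod_congr rfl fun i _ => ?_
    have := congrFun (mgf_id_gaussianReal (μ := 0) (v := 1)) (c i)
    simpa [mgf] using this
  rw [← h, ofReal_integral_eq_lintegral_ofReal]
  · exact Integrable.of_integral_ne_zero (by rw [h]; exact (Real.exp_pos _).ne')
  · exact Filter.Eventually.of_forall fun g => (Real.exp_pos _).le

end perm

/-- Randomization for single-indexed permutation statistics: a possibly random
matrix `A` on a probability space `(Ω, μ)`, independent of the uniform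
permutation `π` and of the i.i.d. standard Gaussians `G₁, …, G_N`; the
independence is encoded by writing the expectation as the outer integral over
`Ω` of the average over permutations and the Gaussian product measure.
Expectations of the (nonnegative) exponentials are lower Lebesgue integrals. -/
theorem randomization_single_index
    {Ω : Type*} [MeasurableSpace Ω] (μ : Measure Ω) [IsProbabilityMeasure μ]
    (N : ℕ) (hN : 0 < N)
    (A : Ω → Fin N → Fin N → ℝ) (hA : Measurable A)
    (hcent : ∀ᵐ ω ∂μ, ∑ i : Fin N, ∑ j : Fin N, A ω i j = 0)
    (lam : ℝ) :
    (∫⁻ ω, (∑ σ : Equiv.Perm (Fin N),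
        ENNReal.ofReal (Real.exp (lam * ∑ i : Fin N, A ω i (σ i))))
        / (Nat.factorial N : ℝ≥0∞) ∂μ)
      ≤
    (∫⁻ ω, (∑ σ : Equiv.Perm (Fin N),
        ∫⁻ g, ENNReal.ofReal (Real.exp (2 * Real.sqrt 3 * lam *
            ∑ i : Fin N, A ω i (σ i) * g i)) ∂(gaussPi N))
        / (Nat.factorial N : ℝ≥0∞) ∂μ) := by
  refine lintegral_mono_ae ?_
  filter_upwards [hcent] with ω hω
  refine ENNReal.div_le_div_right ?_ _
  have h := det_ineq hN (fun i j => lam * A ω i j) (by simp only [← Finset.mul_sum, hω, mul_zero])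
  have hl : ∀ σ : Equiv.Perm (Fin N),
      lam * ∑ i : Fin N, A ω i (σ i) = fst (fun i j => lam * A ω i j) σ := by
    intro σ; simp only [fst, Finset.mul_sum]
  have hr : ∀ σ : Equiv.Perm (Fin N),
      ∫⁻ g, ENNReal.ofReal (Real.exp (2 * Real.sqrt 3 * lam *
            ∑ i : Fin N, A ω i (σ i) * g i)) ∂(gaussPi N)
      = ENNReal.ofReal (Real.exp (6 * fst (fun i j => (lam * A ω i j) ^ 2) σ)) := by
    intro σ
    have e := gauss_eq (fun i => 2 * Real.sqrt 3 * lam * A ω i (σ i))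
    have e1 : ∑ i, (2 * Real.sqrt 3 * lam * A ω i (σ i)) ^ 2 / 2
        = 6 * fst (fun i j => (lam * A ω i j) ^ 2) σ := by
      simp only [fst, Finset.mul_sum]
      refine Finset.sum_congr rfl fun i _ => ?_
      have h3 : Real.sqrt 3 ^ 2 = 3 := Real.sq_sqrt (by norm_num)
      simp only [mul_pow, h3]
      ring
    rw [e1] at e
    rw [← e]
    simp only [Finset.mul_sum, mul_assoc]
  simp only [hl, hr]
  rw [← ENNReal.ofReal_sum_of_nonneg (fun _ _ => (Real.exp_pos _).le),
    ← ENNReal.ofReal_sum_of_nonneg (fun _ _ => (Real.exp_pos _).le)]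
  exact ENNReal.ofReal_le_ofReal h
end
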